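/- arXiv:1603.06639 — 3 statements merged into one kernel-verified Lean document; each statement's English description precedes it below -/
import Mathlib

section
/- Let (R, m) be a regular local ring of dimension n containing a field, and let I be a proper ideal of R with ht_R(I) = d. Then H_m^{n−d}(H_I^d(R)) ≠ 0. -/
open CategoryTheory Opposite

noncomputable section

/-- Krull dimension of the support of a module. -/
def moduleSuppDim (R : Type) [CommRing R] (M : Type) [AddCommGroup M] [Module R M] :
    WithBot ℕ∞ :=
  Order.krullDim (Module.support R M)

/-- `M` has injective dimension at most `n` (as `R`-module), characterized by
vanishing of `Ext^i(N, M)` for all `i > n`. -/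
def injDimLE (R : Type) [CommRing R] (M : Type) [AddCommGroup M] [Module R M] (n : ℕ) : Prop :=
  ∀ (N : ModuleCat R) (i : ℕ), n < i →
    Subsingleton (((Ext R (ModuleCat R) i).obj (op N)).obj (ModuleCat.of R M))

/-- The injective dimension of `M` as an `R`-module, valued in `ℕ∞`. -/
def injDim (R : Type) [CommRing R] (M : Type) [AddCommGroup M] [Module R M] : ℕ∞ :=
  sInf {n : ℕ∞ | ∃ m : ℕ, (m : ℕ∞) = n ∧ injDimLE R M m}

/-- The height of an ideal: the infimum of the heights of primes containing it. -/
def idealHeight (R : Type) [CommRing R] (I : Ideal R) : ℕ∞ :=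
  sInf {h : ℕ∞ | ∃ p : PrimeSpectrum R, I ≤ p.asIdeal ∧ Order.height p = h}

/-- A regular local ring: a Noetherian local ring whose maximal ideal can be generated
by `dim R` elements. -/
def IsRegularLocal (R : Type) [CommRing R] [IsLocalRing R] : Prop :=
  IsNoetherianRing R ∧
    ∃ s : Finset R, Ideal.span (s : Set R) = IsLocalRing.maximalIdeal R ∧
      (s.card : WithBot ℕ∞) = ringKrullDim R

/-- A ring contains a field if some subring of it is a field. -/
def ContainsField (R : Type) [CommRing R] : Prop :=
  ∃ k : Subring R, IsField k

/-- The underlying module of the `i`-th local cohomology of `R` with support in `I`. -/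
abbrev LocalCohomologyMod (R : Type) [CommRing R] (I : Ideal R) (i : ℕ) : Type :=
  (localCohomology I i).obj (ModuleCat.of R R)

end

open IsLocalRing
open scoped Pointwise
open RingTheory.Sequence
lemma aux_step {R : Type*} [CommRing R] [IsLocalRing R] [IsNoetherianRing R] (n : ℕ)
    (hdim : ringKrullDim R = ((n + 1 : ℕ) : WithBot ℕ∞)) (S : Finset R) (hcard : S.card ≤ n + 1)
    (hS : Ideal.span (S : Set R) = maximalIdeal R) :
    ∃ z ∈ maximalIdeal R, (∀ p ∈ minimalPrimes R, z ∉ p) ∧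
      ringKrullDim (R ⧸ Ideal.span {z}) = (n : WithBot ℕ∞) ∧
      ∃ S' : Finset (R ⧸ Ideal.span {z}), S'.card ≤ n ∧
        Ideal.span (S' : Set (R ⧸ Ideal.span {z})) = (maximalIdeal R).map (Ideal.Quotient.mk _) := by
  classical
  -- the maximal ideal is not minimal
  have hmin : maximalIdeal R ∉ minimalPrimes R := by
    intro h
    have h0 : (maximalIdeal R).height = 0 := Ideal.height_eq_zero_iff.2 h
    have := IsLocalRing.maximalIdeal_height_eq_ringKrullDim (R := R)
    rw [h0, hdim] at this
    have h2 : (0:ℕ∞) = ((n+1 : ℕ) : ℕ∞) := by exact_mod_cast this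
    have : 0 = n + 1 := by exact_mod_cast h2
    omega
  have hsq : ¬ maximalIdeal R ≤ maximalIdeal R ^ 2 := by
    intro h
    have hb : maximalIdeal R = ⊥ := by
      apply Submodule.eq_bot_of_le_smul_of_le_jacobson_bot (maximalIdeal R) _ (IsNoetherian.noetherian _)
      · simpa [pow_two] using h
      · exact IsLocalRing.maximalIdeal_le_jacobson _
    apply hmin
    refine ⟨⟨inferInstance, bot_le⟩, fun q hq hle => by rw [hb]; exact bot_le⟩
  obtain ⟨z, hzm, hz⟩ : ∃ z ∈ maximalIdeal R, z ∉ maximalIdeal R ^ 2 ∧ ∀ p ∈ minimalPrimes R, z ∉ p := by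
    by_contra! hcon
    have hfin : (minimalPrimes R).Finite := minimalPrimes.finite_of_isNoetherianRing R
    have := (Ideal.subset_union_prime (s := insert (maximalIdeal R ^ 2) hfin.toFinset) (f := id)
      (maximalIdeal R ^ 2) (maximalIdeal R ^ 2) (I := maximalIdeal R) (by
        intro i hi h1 _
        simp only [Finset.mem_insert, Set.Finite.mem_toFinset, h1, false_or] at hi
        exact hi.1.1)).1 (by
        intro z hz
        by_cases h : z ∈ maximalIdeal R ^ 2
        · simp only [Set.mem_iUnion]
          exact ⟨_, by simp, h⟩
        · obtain ⟨p, hp, hzp⟩ := hcon z hz h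
          simp only [Set.mem_iUnion]
          exact ⟨p, by simp [hp], hzp⟩)
    obtain ⟨i, hi, hle⟩ := this
    simp only [Finset.mem_insert, Set.Finite.mem_toFinset] at hi
    rcases hi with rfl | hi
    · exact hsq hle
    · apply hmin
      have : maximalIdeal R = i := by
        have := hi.1.1
        exact le_antisymm hle (IsLocalRing.le_maximalIdeal this.ne_top)
      rwa [this]
  refine ⟨z, hzm, hz.2, ?_, ?_⟩
  · have h1 := Module.supportDim_quotSMulTop_succ_eq_of_notMem_minimalPrimes_of_mem_maximalIdeal
      (R := R) (M := R) (x := z) (by simpa [Module.annihilator_eq_bot.2] using hz.2) hzm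
    have h : Ideal.span {z} = z • (⊤ : Ideal R) := by simp [← Submodule.ideal_span_singleton_smul]
    rw [ringKrullDim_eq_of_ringEquiv (Ideal.quotientEquivAlgOfEq R h).toRingEquiv,
      ← Module.supportDim_quotient_eq_ringKrullDim]
    rw [Module.supportDim_self_eq_ringKrullDim, hdim] at h1
    have h2 : ((n + 1 : ℕ) : WithBot ℕ∞) = (n : WithBot ℕ∞) + 1 := by push_cast; rfl
    rw [h2] at h1
    exact ENat.WithBot.add_one_cancel.1 h1
  · rw [← hS, Submodule.mem_span_finset] at hzm
    obtain ⟨c, hc, hsum⟩ := hzm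
    have : ∃ s ∈ S, IsUnit (c s) := by
      by_contra! hcon
      apply hz.1
      rw [← hsum, pow_two]
      refine Ideal.sum_mem _ fun s hs => ?_
      exact Ideal.mul_mem_mul ((IsLocalRing.mem_maximalIdeal _).2 (hcon s hs))
        (hS ▸ Ideal.subset_span hs)
    obtain ⟨s, hs, hu⟩ := this
    refine ⟨(S.erase s).image (Ideal.Quotient.mk _), ?_, ?_⟩
    · refine Finset.card_image_le.trans ?_
      rw [Finset.card_erase_of_mem hs]; omega
    · rw [← hS, Ideal.map_span]
      apply le_antisymm
      · apply Ideal.span_mono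
        rw [Finset.coe_image]
        exact Set.image_mono (by simp)
      · rw [Ideal.span_le]
        rintro _ ⟨t, ht, rfl⟩
        by_cases hts : t = s
        · subst hts
          have h0 : Ideal.Quotient.mk (Ideal.span {z}) (∑ a ∈ S, c a • a) = 0 := by
            rw [hsum, Ideal.Quotient.eq_zero_iff_mem]; exact Ideal.mem_span_singleton_self z
          rw [map_sum, ← Finset.add_sum_erase _ _ hs] at h0
          simp only [smul_eq_mul, map_mul] at h0
          have h1 : Ideal.Quotient.mk (Ideal.span {z}) (c t) * Ideal.Quotient.mk (Ideal.span {z}) t ∈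
            Ideal.span (((S.erase t).image (Ideal.Quotient.mk (Ideal.span {z})) : Finset _) : Set (R ⧸ Ideal.span {z})) := by
            rw [eq_neg_of_add_eq_zero_left h0]
            refine neg_mem (Ideal.sum_mem _ fun i hi => Ideal.mul_mem_left _ _ (Ideal.subset_span ?_))
            rw [Finset.coe_image]
            exact ⟨i, hi, rfl⟩
          exact (Ideal.unit_mul_mem_iff_mem _ (hu.map _)).1 h1
        · apply Ideal.subset_span
          rw [Finset.coe_image]
          exact ⟨t, by simp [hts]; exact ht, rfl⟩

lemma aux_quot_local {R : Type*} [CommRing R] [IsLocalRing R] (z : R) (hz : z ∈ maximalIdeal R) :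
    IsLocalRing (R ⧸ Ideal.span {z}) := by
  have : Nontrivial (R ⧸ Ideal.span {z}) := Ideal.Quotient.nontrivial_iff.2 (by
    rw [Ne, Ideal.span_singleton_eq_top]; exact hz)
  exact IsLocalRing.of_surjective' _ Ideal.Quotient.mk_surjective

lemma aux_quot_max {R : Type*} [CommRing R] [IsLocalRing R] (z : R)
    [IsLocalRing (R ⧸ Ideal.span {z})] :
    (maximalIdeal R).map (Ideal.Quotient.mk (Ideal.span {z})) = maximalIdeal _ :=
  IsLocalRing.map_maximalIdeal_of_surjective _ Ideal.Quotient.mk_surjective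

lemma aux_domain (n : ℕ) : ∀ {R : Type} [CommRing R] [IsLocalRing R] [IsNoetherianRing R]
    (_ : ringKrullDim R = (n : WithBot ℕ∞)) (S : Finset R) (_ : S.card ≤ n)
    (_ : Ideal.span (S : Set R) = maximalIdeal R), IsDomain R := by
  induction n with
  | zero =>
    intro R _ _ _ hdim S hc hS
    have : S = ∅ := by simpa using hc
    subst this
    simp only [Finset.coe_empty, Ideal.span_empty] at hS
    have : IsField R := IsLocalRing.isField_iff_maximalIdeal_eq.2 hS.symm
    exact this.isDomain
  | succ n ih =>
    intro R _ _ _ hdim S hc hS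
    obtain ⟨z, hzm, hz, hd, S', hS'c, hS'⟩ := aux_step n hdim S hc hS
    have := aux_quot_local z hzm
    rw [aux_quot_max z] at hS'
    have hdom := ih hd S' hS'c hS'
    have hpr : (Ideal.span {z}).IsPrime := (Ideal.Quotient.isDomain_iff_prime _).1 hdom
    obtain ⟨p, hp, hple⟩ := Ideal.exists_minimalPrimes_le (I := ⊥) (J := Ideal.span {z}) bot_le
    have hpp : p.IsPrime := hp.1.1
    have hpb : p = ⊥ := by
      apply Submodule.eq_bot_of_le_smul_of_le_jacobson_bot (maximalIdeal R) _ (IsNoetherian.noetherian _)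
      · intro q hq
        obtain ⟨r, rfl⟩ := Ideal.mem_span_singleton'.1 (hple hq)
        have hr : r ∈ p := (hpp.mem_or_mem hq).resolve_right (hz p hp)
        rw [mul_comm]
        exact Ideal.mul_mem_mul hzm hr
      · exact IsLocalRing.maximalIdeal_le_jacobson _
    rw [hpb] at hpp
    exact IsDomain.of_bot_isPrime R


lemma aux_regseq (n : ℕ) : ∀ {R : Type} [CommRing R] [IsLocalRing R] [IsNoetherianRing R]
    (_ : ringKrullDim R = (n : WithBot ℕ∞)) (S : Finset R) (_ : S.card ≤ n)
    (_ : Ideal.span (S : Set R) = maximalIdeal R),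
    ∃ rs : List R, rs.length = n ∧ (∀ r ∈ rs, r ∈ maximalIdeal R) ∧ IsRegular R rs := by
  induction n with
  | zero =>
    intro R _ _ _ hdim S hc hS
    exact ⟨[], rfl, by simp, IsRegular.nil R R⟩
  | succ n ih =>
    intro R _ _ _ hdim S hc hS
    have hdom := aux_domain _ hdim S hc hS
    obtain ⟨z, hzm, hz, hd, S', hS'c, hS'⟩ := aux_step n hdim S hc hS
    have := aux_quot_local z hzm
    rw [aux_quot_max z] at hS'
    obtain ⟨rs, hlen, hmem, hreg⟩ := ih hd S' hS'c hS'
    have hz0 : z ≠ 0 := by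
      rintro rfl
      exact hz ⊥ (by rw [IsDomain.minimalPrimes_eq_singleton_bot]; rfl) rfl
    obtain ⟨rs', rfl⟩ := (List.map_surjective_iff.2 (Ideal.Quotient.mk_surjective (I := Ideal.span {z}))) rs
    have hm : ∀ r ∈ z :: rs', r ∈ maximalIdeal R := by
      intro r hr
      rcases List.mem_cons.1 hr with rfl | hr
      · exact hzm
      · have := hmem _ (List.mem_map_of_mem hr)
        rw [mem_maximalIdeal, mem_nonunits_iff] at this ⊢
        exact fun h => this (h.map _)
    refine ⟨z :: rs', by simpa using hlen, hm, ?_⟩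
    rw [IsLocalRing.isRegular_iff_isWeaklyRegular_of_subset_maximalIdeal hm]
    rw [isWeaklyRegular_cons_iff]
    refine ⟨IsSMulRegular.of_ne_zero hz0, ?_⟩
    have h1 := hreg.toIsWeaklyRegular
    have h2 : IsWeaklyRegular (R ⧸ Ideal.span {z}) rs' :=
      (isWeaklyRegular_map_algebraMap_iff (R ⧸ Ideal.span {z}) (R ⧸ Ideal.span {z}) rs').1 h1
    have h : Ideal.span {z} = z • (⊤ : Ideal R) := by simp [← Submodule.ideal_span_singleton_smul]
    exact ((Submodule.quotEquivOfEq _ _ h).isWeaklyRegular_congr rs').1 h2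

/-- Depth at least `k`, expressed with Ext. -/
def DepGE {R : Type} [CommRing R] [IsLocalRing R] (M : Type) [AddCommGroup M] [Module R M] (k : ℕ) : Prop :=
  ∀ i < k, Subsingleton (Abelian.Ext (ModuleCat.of R (R ⧸ maximalIdeal R)) (ModuleCat.of R M) i)

section
set_option linter.unusedSectionVars false
variable {R : Type} [CommRing R] [IsLocalRing R] [IsNoetherianRing R]

lemma aux_supp (s : ℕ) (hs : s ≠ 0) : Module.support R (R ⧸ maximalIdeal R) =
    PrimeSpectrum.zeroLocus ((maximalIdeal R ^ s : Ideal R) : Set R) := by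
  rw [Module.support_eq_zeroLocus, Ideal.annihilator_quotient, PrimeSpectrum.zeroLocus_pow _ hs]

lemma aux_smul_lt (M : Type) [AddCommGroup M] [Module R M] [Module.Finite R M] [Nontrivial M]
    (s : ℕ) (hs : s ≠ 0) : (maximalIdeal R ^ s) • (⊤ : Submodule R M) < ⊤ := by
  refine (Submodule.top_ne_ideal_smul_of_le_jacobson_annihilator ?_).symm.lt_top
  exact (Ideal.pow_le_self hs).trans (maximalIdeal_le_jacobson _)

lemma DepGE.exists_regseq {M : Type} [AddCommGroup M] [Module R M] [Module.Finite R M] [Nontrivial M]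
    {k : ℕ} (h : DepGE (R := R) M k) (s : ℕ) (hs : s ≠ 0) :
    ∃ rs : List R, rs.length = k ∧ (∀ r ∈ rs, r ∈ maximalIdeal R ^ s) ∧ IsRegular M rs :=
  ModuleCat.exists_isRegular_of_exists_subsingleton_ext (maximalIdeal R ^ s) k (ModuleCat.of R M)
    (aux_smul_lt M s hs) (ModuleCat.of R (R ⧸ maximalIdeal R)) (aux_supp s hs) h

lemma depGE_of_regseq {M : Type} [AddCommGroup M] [Module R M] [Module.Finite R M] [Nontrivial M]
    {rs : List R} (hm : ∀ r ∈ rs, r ∈ maximalIdeal R) (h : IsRegular M rs) :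
    DepGE (R := R) M rs.length :=
  ModuleCat.subsingleton_ext_of_exists_isRegular (maximalIdeal R)
    (ModuleCat.of R (R ⧸ maximalIdeal R)) (by simpa using (aux_supp (R := R) 1 one_ne_zero).le)
    (ModuleCat.of R M) (by simpa using aux_smul_lt (R := R) M 1 one_ne_zero) rs hm h

lemma DepGE.quot {M : Type} [AddCommGroup M] [Module R M]
    {k : ℕ} (h : DepGE (R := R) M (k + 1)) (x : R) (hx : IsSMulRegular M x) :
    DepGE (R := R) (QuotSMulTop x M) k := by
  intro i hi
  have zero1 := AddCommGrpCat.isZero_of_iff_subsingleton.mpr (h i (by omega))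
  have zero2 := AddCommGrpCat.isZero_of_iff_subsingleton.mpr (h (i + 1) (by omega))
  have hx' : IsSMulRegular (ModuleCat.of R M) x := hx
  exact AddCommGrpCat.subsingleton_of_isZero <| ShortComplex.Exact.isZero_of_both_zeros
        ((Abelian.Ext.covariant_sequence_exact₃' _ hx'.smulShortComplex_shortExact) i (i + 1) rfl)
        (zero1.eq_zero_of_src _) (zero2.eq_zero_of_tgt _)

lemma DepGE.exists_regular {M : Type} [AddCommGroup M] [Module R M] [Module.Finite R M]
    {k : ℕ} (h : DepGE (R := R) M (k + 1)) :
    ∃ x ∈ maximalIdeal R, IsSMulRegular M x := by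
  have h0 := h 0 (by omega)
  have : Subsingleton (ModuleCat.of R (R ⧸ maximalIdeal R) ⟶ ModuleCat.of R M) :=
    Abelian.Ext.addEquiv₀.subsingleton_congr.mp h0
  have : Subsingleton ((R ⧸ maximalIdeal R) →ₗ[R] M) :=
    (ModuleCat.homAddEquiv (M := ModuleCat.of R (R ⧸ maximalIdeal R)) (N := ModuleCat.of R M)).symm.subsingleton
  obtain ⟨x, mem_ann, hx⟩ := IsSMulRegular.subsingleton_linearMap_iff.mp this
  rw [Ideal.annihilator_quotient] at mem_ann
  exact ⟨x, mem_ann, hx⟩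

/-- Lemma K. -/
lemma DepGE.le_coheight (k : ℕ) : ∀ {M : Type} [AddCommGroup M] [Module R M] [Module.Finite R M]
    (_ : DepGE (R := R) M k) (P : PrimeSpectrum R) (_ : P.asIdeal ∈ associatedPrimes R M),
    (k : ℕ∞) ≤ Order.coheight P := by
  induction k with
  | zero => intros; simp
  | succ k ih =>
    intro M _ _ _ hM P hP
    obtain ⟨z, hzm, hz⟩ := hM.exists_regular
    have hP' := hP
    rw [AssociatedPrimes.mem_iff, isAssociatedPrime_iff] at hP
    obtain ⟨hp, x, hx⟩ := hP
    have hx0 : x ≠ 0 := by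
      rintro rfl
      apply hp.ne_top
      rw [hx]; simp
    have hann : ∀ p ∈ P.asIdeal, p • x = 0 := by
      intro p hp; rw [hx] at hp; simpa [Submodule.mem_colon_singleton] using hp
    have hzP : z ∉ P.asIdeal := fun h => hx0 (hz (by simpa using hann z h))
    let N : Submodule R M := Submodule.torsionBySet R M P.asIdeal
    obtain ⟨v, hvN, hv⟩ : ∃ v ∈ N, v ∉ z • (⊤ : Submodule R M) := by
      by_contra! hcon
      have hN : N = ⊥ := by
        apply Submodule.eq_bot_of_le_smul_of_le_jacobson_bot (maximalIdeal R) _ (IsNoetherian.noetherian _)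
        · intro v hv
          obtain ⟨w, -, rfl⟩ := (Submodule.mem_smul_pointwise_iff_exists _ _ _).1 (hcon v hv)
          refine Submodule.smul_mem_smul hzm ?_
          rw [Submodule.mem_torsionBySet_iff] at hv ⊢
          intro a
          apply hz
          have := hv a
          simp only [smul_zero]
          rw [smul_comm]; exact this
        · exact IsLocalRing.maximalIdeal_le_jacobson _
      apply hx0
      have : x ∈ N := by
        rw [Submodule.mem_torsionBySet_iff]
        exact fun a => hann a a.2
      rw [hN] at this
      simpa using this
    have hv0 : (Submodule.Quotient.mk v : QuotSMulTop z M) ≠ 0 := by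
      rwa [Ne, Submodule.Quotient.mk_eq_zero]
    obtain ⟨Q, hQ, hle⟩ := exists_le_isAssociatedPrime_of_isNoetherianRing R _ hv0
    have hQp := hQ.isPrime
    have h1 := ih (hM.quot z hz) ⟨Q, hQp⟩ hQ
    have hlt : P < ⟨Q, hQp⟩ := by
      rw [← PrimeSpectrum.asIdeal_lt_asIdeal]
      refine lt_of_le_of_ne ?_ ?_
      · intro p hp
        apply hle
        rw [Submodule.mem_colon_singleton, ← Submodule.Quotient.mk_smul]
        rw [Submodule.mem_torsionBySet_iff] at hvN
        have := hvN ⟨p, hp⟩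
        simp only at this
        rw [this]; simp
      · intro h
        apply hzP
        rw [h]
        apply hle
        rw [Submodule.mem_colon_singleton, ← Submodule.Quotient.mk_smul]
        simp only [Submodule.mem_bot]
        rw [Submodule.Quotient.mk_eq_zero]
        exact Submodule.smul_mem_pointwise_smul _ _ _ trivial
    refine le_trans ?_ (Order.coheight_add_one_le hlt)
    push_cast
    gcongr

lemma aux_C2 (I : Ideal R) (hI : I ≤ maximalIdeal R) (e : ℕ)
    (hIe : ∀ P : PrimeSpectrum R, I ≤ P.asIdeal → Order.coheight P ≤ e) (j : ℕ) :
    ∀ {M : Type} [AddCommGroup M] [Module R M] [Module.Finite R M] [Nontrivial M]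
    (_ : DepGE (R := R) M (j + e)),
    ∃ xs : List R, xs.length = j ∧ (∀ r ∈ xs, r ∈ I) ∧ IsWeaklyRegular M xs ∧
      DepGE (R := R) (M ⧸ (Ideal.ofList xs • ⊤ : Submodule R M)) e := by
  induction j with
  | zero =>
    intro M _ _ _ _ h
    refine ⟨[], rfl, by simp, IsWeaklyRegular.nil R M, ?_⟩
    have e1 : M ≃ₗ[R] (M ⧸ (Ideal.ofList ([] : List R) • ⊤ : Submodule R M)) :=
      (Submodule.quotEquivOfEqBot _ (by rw [Ideal.ofList_nil, Submodule.bot_smul])).symm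
    intro i hi
    have := h i (by omega)
    exact (((Abelian.extFunctorObj (ModuleCat.of R (R ⧸ maximalIdeal R)) i).mapIso
      e1.toModuleIso).addCommGroupIsoToAddEquiv.toEquiv.subsingleton_congr).1 this
  | succ j ih =>
    intro M _ _ _ _ h
    obtain ⟨x, hxI, hx⟩ : ∃ x ∈ I, IsSMulRegular M x := by
      by_contra! hcon
      have : ¬ Subsingleton ((R ⧸ I) →ₗ[R] M) := by
        rw [IsSMulRegular.subsingleton_linearMap_iff, Ideal.annihilator_quotient]
        push Not
        exact hcon
      rcases associatedPrimes.nonempty R M with ⟨Ia, hIa⟩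
      obtain ⟨P, hP, hle⟩ : ∃ p ∈ associatedPrimes R M, I ≤ p := by
        apply (Ideal.subset_union_prime_finite (associatedPrimes.finite R M) Ia Ia _).mp
        · rw [biUnion_associatedPrimes_eq_compl_regular R M]
          exact fun r hr ↦ hcon r hr
        · exact fun I hin _ _ ↦ IsAssociatedPrime.isPrime hin
      have h1 := DepGE.le_coheight _ h ⟨P, hP.isPrime⟩ hP
      have h2 := hIe ⟨P, hP.isPrime⟩ hle
      have h3 := h1.trans h2
      norm_cast at h3
      omega
    have hnt : Nontrivial (QuotSMulTop x M) := nontrivial_quotSMulTop_of_mem_maximalIdeal M (hI hxI)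
    obtain ⟨xs, h1, h2, h3, h4⟩ := ih (M := QuotSMulTop x M) (DepGE.quot (by convert h using 1; omega) x hx)
    refine ⟨x :: xs, by simp [h1], by simpa [hxI] using h2, IsWeaklyRegular.cons hx h3, ?_⟩
    intro i hi
    exact (((Abelian.extFunctorObj (ModuleCat.of R (R ⧸ maximalIdeal R)) i).mapIso
      (Submodule.quotOfListConsSMulTopEquivQuotSMulTopInner M x xs).symm.toModuleIso).addCommGroupIsoToAddEquiv.toEquiv.subsingleton_congr).1 (h4 i hi)
end


lemma aux_CA {R : Type} [CommRing R] [IsLocalRing R] [IsNoetherianRing R] (n : ℕ)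
    (hdim : ringKrullDim R = (n : WithBot ℕ∞)) (S : Finset R) (hc : S.card ≤ n)
    (hS : Ideal.span (S : Set R) = maximalIdeal R)
    (I : Ideal R) (hI : I ≠ ⊤) (d : ℕ)
    (h1 : ∀ P : PrimeSpectrum R, I ≤ P.asIdeal → (d : ℕ∞) ≤ Order.height P)
    (h2 : ∃ P : PrimeSpectrum R, I ≤ P.asIdeal ∧ Order.height P = d) :
    ∃ (xs ys : List R) (a : R) (k : ℕ), xs.length = d ∧ ys.length = n - d ∧ (∀ r ∈ xs, r ∈ I) ∧
      (∀ r ∈ ys, r ∈ maximalIdeal R) ∧ IsWeaklyRegular R (xs ++ ys) ∧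
      (∀ r ∈ I, r * a ∈ Ideal.ofList xs) ∧ a ∉ Ideal.ofList (xs ++ ys) ∧
      maximalIdeal R ^ k ≤ Ideal.ofList (xs ++ ys) := by
  have hIm : I ≤ maximalIdeal R := le_maximalIdeal hI
  have hhc : ∀ P : PrimeSpectrum R, Order.height P + Order.coheight P ≤ n := by
    intro P
    have := Order.krullDim_eq_iSup_height_add_coheight_of_nonempty (α := PrimeSpectrum R)
    have h3 : ringKrullDim R = Order.krullDim (PrimeSpectrum R) := rfl
    rw [← h3, hdim] at this
    have h4 : (n : ℕ∞) = ⨆ (a : PrimeSpectrum R), Order.height a + Order.coheight a := by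
      exact_mod_cast this
    rw [h4]
    exact le_iSup (fun a : PrimeSpectrum R => Order.height a + Order.coheight a) P
  obtain ⟨P, hIP, hPd⟩ := h2
  have hdn : d ≤ n := by
    have := (le_self_add).trans (hhc P)
    rw [hPd] at this
    exact_mod_cast this
  obtain ⟨e, rfl⟩ := Nat.exists_eq_add_of_le hdn
  obtain ⟨rs, hlen, hmem, hreg⟩ := aux_regseq _ hdim S hc hS
  have hdep : DepGE (R := R) R (d + e) := hlen ▸ depGE_of_regseq hmem hreg
  have hIe : ∀ P : PrimeSpectrum R, I ≤ P.asIdeal → Order.coheight P ≤ e := by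
    intro P hP
    have h3 : (d : ℕ∞) + Order.coheight P ≤ d + e := by
      refine le_trans (by gcongr; exact h1 P hP) (hhc P)
    exact (ENat.add_le_add_iff_left (ENat.natCast_ne_top d)).1 h3
  obtain ⟨xs, hxl, hxI, hxr, hxd⟩ := aux_C2 I hIm e hIe d hdep
  have hofx : (Ideal.ofList xs • ⊤ : Submodule R R) = Ideal.ofList xs := by simp
  have hxsI : Ideal.ofList xs ≤ I := Ideal.span_le.2 hxI
  have hnt : Nontrivial (R ⧸ (Ideal.ofList xs • ⊤ : Submodule R R)) := by
    apply Submodule.Quotient.nontrivial_iff.mpr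
    rw [hofx]
    exact fun h => hI (top_le_iff.1 (h ▸ hxsI))
  obtain ⟨a, haI, hax⟩ : ∃ a, (∀ r ∈ I, r * a ∈ Ideal.ofList xs) ∧ a ∉ Ideal.ofList xs := by
    by_contra! hcon
    have : Subsingleton ((R ⧸ I) →ₗ[R] (R ⧸ (Ideal.ofList xs • ⊤ : Submodule R R))) := by
      refine ⟨fun f g => ?_⟩
      suffices ∀ f : (R ⧸ I) →ₗ[R] (R ⧸ (Ideal.ofList xs • ⊤ : Submodule R R)), f = 0 by
        rw [this f, this g]
      intro f
      apply Submodule.linearMap_qext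
      ext
      obtain ⟨a, ha⟩ := Submodule.Quotient.mk_surjective _ (f (Submodule.Quotient.mk 1))
      simp only [LinearMap.coe_comp, Function.comp_apply, Submodule.mkQ_apply, LinearMap.zero_apply]
      rw [← ha, Submodule.Quotient.mk_eq_zero, hofx]
      apply hcon
      intro r hr
      rw [← hofx, ← smul_eq_mul, ← Submodule.Quotient.mk_eq_zero, Submodule.Quotient.mk_smul, ha,
        ← map_smul, ← Submodule.Quotient.mk_smul, (Submodule.Quotient.mk_eq_zero _).2 (by simpa using hr),
        map_zero]
    rw [IsSMulRegular.subsingleton_linearMap_iff, Ideal.annihilator_quotient] at this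
    obtain ⟨x, hx, hxreg⟩ := this
    have hw : IsWeaklyRegular R (xs ++ [x]) :=
      (isWeaklyRegular_append_iff R xs [x]).2 ⟨hxr, (isWeaklyRegular_singleton_iff _ _).2 hxreg⟩
    have hr := hw.isRegular_of_isLocalization_of_mem (Localization.AtPrime P.asIdeal) P.asIdeal (by
      intro r hr
      simp only [List.mem_append, List.mem_singleton] at hr
      rcases hr with hr | rfl
      · exact hIP (hxI r hr)
      · exact hIP hx)
    have h3 := ringKrullDim_add_length_eq_ringKrullDim_of_isRegular _ hr
    have h4 := hr.quot_ofList_smul_nontrivial ⊤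
    have h5 : (0 : WithBot ℕ∞) ≤ ringKrullDim (Localization.AtPrime P.asIdeal ⧸ Ideal.ofList ((xs ++ [x]).map (algebraMap R (Localization.AtPrime P.asIdeal)))) := by
      have : Nontrivial (Localization.AtPrime P.asIdeal ⧸ Ideal.ofList ((xs ++ [x]).map (algebraMap R (Localization.AtPrime P.asIdeal)))) := by
        simpa using h4
      exact ringKrullDim_nonneg_of_nontrivial
    rw [IsLocalization.AtPrime.ringKrullDim_eq_height P.asIdeal (Localization.AtPrime P.asIdeal)] at h3
    rw [PrimeSpectrum.height_eq_orderHeight, hPd] at h3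
    have h6 : ((d + 1 : ℕ) : WithBot ℕ∞) ≤ ((d : ℕ) : WithBot ℕ∞) := by
      rw [show ((d : ℕ) : WithBot ℕ∞) = ((d : ℕ∞) : WithBot ℕ∞) from rfl, ← h3]
      simp only [List.map_append, List.length_append, List.length_map, hxl, List.map_cons, List.length_cons, List.map_nil, List.length_nil] at h5 ⊢
      exact le_add_of_nonneg_left h5
    have : d + 1 ≤ d := by exact_mod_cast h6
    omega
  -- Krull intersection
  obtain ⟨s, hs0, hs⟩ : ∃ s ≠ 0, a ∉ Ideal.ofList xs ⊔ maximalIdeal R ^ s := by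
    by_contra! hcon
    apply hax
    have hK := Ideal.iInf_pow_smul_eq_bot_of_isLocalRing (R := R) (M := R ⧸ Ideal.ofList xs) (maximalIdeal R) (Ideal.IsPrime.ne_top inferInstance)
    have : (Submodule.Quotient.mk a : R ⧸ Ideal.ofList xs) ∈ (⨅ i : ℕ, maximalIdeal R ^ i • ⊤ : Submodule R (R ⧸ Ideal.ofList xs)) := by
      rw [Submodule.mem_iInf]
      intro i
      have h3 : a ∈ Ideal.ofList xs ⊔ maximalIdeal R ^ i := by
        have h4 : Ideal.ofList xs ⊔ maximalIdeal R ^ (i + 1) ≤ Ideal.ofList xs ⊔ maximalIdeal R ^ i :=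
          sup_le_sup_left (Ideal.pow_le_pow_right (Nat.le_succ i)) _
        exact h4 (hcon (i + 1) (by omega))
      obtain ⟨b, hb, c, hc, rfl⟩ := Submodule.mem_sup.1 h3
      rw [Submodule.Quotient.mk_add, (Submodule.Quotient.mk_eq_zero _).2 hb, zero_add]
      have : (Submodule.Quotient.mk c : R ⧸ Ideal.ofList xs) = c • Submodule.Quotient.mk 1 := by
        rw [← Submodule.Quotient.mk_smul]; simp
      rw [this]
      exact Submodule.smul_mem_smul hc trivial
    rw [hK, Submodule.mem_bot, Submodule.Quotient.mk_eq_zero] at this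
    exact this
  obtain ⟨ys, hyl, hym, hyr⟩ := hxd.exists_regseq s hs0
  have hym' : ∀ r ∈ ys, r ∈ maximalIdeal R := fun r hr => Ideal.pow_le_self hs0 (hym r hr)
  have hw : IsWeaklyRegular R (xs ++ ys) := (isWeaklyRegular_append_iff R xs ys).2 ⟨hxr, hyr.toIsWeaklyRegular⟩
  have hxym : ∀ r ∈ xs ++ ys, r ∈ maximalIdeal R := by
    intro r hr
    rcases List.mem_append.1 hr with hr | hr
    · exact hIm (hxI r hr)
    · exact hym' r hr
  have hwr : IsRegular R (xs ++ ys) := (isRegular_iff_isWeaklyRegular_of_subset_maximalIdeal hxym).2 hw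
  have hd0 := ringKrullDim_add_length_eq_ringKrullDim_of_isRegular _ hwr
  rw [hdim, List.length_append, hxl, hyl] at hd0
  have hd1 : ringKrullDim (R ⧸ Ideal.ofList (xs ++ ys)) = 0 := by
    have h3 : ringKrullDim (R ⧸ Ideal.ofList (xs ++ ys)) + ((d + e : ℕ) : WithBot ℕ∞) = 0 + ((d + e : ℕ) : WithBot ℕ∞) := by
      rw [hd0, zero_add]
    exact ENat.WithBot.add_natCast_cancel.1 h3
  have hle : Ring.KrullDimLE 0 (R ⧸ Ideal.ofList (xs ++ ys)) := by
    rw [Ring.krullDimLE_iff, hd1]; rfl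
  have hart : IsArtinianRing (R ⧸ Ideal.ofList (xs ++ ys)) := IsNoetherianRing.isArtinianRing_of_krullDimLE_zero
  obtain ⟨k, hk⟩ := exists_maximalIdeal_pow_le_of_isArtinianRing_quotient (Ideal.ofList (xs ++ ys))
  refine ⟨xs, ys, a, k, hxl, by rw [hyl]; omega, hxI, hym', hw, haI, ?_, hk⟩
  intro h
  apply hs
  rw [Ideal.ofList_append] at h
  have h4 : Ideal.ofList xs ⊔ Ideal.ofList ys ≤ Ideal.ofList xs ⊔ maximalIdeal R ^ s :=
    sup_le_sup_left (Ideal.span_le.2 hym) _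
  exact h4 h


section
variable {R : Type} [CommRing R]

/-- The module `P_x / P`. -/
abbrev QLoc (P : Type) [AddCommGroup P] [Module R P] (x : R) : Type :=
  LocalizedModule (Submonoid.powers x) P ⧸
    LinearMap.range (LocalizedModule.mkLinearMap (Submonoid.powers x) P)

variable {P : Type} [AddCommGroup P] [Module R P]

/-- `p ↦ [p / x ^ k]`. -/
noncomputable def fr (x : R) (k : ℕ) : P →ₗ[R] QLoc P x :=
  (Submodule.mkQ _).comp ((LocalizedModule.divBy (⟨x ^ k, k, rfl⟩ : Submonoid.powers x)).comp
    (LocalizedModule.mkLinearMap (Submonoid.powers x) P))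

lemma fr_apply (x : R) (k : ℕ) (p : P) :
    fr x k p = Submodule.Quotient.mk (LocalizedModule.mk p (⟨x ^ k, k, rfl⟩ : Submonoid.powers x)) := by
  simp [fr, LocalizedModule.mkLinearMap_apply, LocalizedModule.divBy_apply]
  rw [LocalizedModule.liftOn_mk, one_mul]

lemma fr_surj (x : R) (q : QLoc P x) : ∃ k p, fr x k p = q := by
  obtain ⟨q, rfl⟩ := Submodule.Quotient.mk_surjective _ q
  induction q with
  | h m s =>
    obtain ⟨_, k, rfl⟩ := s
    exact ⟨k, m, fr_apply x k m⟩

lemma fr_pow (x : R) (k l : ℕ) (p : P) : fr x (k + l) (x ^ l • p) = fr x k p := by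
  rw [fr_apply, fr_apply]
  congr 1
  rw [LocalizedModule.mk_eq]
  refine ⟨1, ?_⟩
  simp only [one_smul, Submonoid.smul_def, smul_smul, pow_add]

lemma smul_fr_succ (x : R) (k : ℕ) (p : P) : x • fr x (k + 1) p = fr x k p := by
  rw [← fr_pow x k 1 p, pow_one, map_smul]

lemma fr_zero (x : R) (p : P) : fr x 0 p = 0 := by
  rw [fr_apply, Submodule.Quotient.mk_eq_zero]
  refine ⟨p, ?_⟩
  simp [LocalizedModule.mkLinearMap, LocalizedModule.mk_eq]

lemma fr_eq_zero (x : R) (hx : IsSMulRegular P x) (k : ℕ) (p : P) (h : fr x k p = 0) :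
    ∃ p', x ^ k • p' = p := by
  rw [fr_apply, Submodule.Quotient.mk_eq_zero] at h
  obtain ⟨p', hp'⟩ := h
  rw [LocalizedModule.mkLinearMap_apply, LocalizedModule.mk_eq] at hp'
  obtain ⟨⟨_, u, rfl⟩, hu⟩ := hp'
  refine ⟨p', ?_⟩
  apply hx.pow u
  simpa [Submonoid.smul_def] using hu

lemma mem_smul_top_QLoc (x : R) (J : Ideal R) (q : QLoc P x) (hq : q ∈ (J • ⊤ : Submodule R (QLoc P x))) (k : ℕ) :
    ∃ l p, p ∈ (J • ⊤ : Submodule R P) ∧ fr x (k + l) p = q := by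
  induction hq using Submodule.smul_induction_on' with
  | smul r hr q _ =>
    obtain ⟨l, p, rfl⟩ := fr_surj x q
    refine ⟨l, x ^ k • r • p, Submodule.smul_mem _ _ (Submodule.smul_mem_smul hr trivial), ?_⟩
    rw [add_comm k l, fr_pow, map_smul]
  | add q1 _ q2 _ h1 h2 =>
    obtain ⟨l1, p1, hp1, rfl⟩ := h1
    obtain ⟨l2, p2, hp2, rfl⟩ := h2
    refine ⟨l1 + l2, x ^ l2 • p1 + x ^ l1 • p2, add_mem (Submodule.smul_mem _ _ hp1) (Submodule.smul_mem _ _ hp2), ?_⟩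
    rw [map_add, ← add_assoc, fr_pow, add_assoc, add_comm l1 l2, ← add_assoc, fr_pow]

lemma two_of_three (rs : List R) : ∀ {A B C : Type} [AddCommGroup A] [Module R A] [AddCommGroup B] [Module R B]
    [AddCommGroup C] [Module R C] (f : A →ₗ[R] B) (g : B →ₗ[R] C) (_ : Function.Injective f)
    (_ : Function.Exact f g) (_ : Function.Surjective g) (_ : IsWeaklyRegular A rs) (_ : IsWeaklyRegular C rs),
    IsWeaklyRegular B rs := by
  induction rs with
  | nil => intros; exact IsWeaklyRegular.nil _ _
  | cons r rs ih =>
    intro A B C _ _ _ _ _ _ f g hf hfg hg hA hC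
    rw [isWeaklyRegular_cons_iff] at hA hC ⊢
    refine ⟨?_, ih (QuotSMulTop.map r f) (QuotSMulTop.map r g) ?_ (QuotSMulTop.map_exact r hfg hg)
      (QuotSMulTop.map_surjective r hg) hA.2 hC.2⟩
    · rw [isSMulRegular_iff_right_eq_zero_of_smul]
      intro b hb
      have h1 : g b = 0 := by
        apply hC.1
        simp only
        rw [← map_smul, hb]; simp
      obtain ⟨a, rfl⟩ := (hfg b).1 h1
      have : a = 0 := by
        apply hA.1
        apply hf
        simp [hb]
      rw [this, map_zero]
    · have h0 : Function.Exact (0 : PUnit.{1} →ₗ[R] A) f := by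
        intro a
        constructor
        · intro h
          exact ⟨0, by rw [LinearMap.zero_apply]; exact hf (by rw [h, map_zero])⟩
        · rintro ⟨y, rfl⟩; simp
      have := QuotSMulTop.map_first_exact_on_four_term_exact_of_isSMulRegular_last h0 hfg hC.1
      rw [injective_iff_map_eq_zero]
      intro a ha
      obtain ⟨y, rfl⟩ := (this a).1 ha
      simp [Subsingleton.elim y 0]

/-- multiplication by `x ^ k` from `P/x^l` to `P/x^(l+k)`. -/
noncomputable def mulQ (P : Type) [AddCommGroup P] [Module R P] (x : R) (k l : ℕ) :
    QuotSMulTop (x ^ l) P →ₗ[R] QuotSMulTop (x ^ (l + k)) P :=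
  Submodule.mapQ _ _ (LinearMap.lsmul R P (x ^ k)) (by
    intro p hp
    obtain ⟨w, -, rfl⟩ := (Submodule.mem_smul_pointwise_iff_exists _ _ _).1 hp
    simp only [Submodule.mem_comap, LinearMap.lsmul_apply, smul_smul, ← pow_add]
    rw [add_comm]
    exact Submodule.smul_mem_pointwise_smul _ _ _ trivial)

/-- the projection. -/
noncomputable def prQ (P : Type) [AddCommGroup P] [Module R P] (x : R) (k l : ℕ) :
    QuotSMulTop (x ^ (l + k)) P →ₗ[R] QuotSMulTop (x ^ k) P :=
  Submodule.mapQ _ _ LinearMap.id (by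
    intro p hp
    obtain ⟨w, -, rfl⟩ := (Submodule.mem_smul_pointwise_iff_exists _ _ _).1 hp
    simp only [Submodule.mem_comap, LinearMap.id_apply]
    rw [pow_add, mul_comm, mul_smul]
    exact Submodule.smul_mem_pointwise_smul _ _ _ trivial)

lemma mem_pt (x : R) (p : P) : p ∈ x • (⊤ : Submodule R P) ↔ ∃ w, x • w = p := by
  rw [Submodule.mem_smul_pointwise_iff_exists]; simp

lemma mulQ_inj (x : R) (hx : IsSMulRegular P x) (k l : ℕ) : Function.Injective (mulQ P x k l) := by
  rw [injective_iff_map_eq_zero]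
  intro a ha
  obtain ⟨a, rfl⟩ := Submodule.Quotient.mk_surjective _ a
  simp only [mulQ, Submodule.mapQ_apply, LinearMap.lsmul_apply, Submodule.Quotient.mk_eq_zero, mem_pt] at ha ⊢
  obtain ⟨w, hw⟩ := ha
  refine ⟨w, hx.pow k ?_⟩
  simp only
  rw [← hw, smul_smul, ← pow_add, add_comm]

lemma mulQ_exact (x : R) (k l : ℕ) : Function.Exact (mulQ P x k l) (prQ P x k l) := by
  intro b
  constructor
  · intro h
    obtain ⟨b, rfl⟩ := Submodule.Quotient.mk_surjective _ b
    simp only [prQ, Submodule.mapQ_apply, LinearMap.id_apply, Submodule.Quotient.mk_eq_zero, mem_pt] at h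
    obtain ⟨w, rfl⟩ := h
    exact ⟨Submodule.Quotient.mk w, by simp [mulQ]⟩
  · rintro ⟨b, rfl⟩
    obtain ⟨b, rfl⟩ := Submodule.Quotient.mk_surjective _ b
    simp only [mulQ, prQ, Submodule.mapQ_apply, LinearMap.id_apply, LinearMap.lsmul_apply, Submodule.Quotient.mk_eq_zero, mem_pt]
    exact ⟨_, rfl⟩

lemma prQ_surj (x : R) (k l : ℕ) : Function.Surjective (prQ P x k l) := by
  intro b
  obtain ⟨b, rfl⟩ := Submodule.Quotient.mk_surjective _ b
  exact ⟨Submodule.Quotient.mk b, by simp [prQ]⟩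

lemma weak_pow (x : R) (hx : IsSMulRegular P x) (rs : List R) (h : IsWeaklyRegular (QuotSMulTop x P) rs) (l : ℕ) :
    IsWeaklyRegular (QuotSMulTop (x ^ l) P) rs := by
  induction l with
  | zero =>
    have : Subsingleton (QuotSMulTop (x ^ 0) P) := by
      rw [Submodule.Quotient.subsingleton_iff, pow_zero, one_smul]
    refine ⟨fun i hi => ?_⟩
    intro a b _
    obtain ⟨a, rfl⟩ := Submodule.Quotient.mk_surjective _ a
    obtain ⟨b, rfl⟩ := Submodule.Quotient.mk_surjective _ b
    rw [Subsingleton.elim a b]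
  | succ l ih =>
    have h' : IsWeaklyRegular (QuotSMulTop (x ^ 1) P) rs := by rwa [pow_one]
    exact two_of_three rs (mulQ P x 1 l) (prQ P x 1 l) (mulQ_inj x hx _ _) (mulQ_exact x _ _) (prQ_surj x _ _) ih h'

/-- preimage description of `J • (P/x)`. -/
lemma mk_mem_smul_top (x : R) (J : Ideal R) (p : P) :
    (Submodule.Quotient.mk p : QuotSMulTop x P) ∈ (J • ⊤ : Submodule R (QuotSMulTop x P)) ↔
      ∃ p' ∈ (J • ⊤ : Submodule R P), ∃ w, p = p' + x • w := by
  have h1 : (J • ⊤ : Submodule R (QuotSMulTop x P)) = (J • ⊤ : Submodule R P).map (Submodule.mkQ _) := by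
    rw [Submodule.map_smul'', Submodule.map_top, Submodule.range_mkQ]
  rw [h1]
  constructor
  · rintro ⟨p', hp', h⟩
    have : p - p' ∈ x • (⊤ : Submodule R P) := by
      rw [← Submodule.Quotient.mk_eq_zero, Submodule.Quotient.mk_sub, sub_eq_zero]
      exact h.symm
    obtain ⟨w, hw⟩ := (mem_pt _ _).1 this
    exact ⟨p', hp', w, by rw [hw]; abel⟩
  · rintro ⟨p', hp', w, rfl⟩
    refine ⟨p', hp', ?_⟩
    rw [Submodule.mkQ_apply, Submodule.Quotient.mk_add, (Submodule.Quotient.mk_eq_zero _).2 ((mem_pt _ _).2 ⟨w, rfl⟩), add_zero]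

lemma weak_QLoc (x : R) (rs : List R) (h : IsWeaklyRegular P (x :: rs)) :
    IsWeaklyRegular (QLoc P x) rs := by
  rw [isWeaklyRegular_cons_iff] at h
  obtain ⟨hx, h⟩ := h
  refine ⟨fun i hi => ?_⟩
  rw [isSMulRegular_iff_right_eq_zero_of_smul]
  intro q hq
  obtain ⟨q, rfl⟩ := Submodule.Quotient.mk_surjective _ q
  obtain ⟨k, p, rfl⟩ := fr_surj x q
  rw [← Submodule.Quotient.mk_smul, Submodule.Quotient.mk_eq_zero] at hq
  rw [Submodule.Quotient.mk_eq_zero]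
  obtain ⟨l, p', hp', hl⟩ := mem_smul_top_QLoc x _ _ hq k
  have h0 : fr x (k + l) (rs[i] • x ^ l • p - p') = 0 := by
    rw [map_sub, map_smul, fr_pow, hl, sub_self]
  obtain ⟨w, hw⟩ := fr_eq_zero x hx _ _ h0
  have h1 := (weak_pow x hx rs h (k + l)).regular_mod_prev i hi
  rw [isSMulRegular_iff_right_eq_zero_of_smul] at h1
  have h2 := h1 (Submodule.Quotient.mk (Submodule.Quotient.mk (x ^ l • p))) (by
    rw [← Submodule.Quotient.mk_smul, Submodule.Quotient.mk_eq_zero, ← Submodule.Quotient.mk_smul, mk_mem_smul_top]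
    exact ⟨p', hp', w, by rw [hw]; abel⟩)
  rw [Submodule.Quotient.mk_eq_zero, mk_mem_smul_top] at h2
  obtain ⟨p2, hp2, w2, h3⟩ := h2
  rw [← fr_pow x k l p, h3, map_add]
  have h4 : fr x (k + l) (x ^ (k + l) • w2) = 0 := by
    have := fr_pow x 0 (k + l) w2
    rw [zero_add] at this
    rw [this, fr_zero]
  rw [h4, add_zero]
  exact Submodule.smul_top_le_comap_smul_top _ _ hp2

lemma purity (x : R) (rs : List R) (h : IsWeaklyRegular P (x :: rs)) (p : P)
    (hp : fr x 1 p ∈ (Ideal.ofList rs • ⊤ : Submodule R (QLoc P x))) :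
    p ∈ (Ideal.ofList (x :: rs) • ⊤ : Submodule R P) := by
  rw [isWeaklyRegular_cons_iff] at h
  obtain ⟨hx, h⟩ := h
  obtain ⟨l, p', hp', hl⟩ := mem_smul_top_QLoc x _ _ hp 1
  have h0 : fr x (1 + l) (x ^ l • p - p') = 0 := by rw [map_sub, fr_pow, hl, sub_self]
  obtain ⟨w, hw⟩ := fr_eq_zero x hx _ _ h0
  have h0 : Function.Exact (0 : PUnit.{1} →ₗ[R] QuotSMulTop (x ^ 1) P) (mulQ P x l 1) := by
    intro a
    constructor
    · intro h
      exact ⟨0, by rw [LinearMap.zero_apply]; exact mulQ_inj x hx _ _ (by rw [h, map_zero])⟩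
    · rintro ⟨y, rfl⟩; simp
  have h1 := map_first_exact_on_four_term_right_exact_of_isSMulRegular_last h0 (mulQ_exact x l 1) (prQ_surj x l 1)
    (weak_pow x hx rs h l)
  have h2 := (h1 (Submodule.Quotient.mk (Submodule.Quotient.mk p))).1 (by
    rw [Submodule.mapQ_apply, Submodule.Quotient.mk_eq_zero, mulQ, Submodule.mapQ_apply, mk_mem_smul_top]
    exact ⟨p', hp', w, by rw [hw]; simp⟩)
  obtain ⟨y, hy⟩ := h2
  have h3 : (Submodule.Quotient.mk (Submodule.Quotient.mk p : QuotSMulTop (x ^ 1) P) :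
      QuotSMulTop (x ^ 1) P ⧸ (Ideal.ofList rs • ⊤ : Submodule R (QuotSMulTop (x ^ 1) P))) = 0 := by
    rw [← hy]
    obtain ⟨y, rfl⟩ := Submodule.Quotient.mk_surjective _ y
    simp
  rw [Submodule.Quotient.mk_eq_zero, mk_mem_smul_top] at h3
  obtain ⟨p2, hp2, w2, rfl⟩ := h3
  rw [Ideal.ofList_cons_smul, add_comm, pow_one]
  exact Submodule.add_mem_sup (Submodule.smul_mem_pointwise_smul _ _ _ trivial) hp2

end


section
variable {R : Type} [CommRing R]

/-- Iterated top local cohomology along a regular sequence. -/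
noncomputable def NN : List R → ModuleCat.{0} R → ModuleCat.{0} R
  | [], P => P
  | x :: rs, P => NN rs (ModuleCat.of R (QLoc P x))

/-- The map `p ↦ [p / (x_1 ⋯ x_d)]`. -/
noncomputable def jj : (rs : List R) → (P : ModuleCat.{0} R) → (P →ₗ[R] NN rs P)
  | [], _ => LinearMap.id
  | x :: rs, P => (jj rs (ModuleCat.of R (QLoc P x))).comp (fr x 1)

lemma NN_weak (xs : List R) : ∀ (P : ModuleCat.{0} R) (ys : List R), IsWeaklyRegular P (xs ++ ys) →
    IsWeaklyRegular (NN xs P) ys := by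
  induction xs with
  | nil => intro P ys h; exact h
  | cons x xs ih =>
    intro P ys h
    exact ih (ModuleCat.of R (QLoc P x)) ys (weak_QLoc x _ h)

lemma jj_inj (xs : List R) : ∀ (P : ModuleCat.{0} R), IsWeaklyRegular P xs →
    ∀ p : P, jj xs P p = 0 → p ∈ (Ideal.ofList xs • ⊤ : Submodule R P) := by
  induction xs with
  | nil => intro P h p hp; rw [show p = 0 from hp]; exact zero_mem _
  | cons x xs ih =>
    intro P h p hp
    exact purity x xs h p (ih (ModuleCat.of R (QLoc P x)) (weak_QLoc x _ h) _ hp)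

lemma jj_inj2 (xs : List R) : ∀ (P : ModuleCat.{0} R) (ys : List R), IsWeaklyRegular P (xs ++ ys) →
    ∀ p : P, jj ys (NN xs P) (jj xs P p) = 0 → p ∈ (Ideal.ofList (xs ++ ys) • ⊤ : Submodule R P) := by
  induction xs with
  | nil => intro P ys h p hp; exact jj_inj ys P h p hp
  | cons x xs ih =>
    intro P ys h p hp
    exact purity x _ h p (ih (ModuleCat.of R (QLoc P x)) ys (weak_QLoc x _ h) _ hp)

lemma fr_mul_self {P : Type} [AddCommGroup P] [Module R P] (x : R) (p : P) : fr x 1 (x • p) = 0 := by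
  have := fr_pow x 0 1 p
  rw [fr_zero] at this
  simpa using this

lemma jj_kill (xs : List R) : ∀ (P : ModuleCat.{0} R) (r : R) (p : P), r ∈ xs → jj xs P (r • p) = 0 := by
  induction xs with
  | nil => intro P r p hr; simp at hr
  | cons x xs ih =>
    intro P r p hr
    change jj xs (ModuleCat.of R (QLoc P x)) (fr x 1 (r • p)) = 0
    rcases List.mem_cons.1 hr with rfl | hr
    · rw [fr_mul_self]
      exact LinearMap.map_zero _
    · rw [map_smul]
      exact ih _ r _ hr

lemma jj_kill' (xs : List R) (P : ModuleCat.{0} R) (r : R) (p : P) (hr : r ∈ Ideal.ofList xs) :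
    jj xs P (r • p) = 0 := by
  have : Ideal.ofList xs ≤ LinearMap.ker ((jj xs P).comp (LinearMap.toSpanSingleton R P p)) := by
    rw [Ideal.ofList, Ideal.span_le]
    intro r hr
    exact jj_kill xs P r p hr
  exact this hr

/-- The sequence `P → P_x → P_x / P`. -/
noncomputable abbrev locSC (P : ModuleCat.{0} R) (x : R) : ShortComplex (ModuleCat.{0} R) :=
  ShortComplex.mk (ModuleCat.ofHom (LocalizedModule.mkLinearMap (Submonoid.powers x) P))
    (ModuleCat.ofHom (Y := QLoc P x) (Submodule.mkQ _)) (by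
      ext p
      simp)

lemma locSC_exact (P : ModuleCat.{0} R) (x : R) (hx : IsSMulRegular P x) : (locSC P x).ShortExact where
  exact := by
    rw [ShortComplex.ShortExact.moduleCat_exact_iff_function_exact]
    intro q
    simp
  mono_f := by
    rw [ModuleCat.mono_iff_injective]
    change Function.Injective (LocalizedModule.mkLinearMap (Submonoid.powers x) P)
    rw [injective_iff_map_eq_zero]
    intro p hp
    rw [LocalizedModule.mkLinearMap_apply, ← LocalizedModule.zero_mk 1, LocalizedModule.mk_eq] at hp
    obtain ⟨⟨_, u, rfl⟩, hu⟩ := hp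
    apply hx.pow u
    simp only [Submonoid.smul_def, one_smul, smul_zero] at hu ⊢
    exact hu
  epi_g := by
    rw [ModuleCat.epi_iff_surjective]
    exact Submodule.mkQ_surjective _

open Abelian in
lemma ext_loc_zero (P X : ModuleCat.{0} R) (x : R) (s : ℕ) (hs : x ^ s ∈ Module.annihilator R X) (i : ℕ)
    (α : Ext X (locSC P x).X₂ i) : α = 0 := by
  have h1 : x ^ s • 𝟙 X = 0 := by
    simp [← ModuleCat.lsmul_eq_smul_id, Module.mem_annihilator_iff_lsmul_eq_zero.mp hs]
  have h2 : x ^ s • α = 0 := by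
    have : x ^ s • α = (Ext.mk₀ (x ^ s • 𝟙 X)).comp α (zero_add i) := by simp [Ext.mk₀_smul]
    rw [this, h1]; simp
  let e : (locSC P x).X₂ ⟶ (locSC P x).X₂ := ModuleCat.ofHom
    (LocalizedModule.divBy (⟨x ^ s, s, rfl⟩ : Submonoid.powers x))
  have h3 : (x ^ s • 𝟙 (locSC P x).X₂) ≫ e = 𝟙 _ := by
    ext q
    exact LocalizedModule.divBy_mul_by (⟨x ^ s, s, rfl⟩ : Submonoid.powers x) q
  have h4 : x ^ s • α = α.comp (Ext.mk₀ (x ^ s • 𝟙 _)) (add_zero i) := by simp [Ext.mk₀_smul]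
  have h5 : (α.comp (Ext.mk₀ (x ^ s • 𝟙 _)) (add_zero i)).comp (Ext.mk₀ e) (add_zero i) = α := by
    rw [Ext.comp_assoc_of_third_deg_zero, Ext.mk₀_comp_mk₀, h3]; simp
  rw [← h5, ← h4, h2]; simp

open Abelian in
lemma ses_bij (S : ShortComplex (ModuleCat.{0} R)) (hS : S.ShortExact) (X : ModuleCat.{0} R)
    (h : ∀ i (α : Ext X S.X₂ i), α = 0) (i j : ℕ) (hij : i + 1 = j) :
    Function.Bijective (fun α : Ext X S.X₃ i => α.comp hS.extClass hij) := by
  constructor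
  · have : Function.Injective (hS.extClass.postcomp X hij) := by
      rw [injective_iff_map_eq_zero]
      intro α hα
      obtain ⟨β, hβ⟩ := Ext.covariant_sequence_exact₃ X hS α hij hα
      rw [← hβ, h _ β, Ext.zero_comp]
    exact this
  · intro β
    obtain ⟨α, hα⟩ := Ext.covariant_sequence_exact₁ X hS β (h _ _) hij
    exact ⟨α, hα⟩

open Abelian in
lemma ext_loc_bij (P X : ModuleCat.{0} R) (x : R) (hx : IsSMulRegular P x)
    (s : ℕ) (hs : x ^ s ∈ Module.annihilator R X) (i j : ℕ) (hij : i + 1 = j) :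
    Function.Bijective (fun α : Ext X (locSC P x).X₃ i =>
      α.comp (locSC_exact P x hx).extClass hij) :=
  ses_bij _ (locSC_exact P x hx) X (ext_loc_zero P X x s hs) i j hij

open Abelian in
lemma main_ext (ys : List R) : ∀ (N : ModuleCat.{0} R), IsWeaklyRegular N ys →
    ∃ θ : Ext (NN ys N) N ys.length,
      (∀ X : ModuleCat.{0} R, (∀ y ∈ ys, ∃ s : ℕ, y ^ s ∈ Module.annihilator R X) →
        Function.Bijective (fun f : X ⟶ NN ys N => (Ext.mk₀ f).comp θ (zero_add _))) ∧
      (∀ (C : ModuleCat.{0} R) (g : C ⟶ N), IsWeaklyRegular C ys →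
        ∃ (X : ModuleCat.{0} R) (π : C ⟶ X) (ζ : Ext X C ys.length) (h : X ⟶ NN ys N),
          (∀ r ∈ Ideal.ofList ys, ∀ c : C, π (r • c) = 0) ∧
          (∀ c : C, h (π c) = jj ys N (g c)) ∧
          ζ.comp (Ext.mk₀ g) (add_zero _) = (Ext.mk₀ h).comp θ (zero_add _)) := by
  induction ys with
  | nil =>
    intro N _
    refine ⟨Ext.mk₀ (𝟙 N), ?_, ?_⟩
    · intro X _
      have : (fun f : X ⟶ NN [] N => (Ext.mk₀ f).comp (Ext.mk₀ (𝟙 N)) (zero_add 0)) = (Ext.mk₀ : (X ⟶ N) → _) := by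
        funext f
        exact Ext.comp_mk₀_id _
      change Function.Bijective (fun f : X ⟶ NN [] N => (Ext.mk₀ f).comp (Ext.mk₀ (𝟙 N)) (zero_add 0))
      rw [this]
      exact Ext.mk₀_bijective X N
    · intro C g _
      refine ⟨C, 𝟙 C, Ext.mk₀ (𝟙 C), g, ?_, ?_, ?_⟩
      · intro r hr c
        have : r = 0 := by simpa [Ideal.ofList] using hr
        simp [this]
      · intro c; rfl
      · exact (Ext.mk₀_comp_mk₀ _ _).trans ((by simp : Ext.mk₀ (𝟙 C ≫ g) = Ext.mk₀ (g ≫ 𝟙 N)).trans (Ext.mk₀_comp_mk₀ _ _).symm)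
  | cons y ys ih =>
    intro N hN
    have hN' := weak_QLoc y ys hN
    obtain ⟨hy, -⟩ := (isWeaklyRegular_cons_iff _ _ _).1 hN
    obtain ⟨θ, h1, h2⟩ := ih (ModuleCat.of R (QLoc N y)) hN'
    let δ : Ext (ModuleCat.of R (QLoc N y)) N 1 := (locSC_exact N y hy).extClass
    let θ2 : Ext (NN ys (ModuleCat.of R (QLoc N y))) N (ys.length + 1) := θ.comp δ rfl
    refine ⟨θ2, ?_, ?_⟩
    · intro X hX
      obtain ⟨s, hs⟩ := hX y List.mem_cons_self
      have hb := (ext_loc_bij N X y hy s hs ys.length _ rfl).comp (h1 X (fun r hr => hX r (List.mem_cons_of_mem _ hr)))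
      have e : (fun f : X ⟶ NN ys (ModuleCat.of R (QLoc N y)) => (Ext.mk₀ f).comp θ2 (zero_add (ys.length + 1))) =
          (fun α : Ext X (locSC N y).X₃ ys.length => α.comp (locSC_exact N y hy).extClass rfl) ∘
            (fun f : X ⟶ NN ys (ModuleCat.of R (QLoc N y)) => (Ext.mk₀ f).comp θ (zero_add _)) := by
        funext f
        exact (Ext.comp_assoc (a := ys.length + 1) (Ext.mk₀ f) θ δ (zero_add _) rfl (by omega)).symm
      rw [← e] at hb
      exact hb
    · intro C g hC
      obtain ⟨hyC, hC'⟩ := (isWeaklyRegular_cons_iff _ _ _).1 hC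
      let g3 : QuotSMulTop y C →ₗ[R] QLoc N y := Submodule.liftQ _ ((fr y 1).comp g.hom) (by
        intro c hc
        obtain ⟨w, rfl⟩ := (mem_pt _ _).1 hc
        rw [LinearMap.mem_ker, LinearMap.comp_apply, map_smul, fr_mul_self])
      obtain ⟨X, π, ζ, h, hk, hh, he⟩ := h2 (ModuleCat.of R (QuotSMulTop y C)) (ModuleCat.ofHom g3) hC'
      let δC : Ext (ModuleCat.of R (QuotSMulTop y C)) C 1 := (IsSMulRegular.smulShortComplex_shortExact hyC).extClass
      let p : C ⟶ ModuleCat.of R (QuotSMulTop y C) := ModuleCat.ofHom (Submodule.mkQ _)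
      have hp : ∀ c : C, p (y • c) = 0 := by
        intro c
        exact (Submodule.Quotient.mk_eq_zero _).2 ((mem_pt _ _).2 ⟨c, rfl⟩)
      have hnat : δC.comp (Ext.mk₀ g) (add_zero 1) = (Ext.mk₀ (ModuleCat.ofHom g3)).comp δ (zero_add 1) := by
        have key : ∀ c : C, LocalizedModule.mkLinearMap (Submonoid.powers y) N (g c) =
            LocalizedModule.divBy (⟨y ^ 1, 1, rfl⟩ : Submonoid.powers y)
              (LocalizedModule.mkLinearMap (Submonoid.powers y) N (g (y • c))) := by
          intro c
          rw [map_smul, map_smul]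
          have h5 := LocalizedModule.divBy_mul_by (⟨y ^ 1, 1, rfl⟩ : Submonoid.powers y)
            (LocalizedModule.mkLinearMap (Submonoid.powers y) N (g c))
          simp only [Module.algebraMap_end_apply] at h5
          refine h5.symm.trans ?_
          simp only [pow_one]
        let φ : ModuleCat.smulShortComplex C y ⟶ locSC N y :=
          { τ₁ := g
            τ₂ := ModuleCat.ofHom ((LocalizedModule.divBy (⟨y ^ 1, 1, rfl⟩ : Submonoid.powers y)).comp
              ((LocalizedModule.mkLinearMap (Submonoid.powers y) N).comp g.hom))
            τ₃ := ModuleCat.ofHom g3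
            comm₁₂ := by
              ext c
              exact key c
            comm₂₃ := by
              ext c
              rfl }
        exact ShortComplex.ShortExact.extClass_naturality _ _ φ
      let ζ2 : Ext X C (ys.length + 1) := ζ.comp δC rfl
      refine ⟨X, p ≫ π, ζ2, h, ?_, ?_, ?_⟩
      · intro r hr c
        rw [Ideal.ofList_cons, Submodule.mem_sup] at hr
        obtain ⟨a, ha, b, hb, rfl⟩ := hr
        obtain ⟨a, rfl⟩ := Ideal.mem_span_singleton'.1 ha
        rw [add_smul, map_add, mul_smul, map_smul]
        have e1 : (p ≫ π) (y • c) = 0 := by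
          change π (p (y • c)) = 0
          rw [hp, map_zero]
        have e2 : (p ≫ π) (b • c) = 0 := by
          rw [← hk b hb (p c), ← map_smul]; rfl
        rw [e1, e2, smul_zero, add_zero]
      · intro c
        exact hh (p c)
      · have a1 := Ext.comp_assoc (a := ys.length + 1) ζ δC (Ext.mk₀ g) rfl (add_zero 1) (by omega)
        have a2 := Ext.comp_assoc (a := ys.length + 1) ζ (Ext.mk₀ (ModuleCat.ofHom g3)) δ (add_zero _) (zero_add 1) (by omega)
        have a3 := Ext.comp_assoc (a := ys.length + 1) (Ext.mk₀ h) θ δ (zero_add _) rfl (by omega)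
        exact a1.trans ((congrArg (fun z => ζ.comp z rfl) hnat).trans (a2.symm.trans
          ((congrArg (fun z => z.comp δ rfl) he).trans a3)))
end


section
open HomologicalComplex Limits
universe v₁ u₁ v₂ u₂
variable {C : Type u₁} [Category.{v₁} C] [Abelian C] [HasProjectiveResolutions C]
  {D : Type u₂} [Category.{v₂} D] [Abelian D] (F : C ⥤ D) [F.Additive]

/-- Morphisms out of homology, from cocycles. -/
noncomputable def sgL (L : ChainComplex D ℕ) (n : ℕ) {A : D} (k : L.X n ⟶ A)
    (hk : L.d (n + 1) n ≫ k = 0) : L.homology n ⟶ A :=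
  L.homologyι n ≫ L.descOpcycles k (n + 1) (by simp) hk

lemma sgL_add (L : ChainComplex D ℕ) (n : ℕ) {A : D} (k l : L.X n ⟶ A)
    (hk : L.d (n + 1) n ≫ k = 0) (hl : L.d (n + 1) n ≫ l = 0) :
    sgL L n (k + l) (by simp [hk, hl]) = sgL L n k hk + sgL L n l hl := by
  have : L.descOpcycles (k + l) (n + 1) (by simp) (by simp [hk, hl]) =
    L.descOpcycles k (n + 1) (by simp) hk + L.descOpcycles l (n + 1) (by simp) hl := by
    rw [← cancel_epi (L.pOpcycles n)]
    refine Eq.trans ?_ (Preadditive.comp_add _ _ _ _ _ _).symm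
    simp only [p_descOpcycles]
  unfold sgL
  rw [this, Preadditive.comp_add]

lemma sgL_comp (L : ChainComplex D ℕ) (n : ℕ) {A A' : D} (t : A ⟶ A') (k : L.X n ⟶ A)
    (hk : L.d (n + 1) n ≫ k = 0) :
    sgL L n (k ≫ t) (by simp [reassoc_of% hk]) = sgL L n k hk ≫ t := by
  have : L.descOpcycles (k ≫ t) (n + 1) (by simp) (by simp [reassoc_of% hk]) =
    L.descOpcycles k (n + 1) (by simp) hk ≫ t := by
    rw [← cancel_epi (L.pOpcycles n)]
    simp
  unfold sgL
  rw [this, Category.assoc]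

lemma sgL_surj (L : ChainComplex D ℕ) (n : ℕ) {A : D} [Injective A] (h : L.homology n ⟶ A) :
    ∃ k hk, sgL L n k hk = h := by
  refine ⟨L.pOpcycles n ≫ Injective.factorThru h (L.homologyι n), by simp, ?_⟩
  have : L.descOpcycles (L.pOpcycles n ≫ Injective.factorThru h (L.homologyι n)) (n + 1) (by simp) (by simp) =
      Injective.factorThru h (L.homologyι n) := by
    rw [← cancel_epi (L.pOpcycles n), p_descOpcycles]
  unfold sgL
  rw [this, Injective.comp_factorThru]

lemma sgL_eq_zero (L : ChainComplex D ℕ) (n : ℕ) {A : D} [Injective A] (k : L.X (n + 1) ⟶ A)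
    (hk : L.d (n + 1 + 1) (n + 1) ≫ k = 0) (h1 : sgL L (n + 1) k hk = 0) :
    ∃ g, L.d (n + 1) n ≫ g = k := by
  unfold sgL at h1
  let S := ShortComplex.mk (L.homologyι (n + 1)) (L.fromOpcycles (n + 1) n) (L.homologyι_comp_fromOpcycles _ _)
  have hS : S.Exact := ShortComplex.exact_of_f_is_kernel _ (L.homologyIsKernel (n + 1) n (by simp))
  refine ⟨hS.descToInjective _ h1, ?_⟩
  have h2 := hS.comp_descToInjective _ h1
  have h3 := congrArg (fun z => L.pOpcycles (n + 1) ≫ z) h2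
  simp only [p_descOpcycles] at h3
  have h4 : L.pOpcycles (n + 1) ≫ S.g ≫ hS.descToInjective _ h1 = L.d (n + 1) n ≫ hS.descToInjective _ h1 := by
    rw [← Category.assoc]
    exact congrArg (fun z => z ≫ hS.descToInjective _ h1) (L.p_fromOpcycles (n + 1) n)
  exact h4.symm.trans h3

lemma sgL_eq_zero₀ (L : ChainComplex D ℕ) {A : D} (k : L.X 0 ⟶ A)
    (hk : L.d (0 + 1) 0 ≫ k = 0) (h1 : sgL L 0 k hk = 0) : k = 0 := by
  have h2 : L.descOpcycles k 1 (by simp) hk = 0 := by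
    rw [← cancel_epi (L.homologyι 0), comp_zero]
    exact h1
  have := L.p_descOpcycles k 1 (by simp) hk
  rw [h2, comp_zero] at this
  exact this.symm

lemma sgL_nat {L' L : ChainComplex D ℕ} (n : ℕ) {A : D} (φ : L' ⟶ L) (k : L.X n ⟶ A)
    (hk : L.d (n + 1) n ≫ k = 0) :
    homologyMap φ n ≫ sgL L n k hk = sgL L' n (φ.f n ≫ k) (by rw [← φ.comm_assoc, hk, comp_zero]) := by
  unfold sgL
  rw [homologyι_naturality_assoc, opcyclesMap_comp_descOpcycles]

/-- The complex computing the derived functor. -/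
noncomputable abbrev LL {X : C} (P : ProjectiveResolution X) : ChainComplex D ℕ :=
  (F.mapHomologicalComplex _).obj P.complex

/-- The comparison isomorphism. -/
noncomputable def lio {X : C} (P : ProjectiveResolution X) (n : ℕ) :
    (F.leftDerived n).obj X ≅ (LL F P).homology n := P.isoLeftDerivedObj F n

/-- Morphisms out of a derived functor, from cocycles. -/
noncomputable def sg {X : C} (P : ProjectiveResolution X) (n : ℕ) {A : D} (k : F.obj (P.complex.X n) ⟶ A)
    (hk : F.map (P.complex.d (n + 1) n) ≫ k = 0) : (F.leftDerived n).obj X ⟶ A :=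
  (lio F P n).hom ≫ sgL (LL F P) n k hk

variable {X : C} (P : ProjectiveResolution X) (n : ℕ) {A : D}

lemma sg_add (k l : F.obj (P.complex.X n) ⟶ A)
    (hk : F.map (P.complex.d (n + 1) n) ≫ k = 0) (hl : F.map (P.complex.d (n + 1) n) ≫ l = 0) :
    sg F P n (k + l) (by simp [hk, hl]) = sg F P n k hk + sg F P n l hl := by
  have := sgL_add (LL F P) n k l hk hl
  exact (congrArg (fun z => (lio F P n).hom ≫ z) this).trans (Preadditive.comp_add _ _ _ _ _ _)

lemma sg_comp {A' : D} (t : A ⟶ A') (k : F.obj (P.complex.X n) ⟶ A)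
    (hk : F.map (P.complex.d (n + 1) n) ≫ k = 0) :
    sg F P n (k ≫ t) (by simp [reassoc_of% hk]) = sg F P n k hk ≫ t := by
  have := sgL_comp (LL F P) n t k hk
  exact (congrArg (fun z => (lio F P n).hom ≫ z) this).trans (Category.assoc _ _ _).symm

lemma sg_surj [Injective A] (h : (F.leftDerived n).obj X ⟶ A) : ∃ k hk, sg F P n k hk = h := by
  obtain ⟨k, hk, e⟩ := sgL_surj (LL F P) n ((lio F P n).inv ≫ h)
  refine ⟨k, hk, ?_⟩
  unfold sg
  rw [e]; simp

lemma sg_eq_zero [Injective A] (k : F.obj (P.complex.X (n + 1)) ⟶ A)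
    (hk : F.map (P.complex.d (n + 1 + 1) (n + 1)) ≫ k = 0) (h : sg F P (n + 1) k hk = 0) :
    ∃ g, F.map (P.complex.d (n + 1) n) ≫ g = k := by
  refine sgL_eq_zero (LL F P) n k hk ?_
  rw [← cancel_epi (lio F P (n + 1)).hom, comp_zero]
  exact h

lemma sg_eq_zero₀ (k : F.obj (P.complex.X 0) ⟶ A)
    (hk : F.map (P.complex.d (0 + 1) 0) ≫ k = 0) (h : sg F P 0 k hk = 0) : k = 0 := by
  refine sgL_eq_zero₀ (LL F P) k hk ?_
  rw [← cancel_epi (lio F P 0).hom, comp_zero]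
  exact h

lemma sg_nat {X' : C} (P' : ProjectiveResolution X') (g : X' ⟶ X) (φ : P'.complex ⟶ P.complex)
    (comm : φ.f 0 ≫ P.π.f 0 = P'.π.f 0 ≫ g)
    (k : F.obj (P.complex.X n) ⟶ A) (hk : F.map (P.complex.d (n + 1) n) ≫ k = 0) :
    (F.leftDerived n).map g ≫ sg F P n k hk = sg F P' n (F.map (φ.f n) ≫ k) (by
      rw [← F.map_comp_assoc, ← φ.comm, F.map_comp_assoc, hk, comp_zero]) := by
  have h1 : (F.leftDerived n).map g ≫ (lio F P n).hom =
    (lio F P' n).hom ≫ homologyMap ((F.mapHomologicalComplex _).map φ) n :=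
    ProjectiveResolution.isoLeftDerivedObj_hom_naturality g P' P φ comm F n
  have h2 := sgL_nat n ((F.mapHomologicalComplex (ComplexShape.down ℕ)).map φ) k hk
  unfold sg
  rw [← Category.assoc, h1, Category.assoc, h2]
  rfl

end

section
variable {R : Type} [CommRing R]

/-- The old `Ext`. -/
noncomputable abbrev OE (n : ℕ) (X Y : ModuleCat.{0} R) : ModuleCat.{0} R := ((Ext R (ModuleCat.{0} R) n).obj (op X)).obj Y

/-- The functor derived in `OE`. -/
noncomputable abbrev FY (Y : ModuleCat.{0} R) : ModuleCat.{0} R ⥤ (ModuleCat.{0} R)ᵒᵖ :=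
  ((linearYoneda R (ModuleCat.{0} R)).obj Y).rightOp

/-- elements as maps to the base ring in the opposite category. -/
noncomputable def eltMap {Z : (ModuleCat.{0} R)ᵒᵖ} (z : Z.unop) : Z ⟶ op (ModuleCat.of R R) :=
  (ModuleCat.ofHom (LinearMap.toSpanSingleton R Z.unop z)).op

/-- the inverse. -/
noncomputable def mapElt {Z : (ModuleCat.{0} R)ᵒᵖ} (z : Z ⟶ op (ModuleCat.of R R)) : Z.unop :=
  z.unop (1 : R)

lemma mapElt_eltMap {Z : (ModuleCat.{0} R)ᵒᵖ} (z : Z.unop) : mapElt (eltMap z) = z := by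
  simp [mapElt, eltMap]

lemma eltMap_mapElt {Z : (ModuleCat.{0} R)ᵒᵖ} (z : Z ⟶ op (ModuleCat.of R R)) : eltMap (mapElt z) = z := by
  apply Quiver.Hom.unop_inj
  ext
  simp [mapElt, eltMap]

lemma comp_eltMap {Z Z' : (ModuleCat.{0} R)ᵒᵖ} (t : Z' ⟶ Z) (z : Z.unop) : t ≫ eltMap z = eltMap (t.unop z) := by
  apply Quiver.Hom.unop_inj
  ext
  simp [eltMap]

lemma mapElt_comp {Z Z' : (ModuleCat.{0} R)ᵒᵖ} (t : Z' ⟶ Z) (z : Z ⟶ op (ModuleCat.of R R)) :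
    mapElt (t ≫ z) = t.unop (mapElt z) := by
  simp [mapElt]

lemma eltMap_add {Z : (ModuleCat.{0} R)ᵒᵖ} (z w : Z.unop) : eltMap (z + w) = eltMap z + eltMap w := by
  apply Quiver.Hom.unop_inj
  ext
  simp [eltMap]

lemma mapElt_add {Z : (ModuleCat.{0} R)ᵒᵖ} (z w : Z ⟶ op (ModuleCat.of R R)) : mapElt (z + w) = mapElt z + mapElt w := by
  simp [mapElt]

/-- scaling by `r` on `op R`. -/
noncomputable def scl (r : R) : op (ModuleCat.of R R) ⟶ op (ModuleCat.of R R) :=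
  (ModuleCat.ofHom (LinearMap.lsmul R R r)).op

lemma eltMap_smul {Z : (ModuleCat.{0} R)ᵒᵖ} (r : R) (z : Z.unop) : eltMap (r • z) = eltMap z ≫ scl r := by
  apply Quiver.Hom.unop_inj
  ext
  simp [eltMap, scl]

lemma mapElt_smul {Z : (ModuleCat.{0} R)ᵒᵖ} (r : R) (z : Z ⟶ op (ModuleCat.of R R)) :
    mapElt (z ≫ scl r) = r • mapElt z := by
  rw [← eltMap_mapElt z, ← eltMap_smul, mapElt_eltMap, mapElt_eltMap]

lemma eltMap_zero {Z : (ModuleCat.{0} R)ᵒᵖ} : eltMap (0 : Z.unop) = 0 := by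
  apply Quiver.Hom.unop_inj
  ext
  simp [eltMap]

instance : Injective (op (ModuleCat.of R R)) := by
  have : Projective (ModuleCat.of R R) := (IsProjective.iff_projective (R := R) R).1 inferInstance
  infer_instance

variable {X : ModuleCat.{0} R} (P : ProjectiveResolution X) (n : ℕ) {Y : ModuleCat.{0} R}

/-- the element of the complex. -/
noncomputable def kk (f : P.complex.X n ⟶ Y) : (FY Y).obj (P.complex.X n) ⟶ op (ModuleCat.of R R) :=
  eltMap (Z := (FY Y).obj (P.complex.X n)) f

lemma kk_nat {X' : ModuleCat.{0} R} (P' : ProjectiveResolution X') {n m : ℕ} (t : P'.complex.X m ⟶ P.complex.X n)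
     (f : P.complex.X n ⟶ Y) : (FY Y).map t ≫ kk P n f = kk P' m (t ≫ f) := by
  exact comp_eltMap _ _

lemma kk_zero_iff (f : P.complex.X n ⟶ Y) : kk P n f = 0 ↔ f = 0 := by
  have : kk P n (0 : P.complex.X n ⟶ Y) = 0 := by
    exact eltMap_zero (Z := (FY Y).obj (P.complex.X n))
  constructor
  · intro h
    rw [← this] at h
    have := congrArg mapElt h
    exact (mapElt_eltMap (Z := (FY Y).obj (P.complex.X n)) f).symm.trans (this.trans
      (mapElt_eltMap (Z := (FY Y).obj (P.complex.X n)) (0 : P.complex.X n ⟶ Y)))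
  · rintro rfl; exact this

lemma kk_cocycle {f : P.complex.X n ⟶ Y} : (FY Y).map (P.complex.d (n + 1) n) ≫ kk P n f = 0 ↔
    P.complex.d (n + 1) n ≫ f = 0 := by
  rw [kk_nat P P, kk_zero_iff]

/-- class of a cocycle in the old Ext. -/
noncomputable def sig (f : P.complex.X n ⟶ Y) (hf : P.complex.d (n + 1) n ≫ f = 0) : OE n X Y :=
  mapElt (Z := ((FY Y).leftDerived n).obj X) (sg (FY Y) P n (kk P n f) ((kk_cocycle P n).2 hf))

lemma kk_add (f g : P.complex.X n ⟶ Y) : kk P n (f + g) = kk P n f + kk P n g :=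
  eltMap_add (Z := (FY Y).obj (P.complex.X n)) f g

lemma kk_smul (r : R) (f : P.complex.X n ⟶ Y) : kk P n (r • f) = kk P n f ≫ scl r :=
  eltMap_smul (Z := (FY Y).obj (P.complex.X n)) r f

lemma sig_add (f g : P.complex.X n ⟶ Y) (hf : P.complex.d (n + 1) n ≫ f = 0) (hg : P.complex.d (n + 1) n ≫ g = 0) :
    sig P n (f + g) (by simp [hf, hg]) = sig P n f hf + sig P n g hg := by
  unfold sig
  refine Eq.trans ?_ (mapElt_add _ _)
  simp only [kk_add]
  exact congrArg mapElt (sg_add _ _ _ _ _ ((kk_cocycle P n).2 hf) ((kk_cocycle P n).2 hg))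

lemma sig_smul (r : R) (f : P.complex.X n ⟶ Y) (hf : P.complex.d (n + 1) n ≫ f = 0) :
    sig P n (r • f) (by simp [hf]) = r • sig P n f hf := by
  unfold sig
  refine Eq.trans ?_ (mapElt_smul _ _)
  simp only [kk_smul]
  exact congrArg mapElt (sg_comp _ _ _ _ _ ((kk_cocycle P n).2 hf))

lemma sig_surj (a : OE n X Y) : ∃ f hf, sig P n f hf = a := by
  obtain ⟨k, hk, h⟩ := sg_surj (FY Y) P n (eltMap (Z := ((FY Y).leftDerived n).obj X) a)
  obtain ⟨f, rfl⟩ : ∃ f : P.complex.X n ⟶ Y, kk P n f = k := ⟨mapElt k, eltMap_mapElt k⟩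
  refine ⟨f, (kk_cocycle P n).1 hk, ?_⟩
  unfold sig
  exact (congrArg mapElt h).trans (mapElt_eltMap _)

lemma sig_zero (f : P.complex.X n ⟶ Y) (hf : P.complex.d (n + 1) n ≫ f = 0) (h : sig P n f hf = 0) :
    P.extMk f (n + 1) rfl hf = 0 := by
  have h0 : sg (FY Y) P n (kk P n f) ((kk_cocycle P n).2 hf) = 0 := by
    have := eltMap_mapElt (sg (FY Y) P n (kk P n f) ((kk_cocycle P n).2 hf))
    exact this.symm.trans ((congrArg (eltMap (Z := ((FY Y).leftDerived n).obj X)) h).trans eltMap_zero)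
  cases n with
  | zero =>
    have := (kk_zero_iff P 0 f).1 (sg_eq_zero₀ _ _ _ _ h0)
    subst this
    simp
  | succ n =>
    obtain ⟨g, hg⟩ := sg_eq_zero _ _ _ _ _ h0
    rw [P.extMk_eq_zero_iff f _ rfl hf n rfl]
    obtain ⟨g, rfl⟩ : ∃ f : P.complex.X n ⟶ Y, kk P n f = g := ⟨mapElt g, eltMap_mapElt g⟩
    refine ⟨g, ?_⟩
    have h2 := (kk_nat P P (P.complex.d (n + 1) n) g).symm.trans hg
    have h3 := congrArg mapElt h2
    exact (mapElt_eltMap (Z := (FY Y).obj (P.complex.X (n + 1))) _).symm.trans (h3.trans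
      (mapElt_eltMap (Z := (FY Y).obj (P.complex.X (n + 1))) f))

lemma sig_nat {X' : ModuleCat.{0} R} (P' : ProjectiveResolution X') (g : X' ⟶ X) (φ : P'.complex ⟶ P.complex)
    (comm : φ.f 0 ≫ P.π.f 0 = P'.π.f 0 ≫ g) (f : P.complex.X n ⟶ Y) (hf : P.complex.d (n + 1) n ≫ f = 0) :
    ((Ext R (ModuleCat.{0} R) n).map g.op).app Y (sig P n f hf) = sig P' n (φ.f n ≫ f) (by
      rw [← φ.comm_assoc, hf, Limits.comp_zero]) := by
  unfold sig
  refine (mapElt_comp (((FY Y).leftDerived n).map g) _).symm.trans ?_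
  rw [sg_nat _ P n P' g φ comm]
  simp only [kk_nat P P']

end


section
variable {R : Type} [CommRing R] {X : ModuleCat.{0} R} (n : ℕ) {Y : ModuleCat.{0} R}

lemma OE_smul (r : R) (a : OE n X Y) :
    ((Ext R (ModuleCat.{0} R) n).map (r • 𝟙 X).op).app Y a = r • a := by
  obtain ⟨f, hf, rfl⟩ := sig_surj (projectiveResolution X) n a
  rw [sig_nat (projectiveResolution X) n (projectiveResolution X) (r • 𝟙 X) (r • 𝟙 _) (by
      refine (Linear.smul_comp _ _ _ r (𝟙 _) ((projectiveResolution X).π.f 0)).trans ?_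
      refine Eq.trans ?_ (Linear.comp_smul _ _ _ ((projectiveResolution X).π.f 0) r (𝟙 X)).symm
      rw [Category.id_comp]
      exact congrArg (r • ·) (Category.comp_id ((projectiveResolution X).π.f 0)).symm), ← sig_smul]
  congr 1
  simp

lemma sig_sub_zero (P : ProjectiveResolution X) (f g : P.complex.X n ⟶ Y) (hf : P.complex.d (n + 1) n ≫ f = 0)
    (hg : P.complex.d (n + 1) n ≫ g = 0) (h : sig P n f hf = sig P n g hg) :
    P.extMk f (n + 1) rfl hf = P.extMk g (n + 1) rfl hg := by
  rw [← sub_eq_zero, P.sub_extMk]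
  apply sig_zero
  have hh : P.complex.d (n + 1) n ≫ (f - g) = 0 := by simp [hf, hg]
  have e := sig_add P n (f - g) g hh hg
  have e2 : sig P n (f - g + g) (by simp [hf]) = sig P n f hf := by congr 1; simp
  rw [e2, h] at e
  exact right_eq_add.1 e

/-- comparison of Ext groups -/
noncomputable def kap (a : OE n X Y) : Abelian.Ext X Y n :=
  (projectiveResolution X).extMk (sig_surj (projectiveResolution X) n a).choose (n + 1) rfl
    (sig_surj (projectiveResolution X) n a).choose_spec.choose

lemma kap_sig (f : (projectiveResolution X).complex.X n ⟶ Y) (hf) :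
    kap n (sig (projectiveResolution X) n f hf) = (projectiveResolution X).extMk f (n + 1) rfl hf := by
  apply sig_sub_zero
  exact (sig_surj (projectiveResolution X) n _).choose_spec.choose_spec

lemma kap_add (a b : OE n X Y) : kap n (a + b) = kap n a + kap n b := by
  obtain ⟨f, hf, rfl⟩ := sig_surj (projectiveResolution X) n a
  obtain ⟨g, hg, rfl⟩ := sig_surj (projectiveResolution X) n b
  rw [← sig_add, kap_sig, kap_sig, kap_sig, ProjectiveResolution.add_extMk]

lemma kap_surj (a : Abelian.Ext X Y n) : ∃ b : OE n X Y, kap n b = a := by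
  obtain ⟨f, hf, rfl⟩ := (projectiveResolution X).extMk_surjective a (n + 1) rfl
  exact ⟨_, kap_sig n f hf⟩

lemma kap_nat {X' : ModuleCat.{0} R} (g : X' ⟶ X) (a : OE n X Y) :
    kap n (((Ext R (ModuleCat.{0} R) n).map g.op).app Y a) = (Abelian.Ext.mk₀ g).comp (kap n a) (zero_add _) := by
  obtain ⟨f, hf, rfl⟩ := sig_surj (projectiveResolution X) n a
  rw [sig_nat (projectiveResolution X) n (projectiveResolution X') g
    (ProjectiveResolution.lift g _ _) (ProjectiveResolution.lift_commutes_zero g _ _), kap_sig, kap_sig]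
  have := (projectiveResolution X).mk₀_comp_extMk f (n + 1) rfl hf (R' := projectiveResolution X') (g := g)
    { hom := ProjectiveResolution.lift g _ _
      hom_f_zero_comp_π_f_zero := ProjectiveResolution.lift_commutes_zero g _ _ }
  exact this.symm

end


section
open Limits
variable {R : Type} [CommRing R] (J : Ideal R) (i : ℕ) (Y : ModuleCat.{0} R)

/-- projections between quotients by powers -/
noncomputable def prj {s t : ℕ} (h : s ≤ t) : ModuleCat.of R (R ⧸ J ^ t) ⟶ ModuleCat.of R (R ⧸ J ^ s) :=
  ModuleCat.ofHom (Submodule.mapQ _ _ LinearMap.id (Ideal.pow_le_pow_right h))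

/-- the diagram evaluated at `Y` -/
noncomputable abbrev lcD : (ℕᵒᵖ)ᵒᵖ ⥤ ModuleCat.{0} R :=
  localCohomology.diagram (localCohomology.idealPowersDiagram J) i ⋙ (evaluation _ _).obj Y

/-- colimit cocone -/
noncomputable def lcC : Cocone (lcD J i Y) :=
  ((evaluation _ _).obj Y).mapCocone (colimit.cocone (localCohomology.diagram (localCohomology.idealPowersDiagram J) i))

/-- it is a colimit -/
noncomputable def lcCC : IsColimit (lcC J i Y) :=
  isColimitOfPreserves ((evaluation _ _).obj Y) (colimit.isColimit _)

/-- inclusion in the colimit -/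
noncomputable def inc (t : ℕ) : OE i (ModuleCat.of R (R ⧸ J ^ t)) Y ⟶ (localCohomology J i).obj Y :=
  (lcC J i Y).ι.app (op (op t))

lemma inc_desc (N : ModuleCat.{0} R) (ψ : ∀ t, OE i (ModuleCat.of R (R ⧸ J ^ t)) Y ⟶ N)
    (hψ : ∀ s t (h : s ≤ t) a, ψ t (((Ext R (ModuleCat.{0} R) i).map (prj J h).op).app Y a) = ψ s a) :
    ∃ φ : (localCohomology J i).obj Y ⟶ N, ∀ t a, φ (inc J i Y t a) = ψ t a := by
  let c : Cocone (lcD J i Y) :=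
    { pt := N
      ι := { app := fun t => ψ t.unop.unop
             naturality := by
              intro s t f
              refine Eq.trans ?_ (Category.comp_id _).symm
              ext a
              exact hψ s.unop.unop t.unop.unop (leOfHom f.unop.unop) a } }
  refine ⟨(lcCC J i Y).desc c, fun t a => ?_⟩
  have := (lcCC J i Y).fac c (op (op t))
  exact congrArg (fun z : OE i (ModuleCat.of R (R ⧸ J ^ t)) Y ⟶ N => z a) this

lemma gen_eq_zero (F : (ℕᵒᵖ)ᵒᵖ ⥤ ModuleCat.{0} R) (c : Cocone F) (hc : IsColimit c) (j : (ℕᵒᵖ)ᵒᵖ) (x : F.obj j)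
    (h : c.ι.app j x = 0) : ∃ (k : (ℕᵒᵖ)ᵒᵖ) (f : j ⟶ k), F.map f x = 0 := by
  have h1 : c.ι.app j x = c.ι.app j 0 := by rw [h, map_zero]
  obtain ⟨k, f, g, e⟩ := Concrete.isColimit_exists_of_rep_eq F hc x 0 h1
  exact ⟨k, f, e.trans (map_zero (F.map g).hom)⟩

lemma inc_eq_zero (t : ℕ) (a : OE i (ModuleCat.of R (R ⧸ J ^ t)) Y) (h : inc J i Y t a = 0) :
    ∃ (t' : ℕ) (h : t ≤ t'), ((Ext R (ModuleCat.{0} R) i).map (prj J h).op).app Y a = 0 := by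
  obtain ⟨k, f, e⟩ := gen_eq_zero (lcD J i Y) (lcC J i Y) (lcCC J i Y) (op (op t)) a h
  exact ⟨k.unop.unop, leOfHom f.unop.unop, e⟩

end


section
open Limits
variable {R : Type} [CommRing R]

lemma OE_kill {X Y : ModuleCat.{0} R} (n : ℕ) (r : R) (h : r • 𝟙 X = 0) (a : OE n X Y) : r • a = 0 := by
  have h1 : r • 𝟙 X = (0 : R) • 𝟙 X := by rw [h, zero_smul]
  rw [← OE_smul, h1, OE_smul, zero_smul]

open Abelian in
lemma partA (xs : List R) (hW : IsWeaklyRegular R xs) (I : Ideal R) (hxs : ∀ r ∈ xs, r ∈ I) (a : R)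
    (ha : ∀ r ∈ I, r * a ∈ Ideal.ofList xs) :
    ∃ (φ : (localCohomology I xs.length).obj (ModuleCat.of R R) ⟶ NN xs (ModuleCat.of R R))
      (u : (localCohomology I xs.length).obj (ModuleCat.of R R)),
      φ u = jj xs (ModuleCat.of R R) a ∧ ∀ r ∈ I, r • u = 0 := by
  obtain ⟨θ, h1, -⟩ := main_ext xs (ModuleCat.of R R) hW
  have Hb : ∀ t, Function.Bijective (fun f : ModuleCat.of R (R ⧸ I ^ t) ⟶ NN xs (ModuleCat.of R R) =>
      (Ext.mk₀ f).comp θ (zero_add _)) := by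
    intro t
    refine h1 _ fun y hy => ⟨t, ?_⟩
    rw [Module.mem_annihilator]
    intro m
    obtain ⟨m, rfl⟩ := Ideal.Quotient.mk_surjective m
    exact Ideal.Quotient.eq_zero_iff_mem.2 (Ideal.mul_mem_right _ _ (Ideal.pow_mem_pow (hxs y hy) t))
  choose E hE using fun t (α : OE xs.length (ModuleCat.of R (R ⧸ I ^ t)) (ModuleCat.of R R)) => (Hb t).2 (kap _ α)
  have Eadd : ∀ t α β, E t (α + β) = E t α + E t β := by
    intro t α β
    apply (Hb t).1
    have := hE t (α + β)
    rw [kap_add, ← hE t α, ← hE t β] at this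
    refine this.trans ?_
    simp only [Ext.mk₀_add, Ext.add_comp]
  have Enat : ∀ s t (g : ModuleCat.of R (R ⧸ I ^ t) ⟶ ModuleCat.of R (R ⧸ I ^ s)) α,
      E t (((Ext R (ModuleCat.{0} R) xs.length).map g.op).app _ α) = g ≫ E s α := by
    intro s t g α
    apply (Hb t).1
    refine (hE t _).trans ?_
    rw [kap_nat, ← hE s α]
    simp
  have Esmul : ∀ t (r : R) α, E t (r • α) = r • E t α := by
    intro t r α
    rw [← OE_smul, Enat]
    simp
  let ψ : ∀ t, OE xs.length (ModuleCat.of R (R ⧸ I ^ t)) (ModuleCat.of R R) ⟶ NN xs (ModuleCat.of R R) :=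
    fun t => ModuleCat.ofHom
      { toFun := fun α => E t α (Ideal.Quotient.mk (I ^ t) 1)
        map_add' := fun α β => congrArg (fun z => z.hom (Ideal.Quotient.mk (I ^ t) 1)) (Eadd t α β)
        map_smul' := fun r α => congrArg (fun z => z.hom (Ideal.Quotient.mk (I ^ t) 1)) (Esmul t r α) }
  obtain ⟨φ, hφ⟩ := inc_desc I xs.length (ModuleCat.of R R) (NN xs (ModuleCat.of R R)) ψ (by
    intro s t h α
    change E t _ _ = E s α _
    rw [Enat]
    rfl)
  have hpow : I ^ 1 ≤ LinearMap.ker (LinearMap.toSpanSingleton R (NN xs (ModuleCat.of R R)) (jj xs (ModuleCat.of R R) a)) := by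
    intro r hr
    rw [pow_one] at hr
    rw [LinearMap.mem_ker, LinearMap.toSpanSingleton_apply, ← map_smul]
    have := jj_kill' xs (ModuleCat.of R R) (r * a) 1 (ha r hr)
    simpa using this
  let f : ModuleCat.of R (R ⧸ I ^ 1) ⟶ NN xs (ModuleCat.of R R) :=
    ModuleCat.ofHom (Submodule.liftQ _ _ hpow)
  obtain ⟨α, hα⟩ := kap_surj xs.length ((Ext.mk₀ f).comp θ (zero_add _))
  refine ⟨φ, inc I _ _ 1 α, ?_, ?_⟩
  · rw [hφ]
    change E 1 α _ = _
    have : E 1 α = f := by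
      apply (Hb 1).1
      exact (hE 1 α).trans hα
    rw [this]
    change Submodule.liftQ _ _ hpow (Submodule.Quotient.mk 1) = _
    rw [Submodule.liftQ_apply]
    simp
  · intro r hr
    rw [← map_smul]
    rw [OE_kill _ r, map_zero]
    apply ModuleCat.hom_ext
    apply LinearMap.ext
    intro m
    obtain ⟨m, rfl⟩ := Ideal.Quotient.mk_surjective m
    exact Ideal.Quotient.eq_zero_iff_mem.2 (Ideal.mul_mem_right _ _ (by rwa [pow_one]))

end


section
open Limits
variable {R : Type} [CommRing R]

open Abelian in
lemma partB (xs ys : List R) (hW : IsWeaklyRegular R (xs ++ ys)) (J : Ideal R) (k : ℕ)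
    (hk : J ^ k ≤ Ideal.ofList (xs ++ ys)) (hys : ∀ r ∈ ys, r ∈ J) (a : R)
    (ha : a ∉ Ideal.ofList (xs ++ ys)) (M : ModuleCat.{0} R) (φ : M ⟶ NN xs (ModuleCat.of R R)) (u : M)
    (hφ : φ u = jj xs (ModuleCat.of R R) a) (hu : ∀ r ∈ Ideal.ofList xs, r • u = 0) :
    Nontrivial ((localCohomology J ys.length).obj M) := by
  have hWC := ((isWeaklyRegular_append_iff R xs ys).1 hW).2
  let C : ModuleCat.{0} R := ModuleCat.of R (R ⧸ (Ideal.ofList xs • ⊤ : Submodule R R))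
  have hle : (Ideal.ofList xs • ⊤ : Submodule R R) ≤ LinearMap.ker (LinearMap.toSpanSingleton R M u) := by
    intro r hr
    rw [smul_eq_mul, Ideal.mul_top] at hr
    exact hu r hr
  let c : C ⟶ M := ModuleCat.ofHom (Submodule.liftQ _ _ hle)
  let c1 : C := Submodule.Quotient.mk 1
  have hc1 : c c1 = u := by
    change Submodule.liftQ _ _ hle (Submodule.Quotient.mk 1) = _
    rw [Submodule.liftQ_apply]; simp
  have hc0 : ∀ r ∈ Ideal.ofList xs, r • c1 = 0 := by
    intro r hr
    refine (Submodule.Quotient.mk_smul _ r (1 : R)).symm.trans ?_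
    rw [Submodule.Quotient.mk_eq_zero]
    exact Submodule.smul_mem_smul hr trivial
  have hWN : IsWeaklyRegular (NN xs (ModuleCat.of R R)) ys := NN_weak xs (ModuleCat.of R R) ys hW
  obtain ⟨θ, h1, h2⟩ := main_ext ys (NN xs (ModuleCat.of R R)) hWN
  obtain ⟨X, π, ζ, h, h3, h4, h5⟩ := h2 C (c ≫ φ) hWC
  have hle2 : J ^ k ≤ LinearMap.ker (LinearMap.toSpanSingleton R X (π c1)) := by
    refine hk.trans ?_
    rw [Ideal.ofList_append, sup_le_iff]
    constructor
    · intro r hr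
      rw [LinearMap.mem_ker, LinearMap.toSpanSingleton_apply, ← map_smul, hc0 r hr, map_zero]
    · intro r hr
      rw [LinearMap.mem_ker, LinearMap.toSpanSingleton_apply, ← map_smul, h3 r hr]
  let f : ModuleCat.of R (R ⧸ J ^ k) ⟶ X := ModuleCat.ofHom (Submodule.liftQ _ _ hle2)
  obtain ⟨ξ, hξ⟩ := kap_surj ys.length (((Ext.mk₀ f).comp ζ (zero_add _)).comp (Ext.mk₀ c) (add_zero _))
  refine ⟨inc J _ _ k ξ, 0, fun hz => ?_⟩
  obtain ⟨t, hkt, e⟩ := inc_eq_zero _ _ _ _ _ hz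
  have e2 := kap_nat ys.length (prj J hkt) ξ
  have kz : kap ys.length (0 : OE ys.length (ModuleCat.of R (R ⧸ J ^ t)) M) = 0 := by
    have := kap_add ys.length (0 : OE ys.length (ModuleCat.of R (R ⧸ J ^ t)) M) 0
    rw [add_zero] at this
    exact left_eq_add.1 this
  rw [e, kz, hξ] at e2
  have e3 := congrArg (fun z => Ext.comp z (Ext.mk₀ φ) (add_zero _)) e2
  simp only [Ext.zero_comp] at e3
  have e4 : (Ext.mk₀ (prj J hkt ≫ f ≫ h)).comp θ (zero_add _) = 0 := by
    refine Eq.trans ?_ e3.symm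
    have h6 : (ζ.comp (Ext.mk₀ c) (add_zero _)).comp (Ext.mk₀ φ) (add_zero _) =
        (Ext.mk₀ h).comp θ (zero_add _) := by
      rw [← h5]
      simp
    have h7 : (Ext.mk₀ (prj J hkt ≫ f ≫ h)).comp θ (zero_add _) =
        (Ext.mk₀ (prj J hkt)).comp ((Ext.mk₀ f).comp ((Ext.mk₀ h).comp θ (zero_add _)) (zero_add _)) (zero_add _) := by
      simp
    rw [h7, ← h6]
    simp only [Ext.comp_assoc_of_third_deg_zero]
  have hb := h1 (ModuleCat.of R (R ⧸ J ^ t)) (by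
    intro y hy
    refine ⟨t, ?_⟩
    rw [Module.mem_annihilator]
    intro m
    obtain ⟨m, rfl⟩ := Ideal.Quotient.mk_surjective m
    exact Ideal.Quotient.eq_zero_iff_mem.2 (Ideal.mul_mem_right _ _ (Ideal.pow_mem_pow (hys y hy) t)))
  have e5 : prj J hkt ≫ f ≫ h = 0 := by
    apply hb.1
    simpa using e4
  have e6 := congrArg (fun z => z.hom (Submodule.Quotient.mk (1 : R))) e5
  have e7 : h (π c1) = 0 := by
    refine Eq.trans ?_ e6
    change h _ = h (Submodule.liftQ _ _ hle2 (Submodule.Quotient.mk 1))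
    rw [Submodule.liftQ_apply]; simp
  rw [h4] at e7
  change jj ys _ (φ (c c1)) = 0 at e7
  rw [hc1, hφ] at e7
  have := jj_inj2 xs (ModuleCat.of R R) ys hW a e7
  apply ha
  simpa using this

theorem final [IsLocalRing R] [IsNoetherianRing R] (n : ℕ) (hdim : ringKrullDim R = n) (S : Finset R)
    (hc : S.card ≤ n) (hS : Ideal.span (S : Set R) = maximalIdeal R) (I : Ideal R) (hI : I ≠ ⊤) (d : ℕ)
    (h1 : ∀ P : PrimeSpectrum R, I ≤ P.asIdeal → (d : ℕ∞) ≤ Order.height P)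
    (h2 : ∃ P : PrimeSpectrum R, I ≤ P.asIdeal ∧ Order.height P = d) :
    Nontrivial ((localCohomology (maximalIdeal R) (n - d)).obj
        (ModuleCat.of R ((localCohomology I d).obj (ModuleCat.of R R)))) := by
  obtain ⟨xs, ys, a, k, rfl, hy, hxI, hym, hW, haI, han, hk⟩ := aux_CA n hdim S hc hS I hI d h1 h2
  obtain ⟨φ, u, hφ, hu⟩ := partA xs ((isWeaklyRegular_append_iff R xs ys).1 hW).1 I hxI a haI
  rw [← hy]
  refine partB xs ys hW _ k hk hym a han _ φ u hφ fun r hr => hu r ?_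
  exact (Ideal.span_le (I := I)).2 hxI hr

end


/-- Regular local ring `R` of dimension `n` containing a field, `I` a proper
ideal of height `d`.  Then `H_m^{n-d}(H_I^d(R)) ≠ 0`. -/
theorem stmt5 (R : Type) [CommRing R] [IsLocalRing R]
    (hreg : IsRegularLocal R) (hfield : ContainsField R)
    (n : ℕ) (hdim : ringKrullDim R = (n : WithBot ℕ∞))
    (I : Ideal R) (hI : I ≠ ⊤) (d : ℕ) (hht : idealHeight R I = (d : ℕ∞)) :
    Nontrivial
      ((localCohomology (IsLocalRing.maximalIdeal R) (n - d)).obj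
        (ModuleCat.of R (LocalCohomologyMod R I d))) := by
  obtain ⟨hN, S, hS, hSc⟩ := hreg
  have hc : S.card ≤ n := by
    rw [hdim] at hSc
    exact le_of_eq (by exact_mod_cast hSc)
  have hne : {h : ℕ∞ | ∃ p : PrimeSpectrum R, I ≤ p.asIdeal ∧ Order.height p = h}.Nonempty := by
    obtain ⟨m, hm, hIm⟩ := Ideal.exists_le_maximal I hI
    exact ⟨_, ⟨m, hm.isPrime⟩, hIm, rfl⟩
  have h2 := csInf_mem hne
  unfold idealHeight at hht
  rw [hht] at h2
  refine final n hdim S hc hS I hI d (fun P hP => ?_) h2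
  rw [← hht]
  exact sInf_le ⟨P, hP, rfl⟩
end

section
/- Let (R, m) be a regular local ring of dimension n containing a field, and let I be a proper ideal of R with ht_R(I) = d. Then dim_R(H_I^d(R)) = n − d. -/
open CategoryTheory Opposite

namespace LC

/-- `x` is regular modulo `J`. -/
def RegMod {R : Type} [CommRing R] (J : Ideal R) (x : R) : Prop := ∀ a, x * a ∈ J → a ∈ J

/-- A regular sequence of length `r` in `I` modulo `J` (the last ideal is the one generated). -/
inductive RegSeq {R : Type} [CommRing R] (I : Ideal R) : Ideal R → ℕ → Ideal R → Prop
  | nil (J) : RegSeq I J 0 J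
  | cons (J J' : Ideal R) (x : R) (r : ℕ) (hx : x ∈ I) (hreg : RegMod J x)
      (h : RegSeq I (J ⊔ Ideal.span {x}) r J') : RegSeq I J (r + 1) J'

section cx
variable {R : Type} [CommRing R]

/-- Split a map into `J + (x)` -/
lemma split_map {X : Type} [AddCommGroup X] [Module R X] [Module.Projective R X]
    (J : Ideal R) (x : R) (f : X →ₗ[R] R) (hf : ∀ z, f z ∈ J ⊔ Ideal.span {x}) :
    ∃ g : X →ₗ[R] R, ∀ z, f z - x * g z ∈ J := by
  let h : (R × J) →ₗ[R] (J ⊔ Ideal.span {x} : Ideal R) :=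
    LinearMap.codRestrict (J ⊔ Ideal.span {x} : Ideal R)
      (LinearMap.coprod (x • LinearMap.id) (Submodule.subtype J)) (by
        rintro ⟨a, b⟩
        refine Submodule.add_mem _ ?_ ?_
        · apply Ideal.mem_sup_right
          simpa using Ideal.mul_mem_right _ _ (Ideal.mem_span_singleton_self x)
        · exact Ideal.mem_sup_left b.2)
  have hs : Function.Surjective h := by
    rintro ⟨y, hy⟩
    obtain ⟨b, hb, c, hc, rfl⟩ := Submodule.mem_sup.1 hy
    obtain ⟨a, rfl⟩ := Ideal.mem_span_singleton'.1 hc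
    refine ⟨(a, ⟨b, hb⟩), Subtype.ext ?_⟩
    simp [h]; ring
  obtain ⟨g, hg⟩ := Module.projective_lifting_property h (f.codRestrict _ hf) hs
  refine ⟨LinearMap.fst R R J ∘ₗ g, fun z => ?_⟩
  have := congrArg Subtype.val (LinearMap.congr_fun hg z)
  simp [h] at this
  rw [← this]
  simp

/-- cocycle modulo `J` -/
def Coc (Y : ChainComplex (ModuleCat.{0} R) ℕ) (J : Ideal R) (i : ℕ) (f : Y.X i →ₗ[R] R) : Prop :=
  ∀ z, f ((Y.d (i+1) i).hom z) ∈ J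

/-- coboundary modulo `J` -/
def Cob (Y : ChainComplex (ModuleCat.{0} R) ℕ) (J : Ideal R) (i : ℕ) (f : Y.X i →ₗ[R] R) : Prop :=
  ∃ g : Y.X (i-1) →ₗ[R] R, ∀ z, f z - g ((Y.d i (i-1)).hom z) ∈ J

variable (Y : ChainComplex (ModuleCat.{0} R) ℕ)

lemma d_d (i j k : ℕ) (z) : (Y.d j k).hom ((Y.d i j).hom z) = 0 := by
  have := Y.d_comp_d i j k
  exact congrArg (fun t => t.hom z) this

lemma d_zero (j : ℕ) (z) : (Y.d 0 j).hom z = 0 := by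
  have := Y.shape 0 j (by simp)
  exact congrArg (fun t => t.hom z) this

variable (I : Ideal R)

/-- powers of elements of `I` are null-homotopic on cocycles -/
def Nilp : Prop := ∀ x ∈ I, ∃ N : ℕ, ∀ (J : Ideal R) i (f : Y.X i →ₗ[R] R), Coc Y J i f →
    Cob Y J i (x ^ N • f)

variable {Y I}

lemma vanish [hP : ∀ i, Module.Projective R (Y.X i)] (hN : Nilp Y I) {J J' : Ideal R} {r : ℕ} (h : RegSeq I J r J') :
    ∀ i < r, ∀ f : Y.X i →ₗ[R] R, Coc Y J i f → Cob Y J i f := by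
  induction h with
  | nil J => intro i hi; omega
  | cons J J' x r hx hreg h ih =>
    intro i hi f hf
    have key : ∀ f : Y.X i →ₗ[R] R, Coc Y J i f → Cob Y J i (x • f) → Cob Y J i f := by
      intro f hf ⟨χ, hχ⟩
      rcases i with _ | i
      · refine ⟨0, fun z => ?_⟩
        have := hχ z
        rw [d_zero] at this
        simp at this
        simpa using hreg _ this
      · change Y.X i →ₗ[R] R at χ
        have hχ' : ∀ z, x * f z - χ ((Y.d (i+1) i).hom z) ∈ J := hχ
        have hc : Coc Y (J ⊔ Ideal.span {x}) i χ := by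
          intro z
          have h1 := hχ' z
          have : χ ((Y.d (i+1) i).hom z) = x * f z - (x * f z - χ ((Y.d (i+1) i).hom z)) := by ring
          rw [this]
          refine Ideal.sub_mem _ (Ideal.mem_sup_right ?_) (Ideal.mem_sup_left h1)
          exact Ideal.mul_mem_right _ _ (Ideal.mem_span_singleton_self x)
        obtain ⟨θ, hθ⟩ := ih i (by omega) χ hc
        obtain ⟨η, hη⟩ := split_map J x (χ - θ ∘ₗ (Y.d i (i-1)).hom) (by simpa using hθ)
        refine ⟨η, fun z => hreg _ ?_⟩
        have h1 := hη ((Y.d (i+1) i).hom z)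
        simp only [LinearMap.sub_apply, LinearMap.comp_apply] at h1
        rw [d_d] at h1
        have := Ideal.add_mem _ h1 (hχ' z)
        convert this using 1
        simp
        ring
    obtain ⟨N, hN⟩ := hN x hx
    have := hN J i f hf
    clear hN
    induction N with
    | zero => simpa using this
    | succ N ihN =>
      apply ihN
      apply key
      · intro z
        simpa using Ideal.mul_mem_left _ _ (hf z)
      · rwa [smul_smul, ← pow_succ']

lemma lift_class {X : ChainComplex (ModuleCat.{0} R) ℕ} [∀ i, Module.Projective R (X.X i)]
    {J J' : Ideal R} {r : ℕ} (h : RegSeq I J r J') (f : X.X 0 →ₗ[R] R) (hf : Coc X J' 0 f) :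
    ∃ ψ : X.X r →ₗ[R] R, Coc X J r ψ ∧
      ∀ (Y : ChainComplex (ModuleCat.{0} R) ℕ) [∀ i, Module.Projective R (Y.X i)],
      Nilp Y I → ∀ (g : Y ⟶ X) (s : R), Cob Y J r (s • (ψ ∘ₗ (g.f r).hom)) →
        ∀ z, s * f ((g.f 0).hom z) ∈ J' := by
  induction h with
  | nil J =>
    refine ⟨f, hf, fun Y _ _ g s ⟨χ, hχ⟩ z => ?_⟩
    have := hχ z
    rw [d_zero] at this
    simpa using this
  | cons J J' x r hx hreg h ih =>
    obtain ⟨φ, hφ, H⟩ := ih hf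
    obtain ⟨ψ, hψ⟩ := split_map J x (φ ∘ₗ (X.d (r+1) r).hom) hφ
    refine ⟨ψ, fun z => hreg _ ?_, ?_⟩
    · have := hψ ((X.d (r+1+1) (r+1)).hom z)
      simp only [LinearMap.comp_apply] at this
      rw [d_d] at this
      simpa using this
    · rintro Y _ hY g s ⟨χ, hχ⟩
      apply H Y hY g s
      change Y.X r →ₗ[R] R at χ
      have hχ' : ∀ z, s * ψ ((g.f (r+1)).hom z) - χ ((Y.d (r+1) r).hom z) ∈ J := hχ
      obtain ⟨θ, hθ⟩ := vanish hY (RegSeq.cons J J' x r hx hreg h) r (by omega)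
        (s • (φ ∘ₗ (g.f r).hom) - x • χ) (by
          intro z
          have e : (g.f r).hom ((Y.d (r+1) r).hom z) = (X.d (r+1) r).hom ((g.f (r+1)).hom z) :=
            congrArg (fun t => t.hom z) (g.comm (r+1) r).symm
          have h1 := Ideal.mul_mem_left _ s (hψ ((g.f (r+1)).hom z))
          have h2 := Ideal.mul_mem_left _ x (hχ' z)
          have h3 := Ideal.add_mem _ h1 h2
          convert h3 using 1
          simp [e]
          ring)
      refine ⟨θ, fun z => ?_⟩
      have h1 := Ideal.mem_sup_left (T := Ideal.span {x}) (hθ z)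
      have h2 : x * χ z ∈ J ⊔ Ideal.span {x} :=
        Ideal.mem_sup_right (Ideal.mul_mem_right _ _ (Ideal.mem_span_singleton_self x))
      convert Ideal.add_mem _ h1 h2 using 1
      simp
      ring

end cx
end LC
namespace LC
section ext
variable {R : Type} [CommRing R]

/-- The (opposite of the) functor `Hom(-, R)`. -/
abbrev FY (R : Type) [CommRing R] : ModuleCat.{0} R ⥤ (ModuleCat.{0} R)ᵒᵖ :=
  ((linearYoneda R (ModuleCat.{0} R)).obj (ModuleCat.of R R)).rightOp

/-- induced map -/
noncomputable abbrev yMap {X Y : ChainComplex (ModuleCat.{0} R) ℕ} (g : X ⟶ Y) :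
    Y.linearYonedaObj R (ModuleCat.of R R) ⟶ X.linearYonedaObj R (ModuleCat.of R R) :=
  (HomologicalComplex.unopFunctor (ModuleCat.{0} R) (ComplexShape.down ℕ)).map
    (((FY R).mapHomologicalComplex _).map g).op

lemma homologyUnop_nat' {K L : HomologicalComplex (ModuleCat.{0} R)ᵒᵖ (ComplexShape.down ℕ)}
   (φ : K ⟶ L) (i : ℕ) :
    (L.homologyUnop i).hom ≫ (HomologicalComplex.homologyMap φ i).unop =
    HomologicalComplex.homologyMap
      ((HomologicalComplex.unopFunctor (ModuleCat.{0} R) (ComplexShape.down ℕ)).map φ.op) i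
       ≫ (K.homologyUnop i).hom := by
  have := HomologicalComplex.homologyOp_hom_naturality
     ((HomologicalComplex.unopFunctor (ModuleCat.{0} R) (ComplexShape.down ℕ)).map φ.op) i
  exact congrArg Quiver.Hom.unop this

lemma inv_sq {C : Type*} [Category C] {a b a' b' : C} {A : a ≅ b} {B : a' ≅ b'} {f : b ⟶ b'}
    {g : a ⟶ a'} (h : A.hom ≫ f = g ≫ B.hom) : f ≫ B.inv = A.inv ≫ g := by
  rw [Iso.comp_inv_eq, Category.assoc, Iso.eq_inv_comp, h]

lemma homologyUnop_nat {K L : HomologicalComplex (ModuleCat.{0} R)ᵒᵖ (ComplexShape.down ℕ)}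
   (φ : K ⟶ L) (i : ℕ) :
   (HomologicalComplex.homologyMap φ i).unop ≫ (K.homologyUnop i).inv =
    (L.homologyUnop i).inv ≫ HomologicalComplex.homologyMap
      ((HomologicalComplex.unopFunctor (ModuleCat.{0} R) (ComplexShape.down ℕ)).map φ.op) i := by
  exact inv_sq (homologyUnop_nat' φ i)

lemma sq_comp {C : Type*} [Category C] {a b c a' b' c' : C} {A : a ⟶ a'} {p : a' ⟶ b'} {p' : a ⟶ b}
    {B : b ⟶ b'} {q : b' ⟶ c'} {q' : b ⟶ c} {r : c ⟶ c'} (h : A ≫ p = p' ≫ B)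
    (h2 : B ≫ q = q' ≫ r) : A ≫ (p ≫ q) = (p' ≫ q') ≫ r := by
  rw [reassoc_of% h, h2, Category.assoc]

lemma isoExt_nat {X Y : ModuleCat.{0} R} (f : X ⟶ Y) (P : ProjectiveResolution X)
    (Q : ProjectiveResolution Y) (φ : P.complex ⟶ Q.complex)
    (comm : φ.f 0 ≫ Q.π.f 0 = P.π.f 0 ≫ f) (n : ℕ) :
    (((Ext R (ModuleCat.{0} R) n).map f.op).app (ModuleCat.of R R)) ≫ (P.isoExt n _).hom =
     (Q.isoExt n _).hom ≫ HomologicalComplex.homologyMap (yMap φ) n := by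
  have h := ProjectiveResolution.isoLeftDerivedObj_inv_naturality f P Q φ comm (FY R) n
  have h' := congrArg Quiver.Hom.unop h
  have h2 := homologyUnop_nat (((FY R).mapHomologicalComplex _).map φ) n
  rw [unop_comp, unop_comp] at h'
  exact sq_comp h' h2

lemma isoExt_nat_apply {X Y : ModuleCat.{0} R} (f : X ⟶ Y) (P : ProjectiveResolution X)
    (Q : ProjectiveResolution Y) (φ : P.complex ⟶ Q.complex)
    (comm : φ.f 0 ≫ Q.π.f 0 = P.π.f 0 ≫ f) (n : ℕ) (e) :
    (P.isoExt n _).hom.hom ((((Ext R (ModuleCat.{0} R) n).map f.op).app (ModuleCat.of R R)).hom e) =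
     (HomologicalComplex.homologyMap (yMap φ) n).hom ((Q.isoExt n _).hom.hom e) := 
  congrArg (fun t => t.hom e) (isoExt_nat f P Q φ comm n)

/-- the class of a cocycle: `IsCls P n ψ e` says that `e` is the class of `ψ`. -/
def IsCls {N : ModuleCat.{0} R} (P : ProjectiveResolution N) (n : ℕ) (ψ : P.complex.X n →ₗ[R] R)
    (e : ((Ext R (ModuleCat.{0} R) n).obj (op N)).obj (ModuleCat.of R R)) : Prop :=
  ∃ c : (P.complex.linearYonedaObj R (ModuleCat.of R R)).cycles n,
    ((P.complex.linearYonedaObj R (ModuleCat.of R R)).iCycles n).hom c = ModuleCat.ofHom ψ ∧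
    ((P.complex.linearYonedaObj R (ModuleCat.of R R)).homologyπ n).hom c = (P.isoExt n _).hom.hom e

lemma IsCls.smul {N : ModuleCat.{0} R} {P : ProjectiveResolution N} {n : ℕ}
    {ψ : P.complex.X n →ₗ[R] R} {e} (h : IsCls P n ψ e) (s : R) : IsCls P n (s • ψ) (s • e) := by
  obtain ⟨c, h1, h2⟩ := h
  refine ⟨s • c, ?_, ?_⟩
  · rw [map_smul, h1]; rfl
  · rw [map_smul, h2, map_smul]

lemma IsCls.map {X Y : ModuleCat.{0} R} {f : X ⟶ Y} {P : ProjectiveResolution X}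
    {Q : ProjectiveResolution Y} {φ : P.complex ⟶ Q.complex}
    (comm : φ.f 0 ≫ Q.π.f 0 = P.π.f 0 ≫ f) {n : ℕ} {ψ} {e} (h : IsCls Q n ψ e) :
    IsCls P n (ψ ∘ₗ (φ.f n).hom)
      ((((Ext R (ModuleCat.{0} R) n).map f.op).app (ModuleCat.of R R)).hom e) := by
  obtain ⟨c, h1, h2⟩ := h
  refine ⟨(HomologicalComplex.cyclesMap (yMap φ) n).hom c, ?_, ?_⟩
  · have := congrArg (fun t => t.hom c) (HomologicalComplex.cyclesMap_i (yMap φ) n)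
    refine this.trans ?_
    refine (congrArg ((yMap φ).f n).hom h1).trans ?_
    rfl
  · rw [isoExt_nat_apply f P Q φ comm n e, ← h2]
    exact (congrArg (fun t => t.hom c) (HomologicalComplex.homologyπ_naturality (yMap φ) n)).symm

lemma exists_isCls {N : ModuleCat.{0} R} (P : ProjectiveResolution N) (n : ℕ)
    (ψ : P.complex.X n →ₗ[R] R) (h : ∀ z, ψ ((P.complex.d (n+1) n).hom z) = 0) :
    ∃ e, IsCls P n ψ e := by
  let K := P.complex.linearYonedaObj R (ModuleCat.of R R)
  let l : ModuleCat.of R R ⟶ K.X n := ModuleCat.ofHom (LinearMap.toSpanSingleton R _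
    (ModuleCat.ofHom ψ : P.complex.X n ⟶ ModuleCat.of R R))
  have hl : l ≫ K.d n (n+1) = 0 := by
    apply ModuleCat.hom_ext
    apply LinearMap.ext_ring
    have : (K.d n (n+1)).hom (ModuleCat.ofHom ψ : P.complex.X n ⟶ ModuleCat.of R R) = 
       P.complex.d (n+1) n ≫ (ModuleCat.ofHom ψ : P.complex.X n ⟶ ModuleCat.of R R) := rfl
    have h2 : l.hom 1 = (ModuleCat.ofHom ψ : P.complex.X n ⟶ ModuleCat.of R R) :=
      one_smul R (ModuleCat.ofHom ψ : P.complex.X n ⟶ ModuleCat.of R R)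
    refine (congrArg (K.d n (n+1)).hom h2).trans (this.trans ?_)
    apply ModuleCat.hom_ext
    apply LinearMap.ext
    exact h
  refine ⟨(P.isoExt n _).inv.hom ((K.homologyπ n).hom ((K.liftCycles l (n+1) (by simp) hl).hom 1)),
    (K.liftCycles l (n+1) (by simp) hl).hom 1, ?_, ?_⟩
  · have := congrArg (fun t => t.hom 1) (K.liftCycles_i l (n+1) (by simp) hl)
    exact this.trans (one_smul R (ModuleCat.ofHom ψ : P.complex.X n ⟶ ModuleCat.of R R))
  · simp [K]

lemma exists_cocycle {N : ModuleCat.{0} R} (P : ProjectiveResolution N) (n : ℕ)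
    (e : ((Ext R (ModuleCat.{0} R) n).obj (op N)).obj (ModuleCat.of R R)) :
    ∃ ψ : P.complex.X n →ₗ[R] R, IsCls P n ψ e := by
  let K := P.complex.linearYonedaObj R (ModuleCat.of R R)
  obtain ⟨c, hc⟩ := (ModuleCat.epi_iff_surjective (K.homologyπ n)).1 inferInstance
    ((P.isoExt n _).hom.hom e)
  refine ⟨((K.iCycles n).hom c : P.complex.X n ⟶ ModuleCat.of R R).hom, c, ?_, hc⟩
  rfl

lemma IsCls.cocycle {N : ModuleCat.{0} R} {P : ProjectiveResolution N} {n : ℕ}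
    {ψ : P.complex.X n →ₗ[R] R} {e} (h : IsCls P n ψ e) (z) :
    ψ ((P.complex.d (n+1) n).hom z) = 0 := by
  let K := P.complex.linearYonedaObj R (ModuleCat.of R R)
  obtain ⟨c, h1, h2⟩ := h
  have h3 : (K.d n (n+1)).hom ((K.iCycles n).hom c) = 0 :=
    congrArg (fun t => t.hom c) (K.iCycles_d n (n+1))
  have h4 : P.complex.d (n+1) n ≫ (ModuleCat.ofHom ψ : P.complex.X n ⟶ ModuleCat.of R R) = 0 :=
    (congrArg (K.d n (n+1)).hom h1).symm.trans h3
  exact congrArg (fun t => t.hom z) h4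

lemma IsCls.cob {N : ModuleCat.{0} R} {P : ProjectiveResolution N} {n : ℕ}
    {ψ : P.complex.X n →ₗ[R] R} (h : IsCls P n ψ 0) :
    ∃ g : P.complex.X (n-1) →ₗ[R] R, ψ = g ∘ₗ (P.complex.d n (n-1)).hom := by
  let K := P.complex.linearYonedaObj R (ModuleCat.of R R)
  obtain ⟨c, h1, h2⟩ := h
  rw [map_zero] at h2
  have h3 : (K.pOpcycles n).hom (ModuleCat.ofHom ψ : P.complex.X n ⟶ ModuleCat.of R R) = 0 := by
    have h5 := congrArg (fun t => t.hom c) (K.homology_π_ι n)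
    refine (congrArg (K.pOpcycles n).hom h1).symm.trans (h5.symm.trans ?_)
    refine (congrArg (K.homologyι n).hom h2).trans (map_zero _)
  have h4 := ((K.sc n).moduleCat_pOpcycles_eq_zero_iff _).1 h3
  obtain ⟨χ, hχ⟩ := h4
  have key : ∀ j, j = n - 1 → ∀ χ : K.X j, (K.d j n).hom χ = (ModuleCat.ofHom ψ : P.complex.X n ⟶ ModuleCat.of R R) →
      ∃ g : P.complex.X (n-1) →ₗ[R] R, ψ = g ∘ₗ (P.complex.d n (n-1)).hom := by
    rintro j rfl χ hχ
    refine ⟨(show P.complex.X (n-1) ⟶ ModuleCat.of R R from χ).hom, ?_⟩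
    exact (congrArg (fun t : P.complex.X n ⟶ ModuleCat.of R R => t.hom) hχ).symm
  refine key _ ?_ χ hχ
  cases n with
  | zero => exact CochainComplex.prev_nat_zero
  | succ n => exact CochainComplex.prev_nat_succ n

end ext
end LC

namespace LC
section nil
variable {R : Type} [CommRing R]

instance {N : ModuleCat.{0} R} (P : ProjectiveResolution N) (i : ℕ) :
    Module.Projective R (P.complex.X i) :=
  (IsProjective.iff_projective _).2 (P.projective i)

lemma smul_comm_pi {N : ModuleCat.{0} R} (P : ProjectiveResolution N) (a : R)
    (ha : ∀ z : N, a • z = 0) : (a • 𝟙 P.complex) ≫ P.π = 0 := by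
  have h0 : a • 𝟙 N = 0 := by
    apply ModuleCat.hom_ext
    apply LinearMap.ext
    exact ha
  apply HomologicalComplex.hom_ext
  intro i
  have h2 : (((a • 𝟙 P.complex) ≫ P.π).f i) = a • P.π.f i := by simp
  rw [h2]
  by_cases hi : i = 0
  · subst hi
    apply ModuleCat.hom_ext
    apply LinearMap.ext
    intro z
    exact ha (((P.π.f 0)).hom z)
  · have := ((HomologicalComplex.isZero_single_obj_X (ComplexShape.down ℕ) 0 N i hi)).eq_zero_of_tgt (a • P.π.f i)
    rw [this]; rfl

lemma smul_cob {N : ModuleCat.{0} R} (P : ProjectiveResolution N) (a : R)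
    (ha : ∀ z : N, a • z = 0) (J : Ideal R) (i : ℕ) (f : P.complex.X i →ₗ[R] R)
    (hf : Coc P.complex J i f) : Cob P.complex J i (a • f) := by
  have H := ProjectiveResolution.liftHomotopyZero _ (smul_comm_pi P a ha)
  refine ⟨f ∘ₗ (H.hom (i-1) i).hom, fun z => ?_⟩
  have h := H.comm i
  rw [dNext_nat, prevD_eq (w := show (ComplexShape.down ℕ).Rel (i+1) i by simp)] at h
  have h2 := congrArg (fun t => t.hom z) h
  have h3 : a • z = (H.hom (i-1) i).hom ((P.complex.d i (i-1)).hom z) + 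
    (P.complex.d (i+1) i).hom ((H.hom i (i+1)).hom z) + 0 := h2
  have h4 : (a • f) z = f (a • z) := by simp
  rw [h4, h3, map_add, map_add]
  simp only [LinearMap.comp_apply, map_zero, add_zero, add_sub_cancel_left]
  exact hf _

lemma nilp_res {N : ModuleCat.{0} R} (P : ProjectiveResolution N) (I : Ideal R) (t : ℕ)
    (h : ∀ a ∈ I ^ t, ∀ z : N, a • z = 0) : Nilp P.complex I := by
  intro x hx
  exact ⟨t, fun J i f hf => smul_cob P _ (h _ (Ideal.pow_mem_pow hx t)) J i f hf⟩

lemma IsCls.eq_zero {N : ModuleCat.{0} R} {P : ProjectiveResolution N} {n : ℕ}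
    {g : P.complex.X (n-1) →ₗ[R] R} {e} (h : IsCls P n (g ∘ₗ (P.complex.d n (n-1)).hom) e) :
    e = 0 := by
  let K := P.complex.linearYonedaObj R (ModuleCat.of R R)
  obtain ⟨c, h1, h2⟩ := h
  have h3 : (K.iCycles n).hom ((K.toCycles (n-1) n).hom (ModuleCat.ofHom g : P.complex.X (n-1) ⟶ ModuleCat.of R R))
     = (K.iCycles n).hom c :=
   (congrArg (fun t => t.hom (ModuleCat.ofHom g : P.complex.X (n-1) ⟶ ModuleCat.of R R)) (K.toCycles_i (n-1) n)).trans h1.symm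
  have h4 := (ModuleCat.mono_iff_injective (K.iCycles n)).1 inferInstance h3
  have h5 : (K.homologyπ n).hom c = 0 := by
    rw [← h4]
    exact (congrArg (fun t => t.hom (ModuleCat.ofHom g : P.complex.X (n-1) ⟶ ModuleCat.of R R)) (K.toCycles_comp_homologyπ (n-1) n))
  have h6 : (P.isoExt n (ModuleCat.of R R)).hom.hom e = 0 := h2.symm.trans h5
  have h7 := congrArg (P.isoExt n (ModuleCat.of R R)).inv.hom h6
  simpa using h7

lemma smul_ext {N : ModuleCat.{0} R} (n : ℕ) (a : R) (ha : ∀ z : N, a • z = 0)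
    (e : ((Ext R (ModuleCat.{0} R) n).obj (op N)).obj (ModuleCat.of R R)) : a • e = 0 := by
  let P := ProjectiveResolution.of N
  obtain ⟨ψ, hψ⟩ := exists_cocycle P n e
  obtain ⟨g, hg⟩ := smul_cob P a ha ⊥ n ψ (fun z => by rw [hψ.cocycle z]; exact zero_mem _)
  have : a • ψ = g ∘ₗ (P.complex.d n (n-1)).hom := by
    ext z
    exact sub_eq_zero.1 ((Ideal.mem_bot).1 (hg z))
  have h2 := hψ.smul a
  rw [this] at h2
  exact h2.eq_zero
end nil
end LC

namespace LC
open CategoryTheory.Limits localCohomology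
section col
variable {R : Type} [CommRing R]

/-- The stage `t` -/
abbrev Stage (I : Ideal R) (t : ℕ) : ModuleCat.{0} R :=
  (ringModIdeals (idealPowersDiagram I)).obj (op t)

/-- transition -/
abbrev trans (I : Ideal R) {t u : ℕ} (h : t ≤ u) : Stage I u ⟶ Stage I t :=
  (ringModIdeals (idealPowersDiagram I)).map (homOfLE h).op

/-- Ext of a stage -/
noncomputable abbrev ES (I : Ideal R) (n t : ℕ) : ModuleCat.{0} R :=
   ((Ext R (ModuleCat.{0} R) n).obj (op (Stage I t))).obj (ModuleCat.of R R)

/-- the canonical map to the colimit -/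
noncomputable def toLC (I : Ideal R) (n t : ℕ) : ES I n t ⟶ (localCohomology I n).obj (ModuleCat.of R R) :=
   haveI := hasColimitDiagram.{0,0} (idealPowersDiagram I) n
   (colimit.ι (diagram (idealPowersDiagram I) n) (op (op t))).app (ModuleCat.of R R)

/-- evaluated colimit -/
noncomputable def isCol (I : Ideal R) (n : ℕ) :
    haveI := hasColimitDiagram.{0,0} (idealPowersDiagram I) n
    IsColimit (((evaluation (ModuleCat.{0} R) (ModuleCat.{0} R)).obj (ModuleCat.of R R)).mapCocone
       (colimit.cocone (diagram (idealPowersDiagram I) n))) :=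
    haveI := hasColimitDiagram.{0,0} (idealPowersDiagram I) n
    isColimitOfPreserves _ (colimit.isColimit _)

lemma toLC_surj (I : Ideal R) (n : ℕ) (x : (localCohomology I n).obj (ModuleCat.of R R)) :
    ∃ t e, (toLC I n t).hom e = x := by
  obtain ⟨j, y, hy⟩ := Concrete.isColimit_exists_rep _ (isCol I n) x
  exact ⟨j.unop.unop, y, hy⟩

lemma toLC_zero (I : Ideal R) (n t : ℕ) (e : ES I n t) (h : (toLC I n t).hom e = 0) :
    ∃ u, ∃ htu : t ≤ u, 
      (((Ext R (ModuleCat.{0} R) n).map (trans I htu).op).app (ModuleCat.of R R)).hom e = 0 := by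
  have h2 : (toLC I n t).hom e = (toLC I n t).hom 0 := by rw [h, map_zero]
  obtain ⟨k, f, g, hfg⟩ := Concrete.isColimit_exists_of_rep_eq.{0} _ (isCol I n) e (0 : ES I n t) h2
  refine ⟨k.unop.unop, leOfHom f.unop.unop, ?_⟩
  refine hfg.trans ?_
  exact map_zero (((diagram (idealPowersDiagram I) n).map g).app (ModuleCat.of R R)).hom
end col
end LC

namespace LC
open CategoryTheory.Limits localCohomology
section supp
variable {R : Type} [CommRing R]

lemma stage_smul (I : Ideal R) (t : ℕ) (a : R) (ha : a ∈ I ^ t) (z : Stage I t) : a • z = 0 := by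
  obtain ⟨z, rfl⟩ := Ideal.Quotient.mk_surjective (I := I ^ t) z
  exact Ideal.Quotient.eq_zero_iff_mem.2 (Ideal.mul_mem_right z _ ha)

lemma supp_le (I : Ideal R) (n : ℕ) (q : PrimeSpectrum R)
    (hq : q ∈ Module.support R ((localCohomology I n).obj (ModuleCat.of R R))) : I ≤ q.asIdeal := by
  rw [Module.mem_support_iff_exists_annihilator] at hq
  obtain ⟨m, hm⟩ := hq
  obtain ⟨t, e, rfl⟩ := toLC_surj I n m
  have : I ^ t ≤ q.asIdeal := by
    refine le_trans ?_ hm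
    intro a ha
    rw [Submodule.mem_annihilator_span_singleton, ← map_smul, 
      smul_ext n a (stage_smul I t a ha) e, map_zero]
  exact q.isPrime.le_of_pow_le this

lemma mem_supp (I : Ideal R) (n : ℕ) (J' : Ideal R) (hJ : RegSeq I ⊥ n J') (p : PrimeSpectrum R)
    (hIp : I ≤ p.asIdeal) (y : R) (hy : ∀ r, r * y ∈ J' ↔ r ∈ p.asIdeal) :
    p ∈ Module.support R ((localCohomology I n).obj (ModuleCat.of R R)) := by
  let P (t : ℕ) := ProjectiveResolution.of (Stage I t)
  have hp : ∀ t, Function.Surjective ((P t).π.f 0).hom := fun t =>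
    (ModuleCat.epi_iff_surjective _).1 inferInstance
  -- the map of quotients
  have hle : I ^ 1 ≤ LinearMap.ker (J'.mkQ ∘ₗ LinearMap.toSpanSingleton R R y) := by
    intro a ha
    rw [pow_one] at ha
    simp only [LinearMap.mem_ker, LinearMap.comp_apply, LinearMap.toSpanSingleton_apply]
    refine (Submodule.Quotient.mk_eq_zero _).2 ?_
    exact (hy a).2 (hIp ha)
  let β : Stage I 1 →ₗ[R] R ⧸ J' := Submodule.liftQ (I ^ 1) (J'.mkQ ∘ₗ LinearMap.toSpanSingleton R R y) hle
  obtain ⟨f, hf⟩ := Module.projective_lifting_property J'.mkQ (β ∘ₗ ((P 1).π.f 0).hom)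
    (Submodule.mkQ_surjective _)
  have hf' : ∀ z, J'.mkQ (f z) = β (((P 1).π.f 0).hom z) := fun z => congrArg (fun t => t z) hf
  have hfc : Coc (P 1).complex J' 0 f := by
    intro z
    refine (Submodule.Quotient.mk_eq_zero _).1 ?_
    refine (hf' _).trans ?_
    have h1 := congrArg (fun t => t.hom z) ((P 1).complex_d_comp_π_f_zero)
    exact (congrArg β h1).trans (map_zero _)
  obtain ⟨ψ, hψ, H⟩ := lift_class (X := (P 1).complex) hJ f hfc
  obtain ⟨e, he⟩ := exists_isCls (P 1) n ψ (fun z => (Ideal.mem_bot).1 (hψ z))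
  rw [Module.mem_support_iff_exists_annihilator]
  refine ⟨(toLC I n 1).hom e, fun s hs => ?_⟩
  rw [Submodule.mem_annihilator_span_singleton, ← map_smul] at hs
  obtain ⟨u, hu, h0⟩ := toLC_zero I n 1 _ hs
  let g := ProjectiveResolution.lift (trans I hu) (P u) (P 1)
  have comm : g.f 0 ≫ (P 1).π.f 0 = (P u).π.f 0 ≫ trans I hu :=
    ProjectiveResolution.lift_commutes_zero _ _ _
  have h1 := (he.smul s).map comm
  rw [h0] at h1
  obtain ⟨g', hg'⟩ := h1.cob
  have h2 := H (P u).complex (nilp_res (P u) I u (stage_smul I u)) g s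
    ⟨g', fun z => by
      have := congrArg (fun t => t z) hg'
      refine (Ideal.mem_bot).2 (sub_eq_zero.2 this)⟩
  obtain ⟨z, hz⟩ := hp u (Ideal.Quotient.mk (I ^ u) 1)
  have h3 := h2 z
  rw [← hy]
  have h4 : J'.mkQ (f ((g.f 0).hom z)) = J'.mkQ y := by
    rw [hf']
    have h5 : ((P 1).π.f 0).hom ((g.f 0).hom z) = (trans I hu).hom (((P u).π.f 0).hom z) :=
      congrArg (fun t => t.hom z) comm
    rw [h5, hz]
    change J'.mkQ ((1 : R) • y) = _
    rw [one_smul]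
  have h6 : f ((g.f 0).hom z) - y ∈ J' := (Submodule.Quotient.eq _).1 h4
  have h7 := J'.mul_mem_left s h6
  have := J'.sub_mem h3 h7
  rwa [show s * f ((g.f 0).hom z) - s * (f ((g.f 0).hom z) - y) = s * y by ring] at this
end supp
end LC

namespace LC
section ca
variable {R : Type} [CommRing R]

lemma kd_iff {α : Type*} [PartialOrder α] (S : Set α) (hS : IsUpperSet S) (k : ℕ) :
    (k : WithBot ℕ∞) ≤ Order.krullDim S ↔ ∃ q ∈ S, (k : ℕ∞) ≤ Order.coheight q := by
  rw [Order.le_krullDim_iff]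
  constructor
  · rintro ⟨l, hl⟩
    refine ⟨l.head.1, l.head.2, ?_⟩
    have := Order.length_le_coheight (p := l.map Subtype.val (fun _ _ h => h)) (x := l.head.1) 
      (by exact le_rfl)
    rw [← hl]
    exact this
  · rintro ⟨q, hq, h⟩
    obtain ⟨l, hl, hk⟩ := Order.exists_series_of_le_coheight q h
    have hmem : ∀ i, l i ∈ S := fun i => hS (by rw [← hl]; exact LTSeries.head_le _ i) hq
    exact ⟨⟨l.length, fun i => ⟨l i, hmem i⟩, fun i => l.step i⟩, hk⟩

lemma RegMod.swap {J : Ideal R} {x y : R} (hx : RegMod J x) (hy : RegMod (J ⊔ Ideal.span {x}) y) :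
    RegMod (J ⊔ Ideal.span {y}) x := by
  intro a ha
  obtain ⟨j, hj, z, hz, e⟩ := Submodule.mem_sup.1 ha
  obtain ⟨b, rfl⟩ := Ideal.mem_span_singleton'.1 hz
  have h1 : b ∈ J ⊔ Ideal.span {x} := by
    apply hy
    refine Submodule.mem_sup.2 ⟨-j, neg_mem hj, a * x, Ideal.mem_span_singleton'.2 ⟨a, rfl⟩, ?_⟩
    linear_combination -e
  obtain ⟨j', hj', z, hz, e'⟩ := Submodule.mem_sup.1 h1
  obtain ⟨c, rfl⟩ := Ideal.mem_span_singleton'.1 hz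
  have h2 : a - c * y ∈ J := by
    apply hx
    have : x * (a - c * y) = j + y * j' := by linear_combination -e - y * e'
    rw [this]
    exact add_mem hj (J.mul_mem_left _ hj')
  refine Submodule.mem_sup.2 ⟨_, h2, c * y, Ideal.mem_span_singleton'.2 ⟨c, rfl⟩, by ring⟩

/-- associated prime of `R / J` -/
def AssP (J q : Ideal R) : Prop := q.IsPrime ∧ ∃ a, ∀ r, r * a ∈ J ↔ r ∈ q

lemma assP_iff [IsNoetherianRing R] (J q : Ideal R) : AssP J q ↔ q ∈ associatedPrimes R (R ⧸ J) := by
  rw [AssociatedPrimes.mem_iff, isAssociatedPrime_iff]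
  refine and_congr_right fun _ => ?_
  rw [(Ideal.Quotient.mk_surjective (I := J)).exists]
  refine exists_congr fun a => ?_
  rw [SetLike.ext_iff]
  refine forall_congr' fun r => ?_
  rw [Submodule.mem_colon_singleton, Submodule.mem_bot]
  have : r • (Ideal.Quotient.mk J a) = 0 ↔ r * a ∈ J := by
    rw [← Ideal.Quotient.eq_zero_iff_mem]; rfl
  rw [this]
  tauto

lemma avoid [IsNoetherianRing R] (I : Ideal R) (S : Set (Ideal R)) (hS : S.Finite)
    (h : ∀ J ∈ S, ∀ q, AssP J q → ¬ I ≤ q) : ∃ x ∈ I, ∀ J ∈ S, RegMod J x := by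
  have hfin : (⋃ J ∈ S, associatedPrimes R (R ⧸ J)).Finite :=
    hS.biUnion fun J _ => associatedPrimes.finite R (R ⧸ J)
  by_contra! hcon
  have h1 : (I : Set R) ⊆ ⋃ q ∈ (⋃ J ∈ S, associatedPrimes R (R ⧸ J)), ((id q : Ideal R) : Set R) := by
    intro x hx
    obtain ⟨J, hJ, hx2⟩ := hcon x hx
    unfold RegMod at hx2
    push Not at hx2
    obtain ⟨a, ha, ha2⟩ := hx2
    have : x ∈ ⋃ p ∈ associatedPrimes R (R ⧸ J), (p : Set R) := by
      rw [biUnion_associatedPrimes_eq_zero_divisors]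
      refine ⟨Ideal.Quotient.mk J a, fun h => ha2 (Ideal.Quotient.eq_zero_iff_mem.1 h), ?_⟩
      exact Ideal.Quotient.eq_zero_iff_mem.2 ha
    simp only [Set.mem_iUnion] at this ⊢
    obtain ⟨q, hq, hxq⟩ := this
    exact ⟨q, ⟨J, hJ, hq⟩, hxq⟩
  rw [Ideal.subset_union_prime_finite hfin ⊤ ⊤] at h1
  · obtain ⟨q, hq, hIq⟩ := h1
    simp only [Set.mem_iUnion] at hq
    obtain ⟨J, hJ, hq⟩ := hq
    exact h J hJ q ((assP_iff J q).2 hq) hIq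
  · intro q hq _ _
    simp only [Set.mem_iUnion] at hq
    obtain ⟨J, hJ, hq⟩ := hq
    exact hq.1

variable [IsLocalRing R]

open IsLocalRing

/-- no socle -/
def SF (J : Ideal R) : Prop := ∀ a, (∀ r ∈ maximalIdeal R, r * a ∈ J) → a ∈ J

lemma RegMod.sf {J : Ideal R} {x : R} (h : RegMod J x) (hx : x ∈ maximalIdeal R) : SF J :=
  fun a ha => h a (ha x hx)

lemma SF.not_le {J q : Ideal R} (h : SF J) (hq : AssP J q) : ¬ maximalIdeal R ≤ q := by
  intro hle
  obtain ⟨hp, a, ha⟩ := hq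
  have h1 : a ∈ J := h a fun r hr => (ha r).2 (hle hr)
  exact hp.ne_top ((Ideal.eq_top_iff_one _).2 ((ha 1).1 (by simpa using h1)))

lemma SF.transfer {J : Ideal R} {x y : R} (hx : RegMod J x) (hy : RegMod J y) 
    (hym : y ∈ maximalIdeal R)
    (h : SF (J ⊔ Ideal.span {y})) : SF (J ⊔ Ideal.span {x}) := by
  intro a ha
  obtain ⟨j, hj, z, hz, e⟩ := Submodule.mem_sup.1 (ha y hym)
  obtain ⟨a', rfl⟩ := Ideal.mem_span_singleton'.1 hz
  have h1 : a' ∈ J ⊔ Ideal.span {y} := by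
    apply h
    intro r hr
    obtain ⟨j2, hj2, z, hz, e2⟩ := Submodule.mem_sup.1 (ha r hr)
    obtain ⟨b, rfl⟩ := Ideal.mem_span_singleton'.1 hz
    have h2 : r * a' - b * y ∈ J := by
      apply hx
      have : x * (r * a' - b * y) = y * j2 - r * j := by linear_combination r * e - y * e2
      rw [this]
      exact sub_mem (J.mul_mem_left _ hj2) (J.mul_mem_left _ hj)
    exact Submodule.mem_sup.2 ⟨_, h2, b * y, Ideal.mem_span_singleton'.2 ⟨b, rfl⟩, by ring⟩
  obtain ⟨j3, hj3, z, hz, e3⟩ := Submodule.mem_sup.1 h1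
  obtain ⟨c, rfl⟩ := Ideal.mem_span_singleton'.1 hz
  have h2 : a - c * x ∈ J := by
    apply hy
    have : y * (a - c * x) = j + x * j3 := by linear_combination -e - x * e3
    rw [this]
    exact add_mem hj (J.mul_mem_left _ hj3)
  exact Submodule.mem_sup.2 ⟨_, h2, c * x, Ideal.mem_span_singleton'.2 ⟨c, rfl⟩, by ring⟩

/-- depth of `R / J` at least `k` -/
def Dp : ℕ → Ideal R → Prop
  | 0, J => J ≠ ⊤
  | k + 1, J => ∃ x ∈ maximalIdeal R, RegMod J x ∧ Dp k (J ⊔ Ideal.span {x})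

lemma Dp.ne_top : ∀ (k : ℕ) {J : Ideal R}, Dp k J → J ≠ ⊤
  | 0, _, h => h
  | k + 1, J, ⟨x, _, _, h⟩ => fun hJ => Dp.ne_top k h (by rw [hJ]; simp)

lemma Dp.sf {k : ℕ} {J : Ideal R} (h : Dp (k+1) J) : SF J := by
  obtain ⟨x, hx, hr, _⟩ := h
  exact hr.sf hx

lemma Dp.exchange [IsNoetherianRing R] : ∀ (k : ℕ) {J : Ideal R} {x : R}, Dp (k+1) J →
    x ∈ maximalIdeal R → RegMod J x → Dp k (J ⊔ Ideal.span {x})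
  | 0, J, x, h, hx, _ => by
    have h1 : J ≤ maximalIdeal R := le_maximalIdeal (h.ne_top)
    have h2 : J ⊔ Ideal.span {x} ≤ maximalIdeal R := 
      sup_le h1 ((Ideal.span_singleton_le_iff_mem _).2 hx)
    exact ne_top_of_le_ne_top (maximalIdeal.isMaximal R).ne_top h2
  | k+1, J, x, h, hx, hxr => by
    have hsJ := h.sf
    obtain ⟨y, hy, hyr, hD⟩ := h
    have hs1 := hD.sf
    have hs2 := SF.transfer hxr hyr hy hs1
    obtain ⟨z, hz, hzr⟩ := avoid (maximalIdeal R) {J, J ⊔ Ideal.span {x}, J ⊔ Ideal.span {y}}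
      (by simp) (by
        intro K hK q hq
        simp only [Set.mem_insert_iff, Set.mem_singleton_iff] at hK
        rcases hK with rfl | rfl | rfl
        · exact hsJ.not_le hq
        · exact hs2.not_le hq
        · exact hs1.not_le hq)
    have z1 := hzr J (by simp)
    have z2 := hzr (J ⊔ Ideal.span {x}) (by simp)
    have z3 := hzr (J ⊔ Ideal.span {y}) (by simp)
    have d1 := Dp.exchange k hD hz z3
    have d2 : Dp (k+1) (J ⊔ Ideal.span {z}) := 
      ⟨y, hy, hyr.swap z3, by rwa [sup_right_comm]⟩
    have d3 := Dp.exchange k d2 hx (hxr.swap z2)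
    exact ⟨z, hz, z2, by rwa [sup_right_comm]⟩

lemma nak [IsNoetherianRing R] {M J : Ideal R} {x : R} (hx : x ∈ maximalIdeal R)
    (h : ∀ b ∈ M, ∃ j ∈ J, ∃ c ∈ M, b = j + x * c) : M ≤ J := by
  refine Submodule.le_of_le_smul_of_le_jacobson_bot (I := maximalIdeal R) (IsNoetherian.noetherian M)
    (maximalIdeal_le_jacobson _) ?_
  intro b hb
  obtain ⟨j, hj, c, hc, rfl⟩ := h b hb
  exact add_mem (Submodule.mem_sup_left hj) (Submodule.mem_sup_right (Submodule.smul_mem_smul hx hc))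

lemma Dp.coheight [IsNoetherianRing R] : ∀ (k : ℕ) {J : Ideal R} (q : PrimeSpectrum R), Dp k J →
    AssP J q.asIdeal → (k : ℕ∞) ≤ Order.coheight q
  | 0, _, _, _, _ => by simp
  | k+1, J, q, ⟨x, hx, hxr, hD⟩, ⟨_, a, ha⟩ => by
    have haJ : a ∉ J := fun h => q.isPrime.ne_top ((Ideal.eq_top_iff_one _).2
      ((ha 1).1 (by simpa using h)))
    let M : Ideal R := 
      { carrier := {b | ∀ r ∈ q.asIdeal, r * b ∈ J}
        add_mem' := fun h1 h2 r hr => by rw [mul_add]; exact add_mem (h1 r hr) (h2 r hr)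
        zero_mem' := fun r _ => by simp
        smul_mem' := fun c b hb r hr => by
          rw [smul_eq_mul, mul_left_comm]; exact J.mul_mem_left _ (hb r hr) }
    have hM : ¬ M ≤ J ⊔ Ideal.span {x} := by
      intro hle
      refine haJ (nak (M := M) hx ?_ (fun r hr => (ha r).2 hr))
      intro b hb
      obtain ⟨j, hj, z, hz, e⟩ := Submodule.mem_sup.1 (hle hb)
      obtain ⟨c, rfl⟩ := Ideal.mem_span_singleton'.1 hz
      refine ⟨j, hj, c, fun r hr => hxr _ ?_, by rw [← e]; ring⟩
      have : x * (r * c) = r * b - r * j := by rw [← e]; ring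
      rw [this]
      exact sub_mem (hb r hr) (J.mul_mem_left _ hj)
    obtain ⟨b, hb, hbJ⟩ := SetLike.not_le_iff_exists.1 hM
    obtain ⟨Q, hQ, hle⟩ := exists_le_isAssociatedPrime_of_isNoetherianRing R
      (Ideal.Quotient.mk (J ⊔ Ideal.span {x}) b) (fun h => hbJ (Ideal.Quotient.eq_zero_iff_mem.1 h))
    have hQ' := (assP_iff _ _).2 hQ
    have hcol : ∀ r, r * b ∈ J ⊔ Ideal.span {x} → r ∈ Q := fun r hr => hle (by
      rw [Submodule.mem_colon_singleton, Submodule.mem_bot]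
      exact Ideal.Quotient.eq_zero_iff_mem.2 hr)
    have hxQ : x ∈ Q := hcol x (Ideal.mem_sup_right 
      (Ideal.mul_mem_right _ _ (Ideal.mem_span_singleton_self x)))
    have hqQ : q.asIdeal ≤ Q := fun r hr => hcol r (Ideal.mem_sup_left (hb r hr))
    have hxq : x ∉ q.asIdeal := fun h => haJ (hxr _ ((ha x).2 h))
    have hlt : q < (⟨Q, hQ'.1⟩ : PrimeSpectrum R) := 
      lt_of_le_of_ne hqQ (fun h => hxq (by rw [h]; exact hxQ))
    have := Dp.coheight k ⟨Q, hQ'.1⟩ hD hQ'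
    push_cast
    exact (add_le_add_left this 1).trans (Order.coheight_add_one_le hlt)

end ca
end LC

namespace LC
section ca2
variable {R : Type} [CommRing R] 

open IsLocalRing

/-- dimension of `R/J` at least `k`. -/
def DimGE (k : ℕ) (J : Ideal R) : Prop :=
  ∃ q : PrimeSpectrum R, J ≤ q.asIdeal ∧ (k : ℕ∞) ≤ Order.coheight q

lemma DimGE.mono {k : ℕ} {J K : Ideal R} (h : DimGE k K) (hJ : J ≤ K) : DimGE k J := by
  obtain ⟨q, hq, h⟩ := h
  exact ⟨q, hJ.trans hq, h⟩

lemma supp_upper (M : Type) [AddCommGroup M] [Module R M] : IsUpperSet (Module.support R M) :=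
  fun _ _ h hp => Module.mem_support_mono h hp

lemma RegSeq.le {I J J' : Ideal R} {r : ℕ} (h : RegSeq I J r J') (hJ : J ≤ I) : J' ≤ I := by
  induction h with
  | nil J => exact hJ
  | cons J J' x r hx hreg h ih => 
    exact ih (sup_le hJ ((Ideal.span_singleton_le_iff_mem _).2 hx))

lemma minimal_assP [IsNoetherianRing R] {J q : Ideal R} (h : q ∈ J.minimalPrimes) : AssP J q := by
  rw [assP_iff]
  apply Module.associatedPrimes.minimalPrimes_annihilator_subset_associatedPrimes
  rwa [Ideal.annihilator_quotient]

lemma RegSeq.height [IsNoetherianRing R] {I J J' : Ideal R} {r : ℕ} (h : RegSeq I J r J')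
    (q : PrimeSpectrum R) (hq : J' ≤ q.asIdeal) :
    ∃ q0 : PrimeSpectrum R, J ≤ q0.asIdeal ∧ Order.height q0 + r ≤ Order.height q := by
  induction h with
  | nil J => exact ⟨q, hq, by simp⟩
  | cons J J' x r hx hreg h ih =>
    obtain ⟨q0, h1, h2⟩ := ih hq
    obtain ⟨p, hp, hpq⟩ := Ideal.exists_minimalPrimes_le (le_sup_left.trans h1)
    obtain ⟨hpp, a, ha⟩ := minimal_assP hp
    have hlt : (⟨p, hpp⟩ : PrimeSpectrum R) < q0 := by
      refine lt_of_le_of_ne hpq ?_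
      rintro rfl
      have hxp : x ∈ p := h1 (Ideal.mem_sup_right (Ideal.mem_span_singleton_self x))
      have := hreg _ ((ha x).2 hxp)
      exact hpp.ne_top ((Ideal.eq_top_iff_one _).2 ((ha 1).1 (by simpa using this)))
    refine ⟨⟨p, hpp⟩, hp.1.2, ?_⟩
    have := Order.height_add_one_le hlt
    refine le_trans ?_ h2
    push_cast
    rw [add_comm (r : ℕ∞), ← add_assoc]
    gcongr

variable [IsLocalRing R]

lemma DimGE.drop [IsNoetherianRing R] {k : ℕ} {J : Ideal R} {x : R} (hx : x ∈ maximalIdeal R)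
    (h : DimGE (k+1) J) : DimGE k (J ⊔ Ideal.span {x}) := by
  have h1 : ((k+1 : ℕ) : WithBot ℕ∞) ≤ Module.supportDim R (R ⧸ J) := by
    unfold Module.supportDim
    rw [kd_iff _ (supp_upper _)]
    obtain ⟨q, hq, hk⟩ := h
    refine ⟨q, ?_, hk⟩
    rw [Module.support_eq_zeroLocus, Ideal.annihilator_quotient]
    exact hq
  have h2 := h1.trans (Module.supportDim_le_supportDim_quotSMulTop_succ hx)
  have h3 : (k : WithBot ℕ∞) ≤ Module.supportDim R (QuotSMulTop x (R ⧸ J)) := by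
    generalize Module.supportDim R (QuotSMulTop x (R ⧸ J)) = a at h2
    push_cast at h2
    exact ENat.WithBot.add_le_add_natCast_right_iff.mp h2
  unfold Module.supportDim at h3
  rw [kd_iff _ (supp_upper _)] at h3
  obtain ⟨q, hq, hk⟩ := h3
  refine ⟨q, ?_, hk⟩
  rw [Module.support_quotSMulTop, Module.support_eq_zeroLocus, Ideal.annihilator_quotient] at hq
  refine sup_le hq.1 ?_
  rw [Ideal.span_singleton_le_iff_mem]
  exact hq.2 rfl

lemma not_dimGE (k : ℕ) : ¬ DimGE (k+1) (maximalIdeal R) := by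
  rintro ⟨q, hq, hk⟩
  have : IsMax q := by
    intro p hp
    exact (le_maximalIdeal p.isPrime.ne_top).trans hq
  rw [Order.coheight_eq_zero.2 this] at hk
  simp at hk

lemma dim_le [IsNoetherianRing R] : ∀ (k : ℕ) (J : Ideal R) (s : Finset R), s.card = k →
    J ⊔ Ideal.span (s : Set R) = maximalIdeal R → ¬ DimGE (k+1) J
  | 0, J, s, hs, h => by
    rw [Finset.card_eq_zero] at hs
    subst hs
    simp only [Finset.coe_empty, Ideal.span_empty, sup_bot_eq] at h
    rw [h]
    exact not_dimGE 0
  | k+1, J, s, hs, h => by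
    classical
    intro hD
    obtain ⟨y, t, hy, rfl, ht⟩ := Finset.card_eq_succ.1 hs
    rw [Finset.coe_insert, Ideal.span_insert, ← sup_assoc] at h
    have hym : y ∈ maximalIdeal R := by
      rw [← h]
      exact Ideal.mem_sup_left (Ideal.mem_sup_right (Ideal.mem_span_singleton_self y))
    exact dim_le k _ t ht h (hD.drop hym)

lemma reg [IsNoetherianRing R] : ∀ (k : ℕ) (J : Ideal R) (s : Finset R), s.card = k →
    J ⊔ Ideal.span (s : Set R) = maximalIdeal R → DimGE k J → J.IsPrime ∧ Dp k J
  | 0, J, s, hs, h, _ => by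
    rw [Finset.card_eq_zero] at hs
    subst hs
    simp only [Finset.coe_empty, Ideal.span_empty, sup_bot_eq] at h
    rw [h]
    exact ⟨inferInstance, (maximalIdeal.isMaximal R).ne_top⟩
  | k+1, J, s, hs, h, ⟨P, hP, hk⟩ => by
    classical
    have hPm : P.asIdeal ≤ maximalIdeal R := le_maximalIdeal P.isPrime.ne_top
    obtain ⟨y, hys, hyP⟩ : ∃ y ∈ s, y ∉ P.asIdeal := by
      by_contra! hcon
      refine not_dimGE (R := R) k ⟨P, ?_, hk⟩
      rw [← h]
      exact sup_le hP (Ideal.span_le.2 hcon)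
    have hc : (s.erase y).card = k := by rw [Finset.card_erase_of_mem hys, hs]; rfl
    have he : (J ⊔ Ideal.span {y}) ⊔ Ideal.span ((s.erase y : Finset R) : Set R) = maximalIdeal R := by
      rw [sup_assoc, ← Ideal.span_insert, ← Finset.coe_insert, Finset.insert_erase hys, h]
    have hym : y ∈ maximalIdeal R := by
      rw [← he]
      exact Ideal.mem_sup_left (Ideal.mem_sup_right (Ideal.mem_span_singleton_self y))
    have hle : J ⊔ Ideal.span {y} ≤ P.asIdeal ⊔ Ideal.span {y} := sup_le_sup_right hP _
    have he' : (P.asIdeal ⊔ Ideal.span {y}) ⊔ Ideal.span ((s.erase y : Finset R) : Set R) = maximalIdeal R := by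
      apply le_antisymm
      · refine sup_le (sup_le hPm ((Ideal.span_singleton_le_iff_mem _).2 hym)) ?_
        rw [← he]
        exact le_sup_right
      · rw [← he]
        exact sup_le_sup_right hle _
    have hPd : DimGE (k+1) P.asIdeal := ⟨P, le_rfl, hk⟩
    have h2 := hPd.drop hym
    have r1 := reg k _ _ hc he (h2.mono hle)
    have r2 := reg k _ _ hc he' h2
    have heq : J ⊔ Ideal.span {y} = P.asIdeal ⊔ Ideal.span {y} := by
      by_contra hne
      obtain ⟨q, hq, hkq⟩ := h2
      refine dim_le k _ _ hc he ⟨⟨_, r1.1⟩, le_rfl, ?_⟩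
      have hlt : (⟨_, r1.1⟩ : PrimeSpectrum R) < q := by
        refine lt_of_le_of_ne (hle.trans hq) ?_
        rintro rfl
        exact hne (le_antisymm hle hq)
      push_cast
      exact (add_le_add_left hkq 1).trans (Order.coheight_add_one_le hlt)
    have hJP : P.asIdeal ≤ J := by
      refine nak hym fun b hb => ?_
      have hb' : b ∈ J ⊔ Ideal.span {y} := by
        rw [heq]; exact Ideal.mem_sup_left hb
      obtain ⟨j, hj, z, hz, e⟩ := Submodule.mem_sup.1 hb'
      obtain ⟨c, rfl⟩ := Ideal.mem_span_singleton'.1 hz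
      refine ⟨j, hj, c, ?_, by rw [← e]; ring⟩
      have : c * y ∈ P.asIdeal := by
        rw [← eq_sub_iff_add_eq'] at e
        rw [e]
        exact sub_mem hb (hP hj)
      exact (P.isPrime.mem_or_mem this).resolve_right hyP
    have hJ : J = P.asIdeal := le_antisymm hP hJP
    refine ⟨hJ ▸ P.isPrime, y, hym, ?_, r1.2⟩
    rw [hJ]
    intro a ha
    exact (P.isPrime.mem_or_mem ha).resolve_left hyP

lemma build [IsNoetherianRing R] (I : Ideal R) (hI : I ≤ maximalIdeal R) (k : ℕ)
    (hk : ∀ q : PrimeSpectrum R, ((k + 1 : ℕ) : ℕ∞) ≤ Order.coheight q → ¬ I ≤ q.asIdeal) :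
    ∀ (r : ℕ) (J : Ideal R), Dp (k + r) J → ∃ J', RegSeq I J r J' ∧ Dp k J'
  | 0, J, h => ⟨J, RegSeq.nil J, h⟩
  | r+1, J, h => by
    obtain ⟨x, hx, hxr⟩ := avoid I {J} (by simp) (by
      intro K hK q hq
      rw [Set.mem_singleton_iff] at hK
      subst hK
      have := Dp.coheight (k + (r+1)) ⟨q, hq.1⟩ h hq
      refine hk ⟨q, hq.1⟩ (le_trans ?_ this)
      exact_mod_cast (by omega))
    have hxr := hxr J rfl
    obtain ⟨J', hJ', hD⟩ := build I hI k hk r _ (Dp.exchange (k + r) h (hI hx) hxr)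
    exact ⟨J', RegSeq.cons J J' x r hx hxr hJ', hD⟩

end ca2
end LC

/-- Regular local ring `R` of dimension `n` containing a field, `I` a proper
ideal of height `d`.  Then `dim H_I^d(R) = n - d`. -/
theorem stmt6 (R : Type) [CommRing R] [IsLocalRing R]
    (hreg : IsRegularLocal R) (hfield : ContainsField R)
    (n : ℕ) (hdim : ringKrullDim R = (n : WithBot ℕ∞))
    (I : Ideal R) (hI : I ≠ ⊤) (d : ℕ) (hht : idealHeight R I = (d : ℕ∞)) :
    moduleSuppDim R (LocalCohomologyMod R I d) = ((n - d : ℕ) : WithBot ℕ∞) := by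
  obtain ⟨hN, s, hs, hcard⟩ := hreg
  rw [hdim] at hcard
  have hcard' : s.card = n := by exact_mod_cast hcard
  have hIm : I ≤ IsLocalRing.maximalIdeal R := IsLocalRing.le_maximalIdeal hI
  -- height of primes over `I`
  have hht1 : ∀ q : PrimeSpectrum R, I ≤ q.asIdeal → (d : ℕ∞) ≤ Order.height q := by
    intro q hq
    rw [← hht]
    exact sInf_le ⟨q, hq, rfl⟩
  obtain ⟨p, hIp, hp⟩ : ∃ p : PrimeSpectrum R, I ≤ p.asIdeal ∧ Order.height p = d := by
    have hne : {h : ℕ∞ | ∃ p : PrimeSpectrum R, I ≤ p.asIdeal ∧ Order.height p = h}.Nonempty :=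
      ⟨_, ⟨IsLocalRing.maximalIdeal R, inferInstance⟩, hIm, rfl⟩
    have := csInf_mem hne
    change idealHeight R I ∈ _ at this
    rw [hht] at this
    exact this
  -- `height + coheight ≤ n`
  have hsum : ∀ q : PrimeSpectrum R, Order.height q + Order.coheight q ≤ (n : ℕ∞) := by
    intro q
    have h1 : Order.krullDim (PrimeSpectrum R) = (n : WithBot ℕ∞) := hdim
    rw [Order.krullDim_eq_iSup_height_add_coheight_of_nonempty] at h1
    have h2 : (⨆ a : PrimeSpectrum R, Order.height a + Order.coheight a) = (n : ℕ∞) := by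
      exact_mod_cast h1
    rw [← h2]
    exact le_iSup (fun a : PrimeSpectrum R => Order.height a + Order.coheight a) q
  have hdn : d ≤ n := by
    have := hsum p
    rw [hp] at this
    exact_mod_cast le_self_add.trans this
  have hco : ∀ q : PrimeSpectrum R, I ≤ q.asIdeal → ¬ ((n - d + 1 : ℕ) : ℕ∞) ≤ Order.coheight q := by
    intro q hq hk
    have h1 := (add_le_add (hht1 q hq) hk).trans (hsum q)
    have h2 : d + (n - d + 1) ≤ n := by exact_mod_cast h1
    omega
  -- regular: depth `n`
  have hD : LC.DimGE n (⊥ : Ideal R) := by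
    have h1 : (n : WithBot ℕ∞) ≤ Order.krullDim (PrimeSpectrum R) := hdim.ge
    rw [Order.le_krullDim_iff] at h1
    obtain ⟨l, hl⟩ := h1
    refine ⟨l.head, bot_le, ?_⟩
    rw [← hl]
    exact Order.length_le_coheight le_rfl
  have hreg := (LC.reg n (⊥ : Ideal R) s hcard' (by rw [bot_sup_eq, hs]) hD).2
  obtain ⟨J', hJ', hDJ⟩ := LC.build I hIm (n - d) (fun q hk hq => hco q hq hk) d ⊥
    (by rwa [Nat.sub_add_cancel hdn])
  -- minimality of the prime
  have hJp : J' ≤ p.asIdeal := (hJ'.le bot_le).trans hIp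
  obtain ⟨q, hq, hqp⟩ := Ideal.exists_minimalPrimes_le hJp
  have hqp' : q = p.asIdeal := by
    by_contra hne
    have hlt : (⟨q, hq.1.1⟩ : PrimeSpectrum R) < p := by
      refine lt_of_le_of_ne hqp ?_
      intro h
      exact hne (congrArg PrimeSpectrum.asIdeal h)
    have h1 := Order.height_add_one_le hlt
    obtain ⟨q0, -, h2⟩ := hJ'.height ⟨q, hq.1.1⟩ hq.1.2
    have h3 : (d : ℕ∞) ≤ Order.height (⟨q, hq.1.1⟩ : PrimeSpectrum R) := le_add_self.trans h2
    have h4 := (add_le_add_left h3 1).trans h1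
    rw [hp] at h4
    have h5 : d + 1 ≤ d := by exact_mod_cast h4
    omega
  have hass : LC.AssP J' p.asIdeal := hqp' ▸ LC.minimal_assP hq
  have hcop := LC.Dp.coheight (n - d) p hDJ hass
  obtain ⟨_, y, hy⟩ := hass
  have hsupp := LC.mem_supp I d J' hJ' p hIp y hy
  unfold moduleSuppDim
  apply le_antisymm
  · by_contra hcon
    have h1 : ((n - d + 1 : ℕ) : WithBot ℕ∞) ≤
        Order.krullDim (Module.support R (LocalCohomologyMod R I d)) := by
      push_cast
      exact ENat.WithBot.add_one_le_iff.2 (not_le.1 hcon)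
    rw [LC.kd_iff _ (LC.supp_upper _)] at h1
    obtain ⟨q, hq, hk⟩ := h1
    exact hco q (LC.supp_le I d q hq) hk
  · rw [LC.kd_iff _ (LC.supp_upper _)]
    exact ⟨p, hsupp, hcop⟩
end

section
/- Let (R, m) be a regular local ring containing a field and let I be a proper ideal of R with ht_R(I) = d. Write the set of minimal primes of I as {p_1, …, p_s} ∪ {q_1, …, q_t}, where ht_R(p_i) = d for all i and ht_R(q_j) > d for all j, and set I' = p_1 ∩ … ∩ p_s. Then H_I^d(R) ≅ H_{I'}^d(R). -/
open CategoryTheory Opposite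

lemma quasiIso_moduleCat_aux {R : Type} [CommRing R] {S T : ShortComplex (ModuleCat.{0} R)}
    (φ : S ⟶ T)
    (inj : ∀ x : S.X₂, S.g x = 0 → (∃ y : T.X₁, T.f y = φ.τ₂ x) → ∃ z, S.f z = x)
    (surj : ∀ x : T.X₂, T.g x = 0 → ∃ w : S.X₂, S.g w = 0 ∧ ∃ y, T.f y = x - φ.τ₂ w) :
    ShortComplex.QuasiIso φ := by
  let h1 := S.moduleCatLeftHomologyData
  let h2 := T.moduleCatLeftHomologyData
  let γ : ShortComplex.LeftHomologyMapData φ h1 h2 := default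
  rw [γ.quasiIso_iff]
  have key : ∀ x : LinearMap.ker S.g.hom, γ.φH (h1.π x) = h2.π (γ.φK x) := fun x => by
    exact (congr($(γ.commπ) x)).symm
  have keyi : ∀ x : LinearMap.ker S.g.hom,
      (T.moduleCatLeftHomologyData.i.hom (γ.φK.hom x)) = φ.τ₂ x.1 := fun x => by
    exact congr($(γ.commi) x)
  have hi : ∀ (y : LinearMap.ker T.g.hom), T.moduleCatLeftHomologyData.i.hom y = y.1 := fun y => rfl
  rw [ConcreteCategory.isIso_iff_bijective]
  constructor
  · rw [injective_iff_map_eq_zero]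
    intro a ha
    obtain ⟨x, rfl⟩ := Submodule.Quotient.mk_surjective _ a
    have h3 := key x
    have h4 : γ.φH (h1.π x) = 0 := ha
    rw [h4] at h3
    have h5 := (Submodule.Quotient.mk_eq_zero (LinearMap.range T.moduleCatToCycles)).1 h3.symm
    obtain ⟨y, hy⟩ := h5
    obtain ⟨z, hz⟩ := inj x.1 x.2 ⟨y, by
      rw [← keyi, ← hy]; rfl⟩
    refine (Submodule.Quotient.mk_eq_zero (LinearMap.range S.moduleCatToCycles)).2 ⟨z, ?_⟩
    exact Subtype.ext hz
  · intro b
    obtain ⟨x, rfl⟩ := Submodule.Quotient.mk_surjective _ b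
    obtain ⟨w, hw, y, hy⟩ := surj x.1 x.2
    refine ⟨h1.π (⟨w, hw⟩ : LinearMap.ker S.g.hom), ?_⟩
    erw [key]
    symm
    refine (Submodule.Quotient.eq (LinearMap.range T.moduleCatToCycles)).2 ⟨y, ?_⟩
    apply Subtype.ext
    change T.f y = x.1 - _
    rw [hy, ← keyi ⟨w, hw⟩]
    rfl

set_option maxHeartbeats 800000 in
lemma isIso_oldExt_map {R : Type} [CommRing R] {X X' Y : ModuleCat.{0} R} (g : X' ⟶ X) (p : ℕ)
    (h : Function.Bijective (fun a : Abelian.Ext.{0} X Y (p+1) =>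
      (Abelian.Ext.mk₀ g).comp a (zero_add _))) :
    IsIso (((Ext R (ModuleCat.{0} R) (p+1)).map g.op).app Y) := by
  let P := projectiveResolution X
  let P' := projectiveResolution X'
  let φ : ProjectiveResolution.Hom P' P g :=
    ⟨ProjectiveResolution.lift g P' P, by
      exact ProjectiveResolution.lift_commutes_zero g P' P⟩
  have comm : φ.hom.f 0 ≫ P.π.f 0 = P'.π.f 0 ≫ g := by
    simpa using! φ.hom_f_zero_comp_π_f_zero
  let F := ((linearYoneda R (ModuleCat.{0} R)).obj Y).rightOp
  have nat := ProjectiveResolution.isoLeftDerivedObj_hom_naturality g P' P φ.hom comm F (p+1)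
  have hq : ShortComplex.QuasiIso ((HomologicalComplex.shortComplexFunctor' _ (ComplexShape.down ℕ) (p+2) (p+1) p).map ((F.mapHomologicalComplex (ComplexShape.down ℕ)).map φ.hom)) := by
    refine (ShortComplex.quasiIso_opMap_iff (ShortComplex.unopMap ((HomologicalComplex.shortComplexFunctor' _ (ComplexShape.down ℕ) (p+2) (p+1) p).map ((F.mapHomologicalComplex (ComplexShape.down ℕ)).map φ.hom)))).2 ?_
    apply quasiIso_moduleCat_aux
    · intro (x : P.complex.X (p+1) ⟶ Y) (hx : P.complex.d (p+2) (p+1) ≫ x = 0)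
      rintro ⟨(y : P'.complex.X p ⟶ Y), (hy : P'.complex.d (p+1) p ≫ y = φ.hom.f (p+1) ≫ x)⟩
      change ∃ z : P.complex.X p ⟶ Y, P.complex.d (p+1) p ≫ z = x
      rw [← P.extMk_eq_zero_iff x (p+2) rfl hx p rfl]
      apply h.1
      simp only
      rw [ProjectiveResolution.mk₀_comp_extMk x (p+2) rfl hx φ]
      rw [Abelian.Ext.comp_zero, P'.extMk_eq_zero_iff _ (p+2) rfl _ p rfl]
      exact ⟨y, hy⟩
    · intro (x : P'.complex.X (p+1) ⟶ Y) (hx : P'.complex.d (p+2) (p+1) ≫ x = 0)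
      obtain ⟨a, ha⟩ := h.2 (P'.extMk x (p+2) rfl hx)
      obtain ⟨w, hw, rfl⟩ := P.extMk_surjective a (p+2) rfl
      simp only at ha
      rw [ProjectiveResolution.mk₀_comp_extMk w (p+2) rfl hw φ, eq_comm, ← sub_eq_zero,
        P'.sub_extMk, P'.extMk_eq_zero_iff _ (p+2) rfl _ p rfl] at ha
      exact ⟨w, hw, ha⟩
  have hq2 : QuasiIsoAt ((F.mapHomologicalComplex (ComplexShape.down ℕ)).map φ.hom) (p+1) := by
    rw [quasiIsoAt_iff' _ (p+2) (p+1) p (by simp) (by simp)]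
    exact hq
  rw [quasiIsoAt_iff_isIso_homologyMap] at hq2
  have h3 : IsIso ((F.leftDerived (p+1)).map g) := by
    have h4 : IsIso ((F.mapHomologicalComplex (ComplexShape.down ℕ) ⋙
            HomologicalComplex.homologyFunctor (ModuleCat R)ᵒᵖ (ComplexShape.down ℕ) (p + 1)).map
        φ.hom) := hq2
    have h5 : IsIso ((F.leftDerived (p + 1)).map g ≫ (P.isoLeftDerivedObj F (p + 1)).hom) := by
      rw [nat]; infer_instance
    exact IsIso.of_isIso_comp_right _ (P.isoLeftDerivedObj F (p + 1)).hom
  change IsIso ((F.leftDerived (p+1)).map g).unop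
  infer_instance

lemma localCohomology_iso_aux {R : Type} [CommRing R] {A K : Ideal R} (hKA : K ≤ A) (d : ℕ)
    (Y : ModuleCat.{0} R)
    (h : ∀ t : ℕ, IsIso (((Ext R (ModuleCat.{0} R) d).map
      (ModuleCat.ofHom (Submodule.mapQ (K ^ t) (A ^ t) LinearMap.id
        (Ideal.pow_right_mono hKA t)) :
        ModuleCat.of R (R ⧸ K ^ t) ⟶ ModuleCat.of R (R ⧸ A ^ t)).op).app Y)) :
    Nonempty ((localCohomology A d).obj Y ≅ (localCohomology K d).obj Y) := by
  let α : localCohomology.ringModIdeals (localCohomology.idealPowersDiagram K) ⟶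
      localCohomology.ringModIdeals (localCohomology.idealPowersDiagram A) :=
    { app := fun t => ModuleCat.ofHom (Submodule.mapQ (K ^ unop t) (A ^ unop t) LinearMap.id
        (Ideal.pow_right_mono hKA _))
      naturality := fun s t f => by
        ext x
        obtain ⟨x, rfl⟩ := Submodule.Quotient.mk_surjective _ x
        rfl }
  let β : localCohomology.diagram (localCohomology.idealPowersDiagram A) d ⟶
      localCohomology.diagram (localCohomology.idealPowersDiagram K) d :=
    Functor.whiskerRight (NatTrans.op α) (Ext R (ModuleCat.{0} R) d)
  let γ := Functor.whiskerRight β ((evaluation _ _).obj Y)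
  have : IsIso γ := by
    have : ∀ X, IsIso (γ.app X) := fun X => h (unop (unop X))
    exact NatIso.isIso_of_isIso_app γ
  have := localCohomology.hasColimitDiagram.{0,0} (localCohomology.idealPowersDiagram A) d
  have := localCohomology.hasColimitDiagram.{0,0} (localCohomology.idealPowersDiagram K) d
  exact ⟨Limits.colimitObjIsoColimitCompEvaluation _ Y ≪≫ Limits.HasColimit.isoOfNatIso (asIso γ) ≪≫
    (Limits.colimitObjIsoColimitCompEvaluation _ Y).symm⟩

/-- vanishing from a regular sequence -/
lemma ext_vanish_of_regular {R : Type} [CommRing R] (N : ModuleCat.{0} R) (rs : List R)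
    (M : Type) [AddCommGroup M] [Module R M]
    (hreg : RingTheory.Sequence.IsWeaklyRegular M rs)
    (hann : ∀ r ∈ rs, r ∈ Module.annihilator R N) (i : ℕ) (hi : i < rs.length) :
    Subsingleton (Abelian.Ext.{0} N (ModuleCat.of R M) i) := by
  induction rs generalizing M i with
  | nil => simp at hi
  | cons r rs ih =>
    rw [RingTheory.Sequence.isWeaklyRegular_cons_iff] at hreg
    have hse := IsSMulRegular.smulShortComplex_shortExact (M := ModuleCat.of R M) (r := r) hreg.1
    refine subsingleton_of_forall_eq 0 fun x => ?_
    have hx : x.comp (Abelian.Ext.mk₀ (ModuleCat.smulShortComplex (ModuleCat.of R M) r).f) (add_zero i) = 0 := by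
      have := Abelian.Ext.postcomp_smul_id_eq_zero_of_mem_annihilator (M := ModuleCat.of R M) (N := N) (hann r (by simp)) i
      exact congr($this x)
    rcases i with _ | i
    · have := Abelian.Ext.postcomp_mk₀_injective_of_mono N (ModuleCat.smulShortComplex (ModuleCat.of R M) r).f (hf := hse.mono_f)
      apply this
      exact hx.trans (map_zero _).symm
    · obtain ⟨x3, rfl⟩ := Abelian.Ext.covariant_sequence_exact₁ N hse x hx (n₀ := i) rfl
      have h1 := ih (QuotSMulTop r M) hreg.2 (fun r hr => hann r (by simp [hr])) i (by simpa using hi)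
      have : x3 = 0 := h1.elim _ _
      rw [this, Abelian.Ext.zero_comp]
      rfl


lemma ext_subsingleton_X₂ {R : Type} [CommRing R] {S : ShortComplex (ModuleCat.{0} R)}
    (hS : S.ShortExact) (Y : ModuleCat.{0} R) (i : ℕ)
    (h1 : Subsingleton (Abelian.Ext.{0} S.X₁ Y i)) (h3 : Subsingleton (Abelian.Ext.{0} S.X₃ Y i)) :
    Subsingleton (Abelian.Ext.{0} S.X₂ Y i) := by
  refine subsingleton_of_forall_eq 0 fun x => ?_
  obtain ⟨y, rfl⟩ := Abelian.Ext.contravariant_sequence_exact₂ hS Y x (h1.elim _ _)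
  rw [h3.elim y 0]; simp

lemma ext_subsingleton_of_iso {R : Type} [CommRing R] {X X' : ModuleCat.{0} R} (e : X ≅ X')
    (Y : ModuleCat.{0} R) (i : ℕ)
    (h : Subsingleton (Abelian.Ext.{0} X Y i)) : Subsingleton (Abelian.Ext.{0} X' Y i) := by
  refine subsingleton_of_forall_eq 0 fun x => ?_
  have h1 : (Abelian.Ext.mk₀ e.inv).comp ((Abelian.Ext.mk₀ e.hom).comp x (zero_add _)) (zero_add _) = x := by
    simp
  rw [← h1, h.elim ((Abelian.Ext.mk₀ e.hom).comp x (zero_add _)) 0]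
  simp

lemma ext_vanish_of_support {R : Type} [CommRing R] [IsNoetherianRing R] (Y : ModuleCat.{0} R)
    (i : ℕ) (N : Type) [AddCommGroup N] [Module R N] (hN : Module.Finite R N)
    (h : ∀ p ∈ Module.support R N,
      Subsingleton (Abelian.Ext.{0} (ModuleCat.of R (R ⧸ p.asIdeal)) Y i)) :
    Subsingleton (Abelian.Ext.{0} (ModuleCat.of R N) Y i) := by
  revert h
  induction hN using IsNoetherianRing.induction_on_isQuotientEquivQuotientPrime R with
  | subsingleton N =>
    intro _
    refine subsingleton_of_forall_eq 0 fun x => ?_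
    have h0 : 𝟙 (ModuleCat.of R N) = 0 := by ext x; exact Subsingleton.elim (α := N) _ _
    rw [← Abelian.Ext.mk₀_id_comp x, h0]
    simp
  | quotient N p f =>
    intro h
    refine ext_subsingleton_of_iso f.symm.toModuleIso Y i (h p ?_)
    rw [f.support_eq, Module.support_eq_zeroLocus]
    simp [Ideal.annihilator_quotient]
  | exact N₁ N₂ N₃ f g hf hg hfg h1 h3 =>
    intro h
    have hS : (ShortComplex.moduleCatMk f g hfg.linearMap_comp_eq_zero).ShortExact :=
      ModuleCat.shortComplex_shortExact _ hfg hf hg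
    exact ext_subsingleton_X₂ hS Y i
      (h1 fun p hp => h p (Module.support_subset_of_injective f hf hp))
      (h3 fun p hp => h p (Module.support_subset_of_surjective g hg hp))

open scoped Pointwise in
lemma lt_of_mem_support_quot {R : Type} [CommRing R] (x : R) (p q : PrimeSpectrum R)
    (hxp : x ∉ p.asIdeal) (hq : q ∈ Module.support R (QuotSMulTop x (R ⧸ p.asIdeal))) : p < q := by
  have h1 := Module.support_subset_of_surjective (Submodule.mkQ (x • (⊤ : Submodule R (R ⧸ p.asIdeal)))) (Submodule.mkQ_surjective _) hq
  rw [Module.support_eq_zeroLocus, Ideal.annihilator_quotient] at h1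
  have hxq : x ∈ q.asIdeal := by
    have h2 := Module.annihilator_le_of_mem_support hq
    apply h2
    rw [Module.mem_annihilator]
    intro m
    obtain ⟨m, rfl⟩ := Submodule.Quotient.mk_surjective _ m
    rw [← Submodule.Quotient.mk_smul, Submodule.Quotient.mk_eq_zero]
    exact Submodule.smul_mem_pointwise_smul _ _ _ trivial
  refine lt_of_le_of_ne h1 ?_
  rintro rfl
  exact hxp hxq

lemma ext_smul_comp_aux {R : Type} [CommRing R] {X Y : ModuleCat.{0} R} (x : R) (i : ℕ)
    (z : Abelian.Ext.{0} X Y i) :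
    (Abelian.Ext.mk₀ (x • 𝟙 X)).comp z (zero_add _) = x • z := by
  simp [Abelian.Ext.mk₀_smul]

lemma ext_vanish_prime {R : Type} [CommRing R] [IsNoetherianRing R] [IsLocalRing R]
    (hk : ∀ i : ℕ, (i : ℕ∞) < Order.height (IsLocalRing.closedPoint R) →
      Subsingleton (Abelian.Ext.{0}
        (ModuleCat.of R (R ⧸ IsLocalRing.maximalIdeal R)) (ModuleCat.of R R) i))
    (p : PrimeSpectrum R) (i : ℕ) (hi : (i : ℕ∞) < Order.height p) :
    Subsingleton (Abelian.Ext.{0}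
        (ModuleCat.of R (R ⧸ p.asIdeal)) (ModuleCat.of R R) i) := by
  have : WellFoundedGT (PrimeSpectrum R) :=
    ⟨InvImage.wf PrimeSpectrum.asIdeal (wellFounded_gt (α := Ideal R))⟩
  induction p using WellFoundedGT.induction generalizing i with
  | ind p ih =>
  by_cases hp : p = IsLocalRing.closedPoint R
  · subst hp; exact hk i hi
  have hlt : p.asIdeal < IsLocalRing.maximalIdeal R :=
    lt_of_le_of_ne (IsLocalRing.le_maximalIdeal p.2.ne_top) fun h => hp (PrimeSpectrum.ext h)
  obtain ⟨x, hxm, hxp⟩ := SetLike.exists_of_lt hlt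
  have hreg : IsSMulRegular (ModuleCat.of R (R ⧸ p.asIdeal)) x := by
    change IsSMulRegular (R ⧸ p.asIdeal) x
    rw [isSMulRegular_iff_right_eq_zero_of_smul]
    intro y hy
    obtain ⟨y, rfl⟩ := Ideal.Quotient.mk_surjective y
    have : Ideal.Quotient.mk p.asIdeal (x * y) = 0 := hy
    rw [Ideal.Quotient.eq_zero_iff_mem] at this ⊢
    exact (p.2.mem_or_mem this).resolve_left hxp
  have hse := hreg.smulShortComplex_shortExact
  have h3 : Subsingleton (Abelian.Ext.{0}
      (ModuleCat.of R (QuotSMulTop x (R ⧸ p.asIdeal))) (ModuleCat.of R R) (i+1)) := by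
    apply ext_vanish_of_support
    · infer_instance
    intro q hq
    have hpq : p < q := lt_of_mem_support_quot x p q hxp hq
    apply ih q hpq
    have h4 : Order.height p + 1 ≤ Order.height q := Order.height_add_one_le hpq
    refine lt_of_lt_of_le ?_ h4
    push_cast
    exact (ENat.add_lt_add_iff_right (by simp)).2 hi
  have hfin : Module.Finite R (Abelian.Ext.{0}
        (ModuleCat.of R (R ⧸ p.asIdeal)) (ModuleCat.of R R) i) := by
    have : Module.Finite R (ModuleCat.of R (R ⧸ p.asIdeal)) := inferInstanceAs (Module.Finite R (R ⧸ p.asIdeal))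
    have : Module.Finite R (ModuleCat.of R R) := inferInstanceAs (Module.Finite R R)
    infer_instance
  have htop : (⊤ : Submodule R (Abelian.Ext.{0}
        (ModuleCat.of R (R ⧸ p.asIdeal)) (ModuleCat.of R R) i)) ≤ IsLocalRing.maximalIdeal R • ⊤ := by
    intro y _
    obtain ⟨z, hz⟩ := Abelian.Ext.contravariant_sequence_exact₁ hse (ModuleCat.of R R) y (add_comm 1 i) (h3.elim _ _)
    have : x • z = y := by
      rw [← hz]
      symm
      exact ext_smul_comp_aux (X := ModuleCat.of R (R ⧸ p.asIdeal)) x i z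
    rw [← this]
    exact Submodule.smul_mem_smul hxm trivial
  have := Submodule.eq_bot_of_le_smul_of_le_jacobson_bot _ _ hfin.1 htop (IsLocalRing.maximalIdeal_le_jacobson _)
  exact (Submodule.subsingleton_iff R).1 (subsingleton_of_bot_eq_top this.symm)


open IsLocalRing in
lemma regular_local_aux (n : ℕ) : ∀ (R : Type) [CommRing R] [IsLocalRing R] [IsNoetherianRing R]
    (g : Fin n → R), Ideal.span (Set.range g) = maximalIdeal R → (n : WithBot ℕ∞) ≤ ringKrullDim R →
    IsDomain R ∧ ∃ rs : List R, rs.length = n ∧ (∀ r ∈ rs, r ∈ maximalIdeal R) ∧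
      RingTheory.Sequence.IsWeaklyRegular R rs := by
  induction n with
  | zero =>
    intro R _ _ _ g hg _
    have hm : maximalIdeal R = ⊥ := by rw [← hg]; simp
    have : (⊥ : Ideal R).IsPrime := hm ▸ (maximalIdeal.isMaximal R).isPrime
    exact ⟨IsDomain.of_bot_isPrime R, [], rfl, by simp, by simp⟩
  | succ n ih =>
    intro R _ _ _ g hg hdim
    have hnmin : maximalIdeal R ∉ minimalPrimes R := by
      intro h
      have h0 : (maximalIdeal R).height = 0 := by
        rwa [Ideal.height_eq_zero_iff]
      rw [← maximalIdeal_height_eq_ringKrullDim, h0] at hdim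
      have : n + 1 ≤ 0 := by exact_mod_cast hdim
      omega
    have hmin0 : ∀ p ∈ minimalPrimes R, ¬ maximalIdeal R ≤ p := by
      intro p hp hle
      have := le_antisymm hle (le_maximalIdeal hp.1.1.ne_top)
      exact hnmin (this ▸ hp)
    have hsq : ¬ maximalIdeal R ≤ maximalIdeal R ^ 2 := by
      intro h
      have hb : maximalIdeal R = ⊥ := by
        refine Submodule.eq_bot_of_le_smul_of_le_jacobson_bot (maximalIdeal R) (maximalIdeal R)
          (IsNoetherian.noetherian _) ?_ (maximalIdeal_le_jacobson _)
        rwa [smul_eq_mul, ← pow_two]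
      obtain ⟨p, hp, -⟩ := Ideal.exists_minimalPrimes_le (I := (⊥ : Ideal R)) (J := maximalIdeal R) bot_le
      exact hmin0 p hp (hb ▸ bot_le)
    obtain ⟨x, hxm, hx2, hxp⟩ : ∃ x ∈ maximalIdeal R, x ∉ maximalIdeal R ^ 2 ∧
        ∀ p ∈ minimalPrimes R, x ∉ p := by
      classical
      have hfin : (minimalPrimes R).Finite := minimalPrimes.finite_of_isNoetherianRing R
      by_contra! hcon
      have := (Ideal.subset_union_prime (s := insert (maximalIdeal R ^ 2) hfin.toFinset)
        (f := fun J : Ideal R => J) (maximalIdeal R ^ 2) (maximalIdeal R ^ 2)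
        (I := maximalIdeal R) (by
          intro i hi h1 _
          simp only [Finset.mem_insert, Set.Finite.mem_toFinset] at hi
          exact (hi.resolve_left h1).1.1)).1 (by
          intro x hx
          simp only [Set.mem_iUnion]
          by_cases h : x ∈ maximalIdeal R ^ 2
          · exact ⟨_, by simp, h⟩
          · obtain ⟨p, hp, hxp⟩ := hcon x hx h
            exact ⟨p, by simp [hp], hxp⟩)
      obtain ⟨J, hJ, hle⟩ := this
      simp only [Finset.mem_insert, Set.Finite.mem_toFinset] at hJ
      rcases hJ with rfl | hJ
      · exact hsq hle
      · exact hmin0 J hJ hle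
    have hgm : ∀ i, g i ∈ maximalIdeal R := fun i => hg ▸ Ideal.subset_span ⟨i, rfl⟩
    obtain ⟨a, ha⟩ : ∃ a : Fin (n+1) → R, ∑ i, a i * g i = x := by
      rw [← hg] at hxm
      exact Ideal.mem_span_range_iff_exists_fun.1 hxm
    obtain ⟨i, hi⟩ : ∃ i, IsUnit (a i) := by
      by_contra! hcon
      apply hx2
      rw [← ha, pow_two]
      exact Ideal.sum_mem _ fun i _ => Ideal.mul_mem_mul ((mem_maximalIdeal _).2 (hcon i)) (hgm i)
    let S := R ⧸ Ideal.span {x}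
    have hne : Ideal.span {x} ≠ ⊤ := fun h => by
      have h1 : Ideal.span {x} ≤ maximalIdeal R := by
        rw [Ideal.span_le]; simpa using hxm
      exact (maximalIdeal.isMaximal R).ne_top (top_le_iff.1 (h ▸ h1))
    have : Nontrivial S := Ideal.Quotient.nontrivial_iff.2 hne
    have hsurj := Ideal.Quotient.mk_surjective (I := Ideal.span {x})
    have hloc : IsLocalRing S := IsLocalRing.of_surjective' _ hsurj
    have hmS : (maximalIdeal R).map (Ideal.Quotient.mk (Ideal.span {x})) = maximalIdeal S :=
      map_maximalIdeal_of_surjective _ hsurj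
    have hx0 : Ideal.Quotient.mk (Ideal.span {x}) x = 0 :=
      Ideal.Quotient.eq_zero_iff_mem.2 (Ideal.mem_span_singleton_self x)
    obtain ⟨hdom, rs, hlen, hrs, hreg⟩ := ih S
      (fun j => Ideal.Quotient.mk (Ideal.span {x}) (g (i.succAbove j))) (by
        rw [← hmS]
        apply le_antisymm
        · rw [Ideal.span_le]
          rintro _ ⟨j, rfl⟩
          exact Ideal.mem_map_of_mem _ (hgm _)
        · rw [← hg, Ideal.map_span, Ideal.span_le]
          rintro _ ⟨_, ⟨j, rfl⟩, rfl⟩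
          rcases Fin.eq_self_or_eq_succAbove i j with rfl | ⟨k, rfl⟩
          · rw [Fin.sum_univ_succAbove _ j] at ha
            have h1 := congrArg (Ideal.Quotient.mk (Ideal.span {x})) ha
            rw [hx0, map_add, map_sum, map_mul, add_eq_zero_iff_eq_neg] at h1
            have hu := hi.map (Ideal.Quotient.mk (Ideal.span {x}))
            refine (Ideal.unit_mul_mem_iff_mem _ hu).1 ?_
            rw [h1]
            refine neg_mem (Ideal.sum_mem _ fun k _ => ?_)
            rw [map_mul]
            exact Ideal.mul_mem_left _ _ (Ideal.subset_span ⟨k, rfl⟩)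
          · exact Ideal.subset_span ⟨k, rfl⟩)
      (by
        have h1 := Ideal.height_le_ringKrullDim_quotient_add_one hxm
        rw [maximalIdeal_height_eq_ringKrullDim] at h1
        have h2 := hdim.trans h1
        push_cast at h2
        change (n : WithBot ℕ∞) ≤ ringKrullDim (R ⧸ Ideal.span {x})
        generalize ringKrullDim (R ⧸ Ideal.span {x}) = k at *
        induction k with
        | bot => 
          rw [WithBot.bot_add] at h2
          exact absurd (le_bot_iff.1 h2) (by exact_mod_cast WithBot.coe_ne_bot)
        | coe k => 
          have h3 : ((n : ℕ∞) + 1) ≤ k + 1 := by exact_mod_cast h2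
          have := (ENat.add_le_add_iff_right (by simp)).1 h3
          exact_mod_cast this)
    have hxprime : (Ideal.span {x}).IsPrime := (Ideal.Quotient.isDomain_iff_prime _).1 hdom
    obtain ⟨p, hp, hpx⟩ := Ideal.exists_minimalPrimes_le (I := (⊥ : Ideal R)) (J := Ideal.span {x}) bot_le
    have hpb : p = ⊥ := by
      refine Submodule.eq_bot_of_le_smul_of_le_jacobson_bot (maximalIdeal R) p
          (IsNoetherian.noetherian _) ?_ (maximalIdeal_le_jacobson _)
      intro y hy
      obtain ⟨z, rfl⟩ := Ideal.mem_span_singleton.1 (hpx hy)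
      exact Ideal.mul_mem_mul hxm ((hp.1.1.mem_or_mem hy).resolve_left (hxp p hp))
    have : (⊥ : Ideal R).IsPrime := hpb ▸ hp.1.1
    have hR : IsDomain R := IsDomain.of_bot_isPrime R
    have hxne : x ≠ 0 := fun h => hxp p hp (by rw [h]; exact p.zero_mem)
    obtain ⟨ts, rfl⟩ := (List.map_surjective_iff.2 hsurj) rs
    refine ⟨hR, x :: ts, by simpa using hlen, ?_, ?_⟩
    · intro r hr
      rcases List.mem_cons.1 hr with rfl | hr
      · exact hxm
      · have := hrs _ (List.mem_map_of_mem hr)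
        have hl : IsLocalHom (Ideal.Quotient.mk (Ideal.span {x})) :=
          IsLocalHom.of_surjective _ hsurj
        rw [← maximalIdeal_comap (Ideal.Quotient.mk (Ideal.span {x}))]
        exact this
    · rw [RingTheory.Sequence.isWeaklyRegular_cons_iff]
      refine ⟨?_, ?_⟩
      · rw [isSMulRegular_iff_right_eq_zero_of_smul]
        intro y hy
        exact (mul_eq_zero.1 hy).resolve_left hxne
      · have h1 := (RingTheory.Sequence.isWeaklyRegular_map_algebraMap_iff (R := R) S S ts).1 hreg
        refine (LinearEquiv.isWeaklyRegular_congr (Submodule.quotEquivOfEq _ _ ?_) ts).2 h1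
        rw [← Submodule.ideal_span_singleton_smul, smul_eq_mul, Ideal.mul_top]

lemma ext_precomp_bijective_of_ker {R : Type} [CommRing R] {M N : Type} [AddCommGroup M] [Module R M]
    [AddCommGroup N] [Module R N] (f : M →ₗ[R] N) (hf : Function.Surjective f)
    (Y : ModuleCat.{0} R) (p : ℕ)
    (h : ∀ i ≤ p + 1, Subsingleton (Abelian.Ext.{0} (ModuleCat.of R (LinearMap.ker f)) Y i)) :
    Function.Bijective (fun a : Abelian.Ext.{0} (ModuleCat.of R N) Y (p+1) =>
      (Abelian.Ext.mk₀ (ModuleCat.ofHom f)).comp a (zero_add _)) := by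
  have hS := LinearMap.shortExact_shortComplexKer hf
  constructor
  · intro a b hab
    have hab' : (Abelian.Ext.mk₀ (ModuleCat.ofHom f)).comp (a - b) (zero_add _) = 0 := by
      rw [sub_eq_add_neg, Abelian.Ext.comp_add, Abelian.Ext.comp_neg, ← sub_eq_add_neg]
      exact sub_eq_zero.2 hab
    obtain ⟨y, hy⟩ := Abelian.Ext.contravariant_sequence_exact₃ hS Y (a - b) hab' (n₀ := p)
      (add_comm 1 p)
    rw [(h p (by omega)).elim y 0, Abelian.Ext.comp_zero] at hy
    exact sub_eq_zero.1 hy.symm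
  · intro b
    exact Abelian.Ext.contravariant_sequence_exact₂ hS Y b ((h (p+1) le_rfl).elim _ _)

lemma le_orderHeight_of_idealHeight {R : Type} [CommRing R] {J : Ideal R} (p : PrimeSpectrum R)
    (h : J ≤ p.asIdeal) : idealHeight R J ≤ Order.height p :=
  sInf_le ⟨p, h, rfl⟩

lemma regular_local_data (R : Type) [CommRing R] [IsLocalRing R] (hreg : IsRegularLocal R) :
    IsDomain R ∧ ∀ i : ℕ, (i : ℕ∞) < Order.height (IsLocalRing.closedPoint R) →
      Subsingleton (Abelian.Ext.{0}
        (ModuleCat.of R (R ⧸ IsLocalRing.maximalIdeal R)) (ModuleCat.of R R) i) := by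
  obtain ⟨hN, s, hs, hc⟩ := hreg
  obtain ⟨hdom, rs, hlen, hmem, hrs⟩ := regular_local_aux s.card R
    (fun j => (s.equivFin.symm j : R)) (by
      rw [← hs]
      congr 1
      ext x
      constructor
      · rintro ⟨j, rfl⟩
        exact (s.equivFin.symm j).2
      · intro hx
        exact ⟨s.equivFin ⟨x, hx⟩, by simp⟩) hc.le
  refine ⟨hdom, fun i hi => ?_⟩
  refine ext_vanish_of_regular _ rs R hrs (fun r hr => ?_) i ?_
  · change r ∈ Module.annihilator R (R ⧸ IsLocalRing.maximalIdeal R)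
    rw [Ideal.annihilator_quotient]
    exact hmem r hr
  · rw [← PrimeSpectrum.height_eq_orderHeight] at hi
    change (i : ℕ∞) < (IsLocalRing.maximalIdeal R).height at hi
    have h2 : ((IsLocalRing.maximalIdeal R).height : WithBot ℕ∞) = ((s.card : ℕ∞) : WithBot ℕ∞) := by
      rw [IsLocalRing.maximalIdeal_height_eq_ringKrullDim, ← hc]; rfl
    rw [WithBot.coe_inj.1 h2] at hi
    rw [hlen]
    exact_mod_cast hi

/-- Regular local ring `R` containing a field, `I` a proper ideal with
`ht I = d`, whose set of minimal primes splits as `P ∪ Q` where every member of `P` has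
height `d` and every member of `Q` has height `> d`.  With `I' = ⋂ P`, we have
`H_I^d(R) ≅ H_{I'}^d(R)`. -/
theorem stmt7 (R : Type) [CommRing R] [IsLocalRing R]
    (hreg : IsRegularLocal R) (hfield : ContainsField R)
    (I : Ideal R) (hI : I ≠ ⊤) (d : ℕ) (hht : idealHeight R I = (d : ℕ∞))
    (P Q : Set (Ideal R))
    (hPQ : I.minimalPrimes = P ∪ Q)
    (hP : ∀ p ∈ P, idealHeight R p = (d : ℕ∞))
    (hQ : ∀ q ∈ Q, (d : ℕ∞) < idealHeight R q) :
    Nonempty (LocalCohomologyMod R I d ≃ₗ[R] LocalCohomologyMod R (sInf P) d) := by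
  obtain ⟨hdom, hk⟩ := regular_local_data R hreg
  have hNoeth : IsNoetherianRing R := hreg.1
  rcases d with _ | d
  · have hbot : I = ⊥ := by
      have hne : {h : ℕ∞ | ∃ p : PrimeSpectrum R, I ≤ p.asIdeal ∧ Order.height p = h}.Nonempty :=
        ⟨_, IsLocalRing.closedPoint R, IsLocalRing.le_maximalIdeal hI, rfl⟩
      obtain ⟨p, hIp, hp⟩ := csInf_mem hne
      change Order.height p = idealHeight R I at hp
      rw [hht, ← PrimeSpectrum.height_eq_orderHeight, Nat.cast_zero,
        Ideal.height_eq_zero_iff_eq_bot] at hp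
      exact le_bot_iff.1 (hp ▸ hIp)
    have hmem : (⊥ : Ideal R) ∈ P := by
      have h1 : (⊥ : Ideal R) ∈ I.minimalPrimes := by
        rw [hbot, Ideal.minimalPrimes_eq_subsingleton_self]; rfl
      rw [hPQ] at h1
      refine h1.resolve_right fun h2 => ?_
      have h3 := hQ _ h2
      rw [← hbot, hht] at h3
      exact lt_irrefl _ h3
    have : sInf P = I := by
      rw [hbot]; exact le_bot_iff.1 (sInf_le hmem)
    rw [this]
    exact ⟨LinearEquiv.refl _ _⟩
  · have hK : I.radical = sInf P ⊓ sInf Q := by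
      rw [← Ideal.sInf_minimalPrimes, hPQ, sInf_union]
    have hKP : I.radical ≤ sInf P := hK ▸ inf_le_left
    have hQfin : Q.Finite := (Ideal.finite_minimalPrimes_of_isNoetherianRing R I).subset
      (hPQ ▸ Set.subset_union_right)
    have hQht : ∀ p : PrimeSpectrum R, sInf Q ≤ p.asIdeal →
        ((d + 1 : ℕ) : ℕ∞) < Order.height p := by
      intro p hp
      obtain ⟨q, hq, hqp⟩ : ∃ q ∈ Q, q ≤ p.asIdeal := by
        have h1 : hQfin.toFinset.inf id ≤ p.asIdeal := by
          rwa [Finset.inf_id_eq_sInf, Set.Finite.coe_toFinset]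
        obtain ⟨q, hq, h2⟩ := (Ideal.IsPrime.inf_le' p.2).1 h1
        exact ⟨q, by simpa using hq, h2⟩
      exact (hQ q hq).trans_le (le_orderHeight_of_idealHeight p hqp)
    obtain ⟨e⟩ := localCohomology_iso_aux hKP (d+1) (ModuleCat.of R R) (by
      intro t
      apply isIso_oldExt_map
      apply ext_precomp_bijective_of_ker
      · intro y
        obtain ⟨y, rfl⟩ := Submodule.Quotient.mk_surjective _ y
        exact ⟨Submodule.Quotient.mk y, rfl⟩
      · intro i hi
        apply ext_vanish_of_support
        · infer_instance
        · intro p hp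
          apply ext_vanish_prime hk
          refine lt_of_le_of_lt (by exact_mod_cast hi) (hQht p ?_)
          refine Ideal.IsPrime.le_of_pow_le (n := t) (hP := p.2) ?_
          refine le_trans ?_ (Module.annihilator_le_of_mem_support hp)
          intro r hr
          rw [Module.mem_annihilator]
          rintro ⟨y, hy⟩
          obtain ⟨y, rfl⟩ := Submodule.Quotient.mk_surjective _ y
          have hy' : y ∈ sInf P ^ t := by
            rw [LinearMap.mem_ker, Submodule.mapQ_apply, Submodule.Quotient.mk_eq_zero] at hy
            exact hy
          apply Subtype.ext
          change r • Submodule.Quotient.mk y = (0 : R ⧸ I.radical ^ t)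
          rw [← Submodule.Quotient.mk_smul, Submodule.Quotient.mk_eq_zero]
          have h1 : r * y ∈ sInf Q ^ t * sInf P ^ t := Ideal.mul_mem_mul hr hy'
          rw [← mul_pow] at h1
          refine Ideal.pow_right_mono ?_ t h1
          rw [hK, inf_comm]
          exact Ideal.mul_le_inf)
    have e2 := (localCohomology.isoOfSameRadical (J := I) (K := I.radical)
      (Ideal.radical_idem I).symm (d+1)).app (ModuleCat.of R R)
    exact ⟨(e2 ≪≫ e.symm).toLinearEquiv⟩
end
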